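/- Let 𝓛 be a second-order elliptic operator on ℝ^d satisfying the standing assumptions, and let V : ℝ^d → ℝ be Borel measurable, locally bounded, bounded from below, with λ*(𝓛,V) finite. Suppose λ* is NOT strictly monotone at V on the right. Then for every open ball 𝓑 ⊂ ℝ^d there exists a constant δ > 0 such that λ*(𝓛,V) = λ*(𝓛, V + δ·1_𝓑) and λ* is strictly monotone at V + δ·1_𝓑 on the right (1_𝓑 denoting the indicator function of 𝓑). -/

import Mathlib

open Metric Set Filter

noncomputable section

/-- `ℝ^d` as a Euclidean space. -/
abbrev Euc (d : ℕ) := EuclideanSpace ℝ (Fin d)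

/-- First partial derivative `∂u/∂xᵢ`. -/
def pd {d : ℕ} (u : Euc d → ℝ) (i : Fin d) (x : Euc d) : ℝ :=
  fderiv ℝ u x (EuclideanSpace.single i 1)

/-- Second partial derivative `∂²u/∂xᵢ∂xⱼ`. -/
def pd2 {d : ℕ} (u : Euc d → ℝ) (i j : Fin d) (x : Euc d) : ℝ :=
  fderiv ℝ (fun y => pd u j y) x (EuclideanSpace.single i 1)

/-- The second-order operator `𝓛u = Σ aᶦʲ ∂ᵢⱼu + Σ bᶦ ∂ᵢu`. -/
def Lop {d : ℕ} (a : Euc d → Matrix (Fin d) (Fin d) ℝ) (b : Euc d → Euc d)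
    (u : Euc d → ℝ) (x : Euc d) : ℝ :=
  (∑ i, ∑ j, a x i j * pd2 u i j x) + ∑ i, b x i * pd u i x

/-- Frobenius norm of a matrix. -/
def frob {d : ℕ} (m : Matrix (Fin d) (Fin d) ℝ) : ℝ :=
  Real.sqrt (∑ i, ∑ j, (m i j) ^ 2)

/-- The quadratic form `⟨ξ, m ξ⟩`. -/
def quadForm {d : ℕ} (m : Matrix (Fin d) (Fin d) ℝ) (ξ : Euc d) : ℝ :=
  ∑ i, ∑ j, m i j * ξ i * ξ j

/-- Local Hölder continuity on a set. -/
def LocallyHolderOn {E F : Type*} [PseudoMetricSpace E] [PseudoMetricSpace F]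
    (f : E → F) (s : Set E) : Prop :=
  ∀ x ∈ s, ∃ (C r : NNReal), 0 < r ∧ r ≤ 1 ∧ ∃ ε > 0, HolderOnWith C r f (Metric.ball x ε ∩ s)

/-- Local Hölder continuity. -/
def LocallyHolder {E F : Type*} [PseudoMetricSpace E] [PseudoMetricSpace F] (f : E → F) : Prop :=
  LocallyHolderOn f Set.univ

/-- The set of `λ ∈ ℝ` admitting a positive C² supersolution of `𝓛φ + Vφ ≤ λφ` on `D`. -/
def supersolutions {d : ℕ} (a : Euc d → Matrix (Fin d) (Fin d) ℝ) (b : Euc d → Euc d)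
    (V : Euc d → ℝ) (D : Set (Euc d)) : Set ℝ :=
  {lam | ∃ φ : Euc d → ℝ, (∀ x ∈ D, 0 < φ x) ∧ ContDiffOn ℝ 2 φ D ∧
    ∀ x ∈ D, Lop a b φ x + V x * φ x ≤ lam * φ x}

/-- The generalized principal eigenvalue `λ*(𝓛,V)` on `D`. -/
def lamStar {d : ℕ} (a : Euc d → Matrix (Fin d) (Fin d) ℝ) (b : Euc d → Euc d)
    (V : Euc d → ℝ) (D : Set (Euc d)) : ℝ :=
  sInf (supersolutions a b V D)

/-- `λ*(𝓛,V)` is finite: the defining set is nonempty and bounded below. -/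
def lamStarFinite {d : ℕ} (a : Euc d → Matrix (Fin d) (Fin d) ℝ) (b : Euc d → Euc d)
    (V : Euc d → ℝ) (D : Set (Euc d)) : Prop :=
  (supersolutions a b V D).Nonempty ∧ BddBelow (supersolutions a b V D)

/-- A ground state of `𝓛 + W` in the open connected set `D`: a positive C² solution of
minimal growth at infinity. -/
def IsGroundState {d : ℕ} (a : Euc d → Matrix (Fin d) (Fin d) ℝ) (b : Euc d → Euc d)
    (W : Euc d → ℝ) (u : Euc d → ℝ) (D : Set (Euc d)) : Prop :=
  (∀ x ∈ D, 0 < u x) ∧ ContDiffOn ℝ 2 u D ∧ (∀ x ∈ D, Lop a b u x + W x * u x = 0) ∧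
  ∀ K : Set (Euc d), IsCompact K → K ⊆ D →
    ∀ v : Euc d → ℝ, ContDiffOn ℝ 2 v (D \ K) → (∀ x ∈ D \ K, 0 < v x) →
      (∀ x ∈ D \ K, Lop a b v x + W x * v x ≤ 0) →
      ∃ K' : Set (Euc d), IsCompact K' ∧ K ⊆ K' ∧ K' ⊆ D ∧
        ∃ κ > 0, ∀ x ∈ D \ K', κ * u x ≤ v x

/-- Membership in `C₀⁺(ℝ^d)`: continuous, nonnegative, not identically zero, vanishing
at infinity. -/
def C0plus {d : ℕ} (h : Euc d → ℝ) : Prop :=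
  Continuous h ∧ (∀ x, 0 ≤ h x) ∧ (∃ x, h x ≠ 0) ∧ Tendsto h (cocompact (Euc d)) (nhds 0)

/-- `λ*` is strictly monotone at `V` on the right. -/
def StrictMonoRight {d : ℕ} (a : Euc d → Matrix (Fin d) (Fin d) ℝ) (b : Euc d → Euc d)
    (V : Euc d → ℝ) : Prop :=
  ∀ h : Euc d → ℝ, C0plus h →
    lamStar a b V Set.univ < lamStar a b (fun x => V x + h x) Set.univ

/-- `λ*` is strictly monotone at `V` (on both sides). -/
def StrictMonoAt {d : ℕ} (a : Euc d → Matrix (Fin d) (Fin d) ℝ) (b : Euc d → Euc d)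
    (V : Euc d → ℝ) : Prop :=
  ∀ h : Euc d → ℝ, C0plus h →
    lamStar a b (fun x => V x - h x) Set.univ < lamStar a b V Set.univ ∧
    lamStar a b V Set.univ < lamStar a b (fun x => V x + h x) Set.univ

/-- Standing assumptions (A1)–(A3) with `b` Borel measurable and locally bounded. -/
structure StandingB {d : ℕ} (a : Euc d → Matrix (Fin d) (Fin d) ℝ) (b : Euc d → Euc d) : Prop where
  posdef : ∀ x, (a x).PosDef
  aLip : ∀ R > 0, ∃ C > 0, ∀ x y : Euc d, ‖x‖ ≤ R → ‖y‖ ≤ R →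
    frob (a x - a y) ≤ C * ‖x - y‖
  bMeas : Measurable b
  bLocBdd : ∀ R > 0, ∃ C, ∀ x : Euc d, ‖x‖ ≤ R → ‖b x‖ ≤ C
  nondeg : ∀ R > 0, ∃ C > 0, ∀ x : Euc d, ‖x‖ ≤ R → ∀ ξ : Euc d,
    C⁻¹ * ‖ξ‖ ^ 2 ≤ quadForm (a x) ξ
  growth : ∃ C₀ > 0, ∀ x : Euc d,
    max (∑ i, b x i * x i) 0 + frob (a x) ≤ C₀ * (1 + ‖x‖ ^ 2)

/-- Standing assumptions (A1)–(A3) with `b` locally Hölder continuous. -/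
structure StandingH {d : ℕ} (a : Euc d → Matrix (Fin d) (Fin d) ℝ) (b : Euc d → Euc d) : Prop where
  posdef : ∀ x, (a x).PosDef
  aLip : ∀ R > 0, ∃ C > 0, ∀ x y : Euc d, ‖x‖ ≤ R → ‖y‖ ≤ R →
    frob (a x - a y) ≤ C * ‖x - y‖
  bHolder : LocallyHolder b
  nondeg : ∀ R > 0, ∃ C > 0, ∀ x : Euc d, ‖x‖ ≤ R → ∀ ξ : Euc d,
    C⁻¹ * ‖ξ‖ ^ 2 ≤ quadForm (a x) ξ
  growth : ∃ C₀ > 0, ∀ x : Euc d,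
    max (∑ i, b x i * x i) 0 + frob (a x) ≤ C₀ * (1 + ‖x‖ ^ 2)

open scoped Topology

/-- The bilinear form `⟨∇u, a ∇v⟩`. -/
def gradForm {d : ℕ} (a : Euc d → Matrix (Fin d) (Fin d) ℝ) (u v : Euc d → ℝ) (x : Euc d) : ℝ :=
  ∑ i, ∑ j, a x i j * (pd u i x * pd v j x)

section Calculus

variable {d : ℕ} {a : Euc d → Matrix (Fin d) (Fin d) ℝ} {b : Euc d → Euc d}
  {u v : Euc d → ℝ} {x : Euc d}

theorem ContDiffAt.eventually_differentiableAt (hu : ContDiffAt ℝ 2 u x) :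
    ∀ᶠ y in 𝓝 x, DifferentiableAt ℝ u y := by
  filter_upwards [hu.eventually (by simp)] with y hy
  exact hy.differentiableAt (by simp)

theorem ContDiffAt.pd_contDiffAt (hu : ContDiffAt ℝ 2 u x) (i : Fin d) :
    ContDiffAt ℝ 1 (pd u i) x := by
  have h : ContDiffAt ℝ 1 (fderiv ℝ u) x := hu.fderiv_right (by norm_num)
  exact h.clm_apply contDiffAt_const

theorem ContDiffAt.pd_differentiableAt (hu : ContDiffAt ℝ 2 u x) (i : Fin d) :
    DifferentiableAt ℝ (pd u i) x :=
  (hu.pd_contDiffAt i).differentiableAt (by simp)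

theorem Filter.EventuallyEq.pd_eq (h : u =ᶠ[𝓝 x] v) (i : Fin d) : pd u i =ᶠ[𝓝 x] pd v i := by
  filter_upwards [h.fderiv (𝕜 := ℝ)] with y hy
  simp [pd, hy]

theorem pd2_congr (h : u =ᶠ[𝓝 x] v) (i j : Fin d) : pd2 u i j x = pd2 v i j x := by
  simp only [pd2]
  rw [(show (fun y => pd u j y) =ᶠ[𝓝 x] fun y => pd v j y from h.pd_eq j).fderiv_eq]

theorem Lop_congr (h : u =ᶠ[𝓝 x] v) : Lop a b u x = Lop a b v x := by
  simp only [Lop, pd2_congr h, fun i => (h.pd_eq i).eq_of_nhds]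

theorem pd_add (hu : DifferentiableAt ℝ u x) (hv : DifferentiableAt ℝ v x) (i : Fin d) :
    pd (fun y => u y + v y) i x = pd u i x + pd v i x := by
  simp [pd, fderiv_fun_add hu hv]

theorem pd_const_mul (hu : DifferentiableAt ℝ u x) (c : ℝ) (i : Fin d) :
    pd (fun y => c * u y) i x = c * pd u i x := by
  simp [pd, fderiv_const_mul hu]

theorem pd_mul (hu : DifferentiableAt ℝ u x) (hv : DifferentiableAt ℝ v x) (i : Fin d) :
    pd (fun y => u y * v y) i x = u x * pd v i x + v x * pd u i x := by
  simp [pd, fderiv_fun_mul hu hv]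

theorem pd_comp {g : ℝ → ℝ} (hu : DifferentiableAt ℝ u x) (hg : DifferentiableAt ℝ g (u x))
    (i : Fin d) : pd (fun y => g (u y)) i x = deriv g (u x) * pd u i x := by
  have := (hg.hasDerivAt.comp_hasFDerivAt x hu.hasFDerivAt).fderiv
  simp only [pd]
  rw [show (fun y => g (u y)) = g ∘ u from rfl, this]
  simp

theorem Lop_add (hu : ContDiffAt ℝ 2 u x) (hv : ContDiffAt ℝ 2 v x) :
    Lop a b (fun y => u y + v y) x = Lop a b u x + Lop a b v x := by
  have h1 : ∀ i, pd (fun y => u y + v y) i x = pd u i x + pd v i x := fun i =>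
    pd_add (hu.differentiableAt (by simp)) (hv.differentiableAt (by simp)) i
  have h2 : ∀ i j, pd2 (fun y => u y + v y) i j x = pd2 u i j x + pd2 v i j x := by
    intro i j
    have : (fun y => pd (fun y => u y + v y) j y) =ᶠ[𝓝 x] fun y => pd u j y + pd v j y := by
      filter_upwards [hu.eventually_differentiableAt, hv.eventually_differentiableAt] with y h h'
      exact pd_add h h' j
    simp only [pd2]
    rw [this.fderiv_eq, fderiv_fun_add (hu.pd_differentiableAt j) (hv.pd_differentiableAt j)]
    rfl
  simp only [Lop, h1, h2, mul_add, Finset.sum_add_distrib]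
  ring

theorem Lop_const_mul (hu : ContDiffAt ℝ 2 u x) (c : ℝ) :
    Lop a b (fun y => c * u y) x = c * Lop a b u x := by
  have h1 : ∀ i, pd (fun y => c * u y) i x = c * pd u i x := fun i =>
    pd_const_mul (hu.differentiableAt (by simp)) c i
  have h2 : ∀ i j, pd2 (fun y => c * u y) i j x = c * pd2 u i j x := by
    intro i j
    have : (fun y => pd (fun y => c * u y) j y) =ᶠ[𝓝 x] fun y => c * pd u j y := by
      filter_upwards [hu.eventually_differentiableAt] with y h
      exact pd_const_mul h c j
    simp only [pd2]
    rw [this.fderiv_eq, fderiv_const_mul (hu.pd_differentiableAt j)]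
    rfl
  simp only [Lop, h1, h2, mul_add, Finset.mul_sum]
  congr 1
  · exact Finset.sum_congr rfl fun i _ => Finset.sum_congr rfl fun j _ => by ring
  · exact Finset.sum_congr rfl fun i _ => by ring

theorem Lop_const (c : ℝ) : Lop a b (fun _ => c) x = 0 := by
  have h : ∀ i (y : Euc d), pd (fun _ : Euc d => c) i y = 0 := by simp [pd]
  simp [Lop, pd2, h]

theorem Lop_sub (hu : ContDiffAt ℝ 2 u x) (hv : ContDiffAt ℝ 2 v x) :
    Lop a b (fun y => u y - v y) x = Lop a b u x - Lop a b v x := by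
  have := Lop_add (a := a) (b := b) hu (contDiffAt_const (c := (-1 : ℝ)) |>.mul hv)
  rw [Lop_const_mul hv] at this
  rw [show (fun y => u y - v y) = fun y => u y + -1 * v y by ext; ring, this]
  ring

theorem Lop_sum {ι : Type*} (s : Finset ι) {f : ι → Euc d → ℝ}
    (hf : ∀ k ∈ s, ContDiffAt ℝ 2 (f k) x) :
    Lop a b (fun y => ∑ k ∈ s, f k y) x = ∑ k ∈ s, Lop a b (f k) x := by
  classical
  induction s using Finset.induction_on with
  | empty => simp [Lop_const]
  | insert k s hk ih =>
    simp only [Finset.sum_insert hk]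
    rw [Lop_add (hf k (by simp)) (ContDiffAt.sum fun l hl => hf l (by simp [hl])),
      ih fun l hl => hf l (by simp [hl])]

theorem pd2_mul (hu : ContDiffAt ℝ 2 u x) (hv : ContDiffAt ℝ 2 v x) (i j : Fin d) :
    pd2 (fun y => u y * v y) i j x = u x * pd2 v i j x + v x * pd2 u i j x +
      pd u i x * pd v j x + pd v i x * pd u j x := by
  have : (fun y => pd (fun y => u y * v y) j y) =ᶠ[𝓝 x]
      fun y => u y * pd v j y + v y * pd u j y := by
    filter_upwards [hu.eventually_differentiableAt, hv.eventually_differentiableAt] with y h h'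
    exact pd_mul h h' j
  have du := hu.differentiableAt (by simp)
  have dv := hv.differentiableAt (by simp)
  have dpu := hu.pd_differentiableAt j
  have dpv := hv.pd_differentiableAt j
  have e1 : fderiv ℝ (fun y => u y * pd v j y) x (EuclideanSpace.single i 1) = _ :=
    pd_mul du dpv i
  have e2 : fderiv ℝ (fun y => v y * pd u j y) x (EuclideanSpace.single i 1) = _ :=
    pd_mul dv dpu i
  simp only [pd2]
  rw [this.fderiv_eq, fderiv_fun_add (du.fun_mul dpv) (dv.fun_mul dpu), add_apply,
    e1, e2]
  change _ = u x * pd (pd v j) i x + v x * pd (pd u j) i x + _ + _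
  ring

theorem Lop_mul (hu : ContDiffAt ℝ 2 u x) (hv : ContDiffAt ℝ 2 v x) :
    Lop a b (fun y => u y * v y) x = u x * Lop a b v x + v x * Lop a b u x +
      gradForm a u v x + gradForm a v u x := by
  have h1 : ∀ i, pd (fun y => u y * v y) i x = u x * pd v i x + v x * pd u i x := fun i =>
    pd_mul (hu.differentiableAt (by simp)) (hv.differentiableAt (by simp)) i
  simp only [Lop, gradForm, h1, pd2_mul hu hv, mul_add, Finset.mul_sum, Finset.sum_add_distrib]
  simp only [← Finset.sum_add_distrib]
  simp only [← Finset.mul_sum, ← mul_add]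
  simp only [mul_add, Finset.mul_sum, Finset.sum_add_distrib, mul_left_comm (u x),
    mul_left_comm (v x)]
  ring

theorem Lop_comp {g : ℝ → ℝ} (hu : ContDiffAt ℝ 2 u x) (hg : ContDiffAt ℝ 2 g (u x)) :
    Lop a b (fun y => g (u y)) x = deriv g (u x) * Lop a b u x +
      deriv (deriv g) (u x) * gradForm a u u x := by
  have du := hu.differentiableAt (by simp)
  have h1 : ∀ i, pd (fun y => g (u y)) i x = deriv g (u x) * pd u i x := fun i =>
    pd_comp du (hg.differentiableAt (by simp)) i
  have hg' : DifferentiableAt ℝ (deriv g) (u x) := by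
    have h : ContDiffAt ℝ 1 (fderiv ℝ g) (u x) := hg.fderiv_right (by norm_num)
    exact (h.clm_apply (contDiffAt_const (c := (1 : ℝ)))).differentiableAt (by simp)
  have h2 : ∀ i j, pd2 (fun y => g (u y)) i j x = deriv g (u x) * pd2 u i j x +
      deriv (deriv g) (u x) * (pd u i x * pd u j x) := by
    intro i j
    have : (fun y => pd (fun y => g (u y)) j y) =ᶠ[𝓝 x] fun y => deriv g (u y) * pd u j y := by
      have h3 : ∀ᶠ y in 𝓝 x, DifferentiableAt ℝ g (u y) := by
        have := hg.eventually (by simp)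
        filter_upwards [hu.continuousAt.eventually this] with y hy
        exact hy.differentiableAt (by simp)
      filter_upwards [hu.eventually_differentiableAt, h3] with y h h'
      exact pd_comp h h' j
    have e1 := pd_mul (hg'.comp x du) (hu.pd_differentiableAt j) i
    have e2 := pd_comp du hg' i
    simp only [pd2]
    rw [this.fderiv_eq]
    refine e1.trans ?_
    simp only [Function.comp_def]
    rw [e2]
    change _ = deriv g (u x) * pd (pd u j) i x + _
    ring
  simp only [Lop, gradForm, h1, h2, mul_add, Finset.mul_sum, Finset.sum_add_distrib]
  simp only [mul_left_comm (deriv g (u x)), mul_left_comm (deriv (deriv g) (u x))]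
  ring

theorem gradForm_mul_right (hu : DifferentiableAt ℝ u x) (hv : DifferentiableAt ℝ v x)
    (w : Euc d → ℝ) :
    gradForm a w (fun y => u y * v y) x = u x * gradForm a w v x + v x * gradForm a w u x := by
  simp only [gradForm, pd_mul hu hv, Finset.mul_sum, ← Finset.sum_add_distrib]
  exact Finset.sum_congr rfl fun i _ => Finset.sum_congr rfl fun j _ => by ring

theorem gradForm_comp_right {g : ℝ → ℝ} (hu : DifferentiableAt ℝ u x)
    (hg : DifferentiableAt ℝ g (u x)) (w : Euc d → ℝ) :
    gradForm a w (fun y => g (u y)) x = deriv g (u x) * gradForm a w u x := by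
  simp only [gradForm, pd_comp hu hg, Finset.mul_sum]
  exact Finset.sum_congr rfl fun i _ => Finset.sum_congr rfl fun j _ => by ring

theorem gradForm_comm (ha : (a x).IsSymm) (u v : Euc d → ℝ) :
    gradForm a u v x = gradForm a v u x := by
  rw [gradForm, Finset.sum_comm, gradForm]
  exact Finset.sum_congr rfl fun i _ => Finset.sum_congr rfl fun j _ => by
    rw [ha.apply i j]; ring

theorem gradForm_self_nonneg (ha : (a x).PosSemidef) (u : Euc d → ℝ) :
    0 ≤ gradForm a u u x := by
  have := ha.dotProduct_mulVec_nonneg (fun i => pd u i x)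
  refine this.trans_eq ?_
  simp only [dotProduct, Matrix.mulVec, gradForm, Finset.mul_sum, Pi.star_apply, star_trivial]
  exact Finset.sum_congr rfl fun i _ => Finset.sum_congr rfl fun j _ => by ring

/-- At a local minimum the Hessian is positive semidefinite. -/
theorem IsLocalMin.hessian_nonneg (hu : ContDiffAt ℝ 2 u x) (hmin : IsLocalMin u x)
    (ξ : Fin d → ℝ) : 0 ≤ ∑ i, ∑ j, ξ i * ξ j * pd2 u i j x := by
  set e : Euc d := WithLp.toLp 2 ξ with he
  have hline : ∀ t : ℝ, HasDerivAt (fun s : ℝ => x + s • e) e t := fun t => by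
    simpa using ((hasDerivAt_id t).smul_const e).const_add x
  set f : ℝ → ℝ := fun t => u (x + t • e) with hf
  have hlim : Tendsto (fun t : ℝ => x + t • e) (𝓝 0) (𝓝 x) := by
    simpa using (hline 0).continuousAt.tendsto
  have heξ : e = ∑ i, ξ i • (EuclideanSpace.single i (1 : ℝ) : Euc d) := by
    ext k
    simp [he, Finset.sum_apply, Pi.single_apply]
  have hdf : deriv f =ᶠ[𝓝 0] fun t => ∑ j, ξ j * pd u j (x + t • e) := by
    filter_upwards [hlim.eventually hu.eventually_differentiableAt] with t ht
    have h1 : deriv f t = fderiv ℝ u (x + t • e) e :=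
      (ht.hasFDerivAt.comp_hasDerivAt t (hline t)).deriv
    rw [h1, (congrArg (fderiv ℝ u (x + t • e)) heξ :)]
    simp [pd]
  have hddf : deriv (deriv f) 0 = ∑ i, ∑ j, ξ i * ξ j * pd2 u i j x := by
    rw [hdf.deriv_eq]
    have : ∀ j, HasDerivAt (fun t : ℝ => ξ j * pd u j (x + t • e))
        (ξ j * ∑ i, ξ i * pd2 u i j x) 0 := by
      intro j
      have h1 : DifferentiableAt ℝ (pd u j) (x + (0 : ℝ) • e) := by
        simpa using hu.pd_differentiableAt j
      have h2 := (h1.hasFDerivAt.comp_hasDerivAt 0 (hline 0)).const_mul (ξ j)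
      have h3 : fderiv ℝ (pd u j) (x + (0 : ℝ) • e) e = ∑ i, ξ i * pd2 u i j x := by
        rw [zero_smul, add_zero, (congrArg (fderiv ℝ (pd u j) x) heξ :), map_sum]
        exact Finset.sum_congr rfl fun i _ => by rw [map_smul]; rfl
      rwa [h3] at h2
    rw [(HasDerivAt.fun_sum fun j (_ : j ∈ Finset.univ) => this j).deriv, Finset.sum_comm]
    simp only [Finset.mul_sum]
    exact Finset.sum_congr rfl fun i _ => Finset.sum_congr rfl fun j _ => by ring
  have hminf : IsLocalMin f 0 := by
    have : ∀ᶠ t in 𝓝 (0 : ℝ), u x ≤ u (x + t • e) := hlim.eventually hmin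
    filter_upwards [this] with t ht
    simpa [hf] using ht
  rw [← hddf]
  by_contra! hneg
  have hcont : ContinuousAt f 0 := by
    refine ContinuousAt.comp (f := fun t : ℝ => x + t • e) (x := 0) ?_ (hline 0).continuousAt
    simpa using hu.continuousAt
  have hmaxf : IsLocalMax f 0 :=
    isLocalMax_of_deriv_deriv_neg hneg hminf.deriv_eq_zero hcont
  have hconst : f =ᶠ[𝓝 0] fun _ => f 0 := by
    filter_upwards [hminf, hmaxf] with t h1 h2 using le_antisymm h2 h1
  have h0 : deriv (deriv f) 0 = 0 := by
    have : deriv f =ᶠ[𝓝 0] fun _ => 0 := by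
      filter_upwards [hconst.deriv] with t ht
      simp [ht]
    simp [this.deriv_eq]
  exact hneg.ne h0

open scoped MatrixOrder in
/-- The pointwise maximum principle. -/
theorem IsLocalMin.Lop_nonneg (ha : (a x).PosSemidef) (hu : ContDiffAt ℝ 2 u x)
    (hmin : IsLocalMin u x) : 0 ≤ Lop a b u x := by
  have h1 : ∀ i, pd u i x = 0 := fun i => by simp [pd, hmin.fderiv_eq_zero]
  obtain ⟨B, hB⟩ : ∃ B : Matrix (Fin d) (Fin d) ℝ, a x = B.conjTranspose * B := by
    obtain ⟨X, hX, -, h⟩ := CFC.exists_sqrt_of_isSelfAdjoint_of_quasispectrumRestricts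
      ha.isHermitian (QuasispectrumRestricts.nnreal_of_nonneg ha.nonneg)
    exact ⟨X, by rw [← h]; exact congrArg (· * X) hX.star_eq.symm⟩
  have h2 : ∀ i j, a x i j = ∑ k, B k i * B k j := fun i j => by
    rw [hB]; simp [Matrix.mul_apply]
  have h3 : Lop a b u x = ∑ k, ∑ i, ∑ j, B k i * B k j * pd2 u i j x := by
    simp only [Lop, h1, h2, mul_zero, Finset.sum_const_zero, add_zero, Finset.sum_mul]
    rw [Finset.sum_comm]
    rw [Finset.sum_comm' (t' := Finset.univ) (s' := fun _ => Finset.univ) (by simp)]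
    conv_rhs => rw [Finset.sum_comm]
    refine Finset.sum_congr rfl fun i _ => ?_
    rw [Finset.sum_comm]
  rw [h3]
  exact Finset.sum_nonneg fun k _ => hmin.hessian_nonneg hu (B k)

end Calculus

section Ellipticity

variable {d : ℕ}

/-- A matrix as a continuous linear operator on Euclidean space. -/
def opA (m : Matrix (Fin d) (Fin d) ℝ) : Euc d →L[ℝ] Euc d := Matrix.toEuclideanCLM (𝕜 := ℝ) m

theorem opA_apply (m : Matrix (Fin d) (Fin d) ℝ) (v : Euc d) (i : Fin d) :
    opA m v i = ∑ j, m i j * v j := by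
  simp [opA, Matrix.mulVec, dotProduct]

theorem inner_eq_sum (v w : Euc d) : inner ℝ v w = ∑ i, v i * w i := by
  simp [PiLp.inner_apply, mul_comm]

theorem opA_sub (m n : Matrix (Fin d) (Fin d) ℝ) : opA (m - n) = opA m - opA n := map_sub _ m n

theorem opA_mul_apply (m n : Matrix (Fin d) (Fin d) ℝ) (v : Euc d) :
    opA (m * n) v = opA m (opA n v) := by
  simp [opA, map_mul]

theorem opA_one_apply (v : Euc d) : opA (1 : Matrix (Fin d) (Fin d) ℝ) v = v := by
  simp [opA, map_one]

theorem inner_opA_comm {m : Matrix (Fin d) (Fin d) ℝ} (hm : m.IsSymm) (v w : Euc d) :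
    inner ℝ v (opA m w) = inner ℝ (opA m v) w := by
  simp only [inner_eq_sum, opA_apply, Finset.mul_sum, Finset.sum_mul]
  rw [Finset.sum_comm]
  exact Finset.sum_congr rfl fun i _ => Finset.sum_congr rfl fun j _ => by
    rw [hm.apply i j]; ring

theorem sum_sum_eq_inner_opA (m : Matrix (Fin d) (Fin d) ℝ) (v w : Euc d) :
    ∑ i, ∑ j, m i j * (v i * w j) = inner ℝ v (opA m w) := by
  simp only [inner_eq_sum, opA_apply, Finset.mul_sum]
  exact Finset.sum_congr rfl fun i _ => Finset.sum_congr rfl fun j _ => by ring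

theorem quadForm_eq (m : Matrix (Fin d) (Fin d) ℝ) (v : Euc d) :
    quadForm m v = inner ℝ v (opA m v) := by
  simp only [quadForm, ← sum_sum_eq_inner_opA, mul_assoc]

theorem norm_opA_le (m : Matrix (Fin d) (Fin d) ℝ) : ‖opA m‖ ≤ frob m := by
  refine ContinuousLinearMap.opNorm_le_bound _ (Real.sqrt_nonneg _) fun v => ?_
  rw [frob, EuclideanSpace.norm_eq, EuclideanSpace.norm_eq, ← Real.sqrt_mul (by positivity)]
  refine Real.sqrt_le_sqrt ?_
  simp only [Real.norm_eq_abs, sq_abs, opA_apply]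
  rw [Finset.sum_mul]
  exact Finset.sum_le_sum fun i _ => Finset.sum_mul_sq_le_sq_mul_sq _ _ _

theorem abs_apply_le_norm (v : Euc d) (i : Fin d) : |v i| ≤ ‖v‖ := by
  simpa using PiLp.norm_apply_le v i

theorem abs_entry_le (m : Matrix (Fin d) (Fin d) ℝ) (i j : Fin d) : |m i j| ≤ ‖opA m‖ := by
  have h : opA m (EuclideanSpace.single j 1) i = m i j := by
    rw [opA_apply]; simp
  rw [← h]
  refine (abs_apply_le_norm _ i).trans ?_
  simpa using (opA m).le_opNorm (EuclideanSpace.single j 1)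

theorem abs_inner_opA_le (m : Matrix (Fin d) (Fin d) ℝ) (v w : Euc d) :
    |inner ℝ v (opA m w)| ≤ ‖opA m‖ * ‖v‖ * ‖w‖ := by
  refine (abs_real_inner_le_norm _ _).trans ?_
  calc ‖v‖ * ‖opA m w‖ ≤ ‖v‖ * (‖opA m‖ * ‖w‖) := by gcongr; exact (opA m).le_opNorm w
    _ = _ := by ring

/-- Bounds for the coefficients on the ball of radius `R`. -/
structure CoeffBound (a : Euc d → Matrix (Fin d) (Fin d) ℝ) (b : Euc d → Euc d) (R κ : ℝ) :
    Prop where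
  one_le : 1 ≤ κ
  symm : ∀ x, (a x).IsSymm
  unit : ∀ x, IsUnit (a x).det
  psd : ∀ x, (a x).PosSemidef
  norm_a : ∀ x, ‖x‖ ≤ R → ‖opA (a x)‖ ≤ κ
  norm_inv : ∀ x, ‖x‖ ≤ R → ‖opA (a x)⁻¹‖ ≤ κ
  lip : ∀ x y, ‖x‖ ≤ R → ‖y‖ ≤ R → ‖opA (a x - a y)‖ ≤ κ * ‖x - y‖
  lip_inv : ∀ x y, ‖x‖ ≤ R → ‖y‖ ≤ R → ‖opA ((a x)⁻¹ - (a y)⁻¹)‖ ≤ κ * ‖x - y‖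
  norm_b : ∀ x, ‖x‖ ≤ R → ‖b x‖ ≤ κ
  ell : ∀ x, ‖x‖ ≤ R → ∀ v, ‖v‖ ^ 2 ≤ κ * inner ℝ v (opA (a x) v)
  ell_inv : ∀ x, ‖x‖ ≤ R → ∀ v, ‖v‖ ^ 2 ≤ κ * inner ℝ v (opA (a x)⁻¹ v)

theorem StandingB.exists_coeffBound {a : Euc d → Matrix (Fin d) (Fin d) ℝ} {b : Euc d → Euc d}
    (h : StandingB a b) {R : ℝ} (hR : 0 < R) : ∃ κ, CoeffBound a b R κ := by
  obtain ⟨C1, hC1, h1⟩ := h.aLip R hR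
  obtain ⟨C2, h2⟩ := h.bLocBdd R hR
  obtain ⟨C3, hC3, h3⟩ := h.nondeg R hR
  obtain ⟨C4, hC4, h4⟩ := h.growth
  have hsymm : ∀ x, (a x).IsSymm := fun x => by
    have := (h.posdef x).1
    rwa [Matrix.IsHermitian, Matrix.conjTranspose_eq_transpose_of_trivial] at this
  have hunit : ∀ x, IsUnit (a x).det := fun x => (h.posdef x).det_pos.ne'.isUnit
  have hell : ∀ x, ‖x‖ ≤ R → ∀ v, ‖v‖ ^ 2 ≤ C3 * inner ℝ v (opA (a x) v) := fun x hx v => by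
    have := h3 x hx v
    rw [quadForm_eq] at this
    rwa [inv_mul_le_iff₀ hC3] at this
  set C5 := C4 * (1 + R ^ 2) with hC5
  have hC5p : 0 < C5 := by positivity
  have hna : ∀ x, ‖x‖ ≤ R → ‖opA (a x)‖ ≤ C5 := fun x hx => by
    refine (norm_opA_le _).trans ?_
    have h5 := h4 x
    have h6 : ‖x‖ ^ 2 ≤ R ^ 2 := by gcongr
    have h7 : C4 * (1 + ‖x‖ ^ 2) ≤ C5 := by rw [hC5]; gcongr
    linarith [le_max_right (∑ i, b x i * x i) 0]
  have hainv : ∀ x v, opA (a x) (opA (a x)⁻¹ v) = v := fun x v => by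
    rw [← opA_mul_apply, Matrix.mul_nonsing_inv _ (hunit x), opA_one_apply]
  have hinv : ∀ x, ‖x‖ ≤ R → ‖opA (a x)⁻¹‖ ≤ C3 := fun x hx => by
    refine ContinuousLinearMap.opNorm_le_bound _ hC3.le fun v => ?_
    have h5 := hell x hx (opA (a x)⁻¹ v)
    rw [hainv] at h5
    have h6 := real_inner_le_norm (opA (a x)⁻¹ v) v
    have h7 : ‖opA (a x)⁻¹ v‖ * ‖opA (a x)⁻¹ v‖ ≤ C3 * ‖v‖ * ‖opA (a x)⁻¹ v‖ := by
      nlinarith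
    rcases (norm_nonneg (opA (a x)⁻¹ v)).eq_or_lt with h8 | h8
    · rw [← h8]; positivity
    · exact le_of_mul_le_mul_right h7 h8
  have hlip : ∀ x y, ‖x‖ ≤ R → ‖y‖ ≤ R → ‖opA (a x - a y)‖ ≤ C1 * ‖x - y‖ :=
    fun x y hx hy => (norm_opA_le _).trans (h1 x y hx hy)
  have hlipinv : ∀ x y, ‖x‖ ≤ R → ‖y‖ ≤ R →
      ‖opA ((a x)⁻¹ - (a y)⁻¹)‖ ≤ C3 * C1 * C3 * ‖x - y‖ := fun x y hx hy => by
    have e : (a x)⁻¹ - (a y)⁻¹ = (a x)⁻¹ * (a y - a x) * (a y)⁻¹ := by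
      rw [mul_sub, sub_mul, mul_assoc, Matrix.mul_nonsing_inv _ (hunit y),
        Matrix.nonsing_inv_mul _ (hunit x), mul_one, one_mul]
    rw [e]
    refine ContinuousLinearMap.opNorm_le_bound _ (by positivity) fun v => ?_
    rw [opA_mul_apply, opA_mul_apply]
    calc _ ≤ C3 * (C1 * ‖x - y‖ * (C3 * ‖v‖)) := by
          refine (ContinuousLinearMap.le_of_opNorm_le _ (hinv x hx) _).trans ?_
          gcongr
          refine (ContinuousLinearMap.le_of_opNorm_le _ (hlip y x hy hx) _).trans ?_
          rw [norm_sub_rev]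
          gcongr
          exact ContinuousLinearMap.le_of_opNorm_le _ (hinv y hy) _
      _ = _ := by ring
  have hellinv : ∀ x, ‖x‖ ≤ R → ∀ v, ‖v‖ ^ 2 ≤ C5 ^ 2 * C3 * inner ℝ v (opA (a x)⁻¹ v) := by
    intro x hx v
    have h5 := hell x hx (opA (a x)⁻¹ v)
    rw [hainv, real_inner_comm] at h5
    have h6 : ‖v‖ ≤ C5 * ‖opA (a x)⁻¹ v‖ := by
      conv_lhs => rw [← hainv x v]
      exact ContinuousLinearMap.le_of_opNorm_le _ (hna x hx) _
    calc ‖v‖ ^ 2 ≤ (C5 * ‖opA (a x)⁻¹ v‖) ^ 2 := by gcongr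
      _ = C5 ^ 2 * ‖opA (a x)⁻¹ v‖ ^ 2 := by ring
      _ ≤ C5 ^ 2 * (C3 * inner ℝ v (opA (a x)⁻¹ v)) := by gcongr
      _ = _ := by ring
  have hnn : ∀ x, ‖x‖ ≤ R → ∀ v, 0 ≤ inner ℝ v (opA (a x) v) := fun x hx v =>
    nonneg_of_mul_nonneg_right ((sq_nonneg _).trans (hell x hx v)) hC3
  have hnninv : ∀ x, ‖x‖ ≤ R → ∀ v, 0 ≤ inner ℝ v (opA (a x)⁻¹ v) := fun x hx v =>
    nonneg_of_mul_nonneg_right ((sq_nonneg _).trans (hellinv x hx v)) (by positivity)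
  set κ := 1 + |C2| + C1 + C3 + C5 + C3 * C1 * C3 + C5 ^ 2 * C3 with hκ
  have p1 : 0 < C3 * C1 * C3 := by positivity
  have p2 : 0 < C5 ^ 2 * C3 := by positivity
  have p3 := abs_nonneg C2
  refine ⟨κ, by linarith, hsymm, hunit, fun x => (h.posdef x).posSemidef,
    fun x hx => (hna x hx).trans (by linarith),
    fun x hx => (hinv x hx).trans (by linarith), fun x y hx hy => (hlip x y hx hy).trans ?_,
    fun x y hx hy => (hlipinv x y hx hy).trans ?_,
    fun x hx => (h2 x hx).trans (by linarith [le_abs_self C2]),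
    fun x hx v => (hell x hx v).trans ?_, fun x hx v => (hellinv x hx v).trans ?_⟩
  · gcongr; linarith
  · gcongr; linarith
  · have := hnn x hx v
    gcongr; linarith
  · have := hnninv x hx v
    gcongr; linarith

end Ellipticity

section Quadratic

variable {d : ℕ} {a : Euc d → Matrix (Fin d) (Fin d) ℝ} {b : Euc d → Euc d}

/-- The quadratic function `x ↦ ⟨x - y, m (x - y)⟩`. -/
def qf (m : Matrix (Fin d) (Fin d) ℝ) (y x : Euc d) : ℝ := inner ℝ (x - y) (opA m (x - y))

variable {m : Matrix (Fin d) (Fin d) ℝ}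

theorem contDiff_qf {n : WithTop ℕ∞} (m : Matrix (Fin d) (Fin d) ℝ) (y : Euc d) :
    ContDiff ℝ n (qf m y) := by
  exact ContDiff.inner ℝ (by fun_prop) (by fun_prop)

theorem qf_single (m : Matrix (Fin d) (Fin d) ℝ) (v : Euc d) (i : Fin d) :
    inner ℝ (EuclideanSpace.single i (1 : ℝ)) (opA m v) = opA m v i := by
  simp [EuclideanSpace.inner_single_left]

theorem pd_qf (hm : m.IsSymm) (y : Euc d) (i : Fin d) (x : Euc d) :
    pd (qf m y) i x = 2 * opA m (x - y) i := by
  have h1 : HasFDerivAt (fun x : Euc d => x - y) (ContinuousLinearMap.id ℝ _) x :=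
    (hasFDerivAt_id x).sub_const y
  have h2 := h1.inner ℝ ((opA m).hasFDerivAt.comp x h1)
  have h3 : fderiv ℝ (qf m y) x = _ := h2.fderiv
  rw [pd, h3]
  simp only [Function.comp_apply, ContinuousLinearMap.comp_apply, fderivInnerCLM_apply,
    ContinuousLinearMap.prod_apply, ContinuousLinearMap.id_apply]
  rw [inner_opA_comm hm, real_inner_comm, qf_single]
  ring

theorem pd2_qf (hm : m.IsSymm) (y : Euc d) (i j : Fin d) (x : Euc d) : pd2 (qf m y) i j x = 2 * m i j := by
  have h1 : HasFDerivAt (fun x : Euc d => 2 * opA m (x - y) j)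
      ((2 : ℝ) • ((EuclideanSpace.proj j : Euc d →L[ℝ] ℝ).comp (opA m))) x := by
    refine HasFDerivAt.const_mul ?_ 2
    refine ((EuclideanSpace.proj j : Euc d →L[ℝ] ℝ).comp (opA m)).hasFDerivAt.comp x
      ((hasFDerivAt_id x).sub_const y) |>.congr_fderiv ?_
    ext; simp
  rw [pd2, funext (pd_qf hm y j), h1.fderiv]
  simp only [smul_apply, ContinuousLinearMap.comp_apply, smul_eq_mul]
  change 2 * opA m (EuclideanSpace.single i 1) j = _
  rw [opA_apply]
  simp [hm.apply i j]

theorem Lop_qf (hm : m.IsSymm) (y x : Euc d) : Lop a b (qf m y) x =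
    2 * (∑ i, ∑ j, a x i j * m i j) + 2 * inner ℝ (b x) (opA m (x - y)) := by
  simp only [Lop, pd_qf hm, pd2_qf hm, inner_eq_sum, Finset.mul_sum]
  congr 1
  · exact Finset.sum_congr rfl fun i _ => Finset.sum_congr rfl fun j _ => by ring
  · exact Finset.sum_congr rfl fun i _ => by ring

theorem gradForm_qf {n : Matrix (Fin d) (Fin d) ℝ} (hm : m.IsSymm) (hn : n.IsSymm) (y p x : Euc d) :
    gradForm a (qf m y) (qf n p) x =
      4 * inner ℝ (opA m (x - y)) (opA (a x) (opA n (x - p))) := by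
  rw [← sum_sum_eq_inner_opA]
  simp only [gradForm, pd_qf hm, pd_qf hn, Finset.mul_sum]
  exact Finset.sum_congr rfl fun i _ => Finset.sum_congr rfl fun j _ => by ring

end Quadratic

section Poles

variable {d : ℕ} {a : Euc d → Matrix (Fin d) (Fin d) ℝ} {b : Euc d → Euc d}

theorem pd_const_sub (c : ℝ) (u : Euc d → ℝ) (i : Fin d) (x : Euc d) :
    pd (fun y => c - u y) i x = -pd u i x := by
  simp [pd, fderiv_const_sub]

theorem Lop_const_sub (c : ℝ) (u : Euc d → ℝ) (x : Euc d) :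
    Lop a b (fun y => c - u y) x = -Lop a b u x := by
  have h : ∀ i j, pd2 (fun y => c - u y) i j x = -pd2 u i j x := fun i j => by
    simp only [pd2, pd_const_sub]
    simp [fderiv_fun_neg]
  simp only [Lop, h, pd_const_sub, mul_neg, Finset.sum_neg_distrib]
  ring

/-- The defining function `r² - ⟨x - p, a(p)⁻¹ (x - p)⟩` of an ellipsoid. -/
def sig (a : Euc d → Matrix (Fin d) (Fin d) ℝ) (p : Euc d) (r : ℝ) (x : Euc d) : ℝ :=
  r ^ 2 - qf (a p)⁻¹ p x

/-- Pointwise estimates for the defining function `σ` of an ellipsoid of size `r` and the squared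
distance `τ` to a boundary pole. -/
structure PoleEst (a : Euc d → Matrix (Fin d) (Fin d) ℝ) (b : Euc d → Euc d) (K r : ℝ)
    (σ τ : Euc d → ℝ) (x : Euc d) : Prop where
  tau_pos : 0 < τ x
  rho_le : √(τ x) ≤ K * r
  sig_le : σ x ≤ K * r * √(τ x)
  L_tau : |Lop a b τ x - 2 * d| ≤ K * √(τ x)
  G_tau : |gradForm a τ τ x - 4 * τ x| ≤ K * √(τ x) * τ x
  L_sig : |Lop a b σ x + 2 * d| ≤ K * r
  G_sig_tau : |gradForm a σ τ x - (2 * σ x - 2 * τ x)| ≤ K * r * τ x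
  G_sig : |gradForm a σ σ x - 4 * (r ^ 2 - σ x)| ≤ K * r ^ 3

theorem sum_entry_mul_le (m n : Matrix (Fin d) (Fin d) ℝ) :
    |∑ i, ∑ j, m i j * n i j| ≤ (d : ℝ) ^ 2 * (‖opA m‖ * ‖opA n‖) := by
  refine (Finset.abs_sum_le_sum_abs _ _).trans ?_
  have : ∀ i, |∑ j, m i j * n i j| ≤ d * (‖opA m‖ * ‖opA n‖) := fun i => by
    refine (Finset.abs_sum_le_sum_abs _ _).trans ?_
    refine (Finset.sum_le_card_nsmul _ _ (‖opA m‖ * ‖opA n‖) fun j _ => ?_).trans_eq ?_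
    · rw [abs_mul]
      gcongr
      · exact abs_entry_le m i j
      · exact abs_entry_le n i j
    · simp
  refine (Finset.sum_le_card_nsmul _ _ _ fun i _ => this i).trans_eq ?_
  simp; ring

namespace CoeffBound

variable {R κ : ℝ}

theorem symm_inv (hκ : CoeffBound a b R κ) (x : Euc d) : ((a x)⁻¹).IsSymm := by
  rw [Matrix.IsSymm, Matrix.transpose_nonsing_inv, (hκ.symm x)]

theorem a_inv_apply (hκ : CoeffBound a b R κ) (x v : Euc d) : opA (a x) (opA (a x)⁻¹ v) = v := by
  rw [← opA_mul_apply, Matrix.mul_nonsing_inv _ (hκ.unit x), opA_one_apply]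

theorem sum_a_inv (hκ : CoeffBound a b R κ) (y : Euc d) : ∑ i, ∑ j, a y i j * (a y)⁻¹ i j = d := by
  have h : (a y * (a y)⁻¹).trace = d := by
    rw [Matrix.mul_nonsing_inv _ (hκ.unit y)]; simp
  rw [← h]
  simp only [Matrix.trace, Matrix.mul_apply, Matrix.diag]
  exact Finset.sum_congr rfl fun i _ => Finset.sum_congr rfl fun j _ => by
    rw [(hκ.symm_inv y).apply i j]

theorem Lop_qf_sub_le (hκ : CoeffBound a b R κ) {x y : Euc d} (hx : ‖x‖ ≤ R) (hy : ‖y‖ ≤ R) :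
    |Lop a b (qf (a y)⁻¹ y) x - 2 * d| ≤ 2 * ((d : ℝ) ^ 2 + 1) * κ ^ 2 * ‖x - y‖ := by
  have h1 : ∑ i, ∑ j, a x i j * (a y)⁻¹ i j =
      d + ∑ i, ∑ j, (a x - a y) i j * (a y)⁻¹ i j := by
    rw [← hκ.sum_a_inv y]
    simp only [← Finset.sum_add_distrib, Matrix.sub_apply]
    exact Finset.sum_congr rfl fun i _ => Finset.sum_congr rfl fun j _ => by ring
  rw [Lop_qf (hκ.symm_inv y), h1]
  have h2 := sum_entry_mul_le (a x - a y) (a y)⁻¹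
  have h3 := abs_real_inner_le_norm (b x) (opA (a y)⁻¹ (x - y))
  have k0 := hκ.one_le
  have h4 : ‖opA (a x - a y)‖ * ‖opA (a y)⁻¹‖ ≤ κ * ‖x - y‖ * κ := by
    gcongr
    · exact hκ.lip x y hx hy
    · exact hκ.norm_inv y hy
  have h5 : ‖b x‖ * ‖opA (a y)⁻¹ (x - y)‖ ≤ κ * (κ * ‖x - y‖) := by
    gcongr
    · exact hκ.norm_b x hx
    · exact ContinuousLinearMap.le_of_opNorm_le _ (hκ.norm_inv y hy) _
  have h6 : (d : ℝ) ^ 2 * (‖opA (a x - a y)‖ * ‖opA (a y)⁻¹‖) ≤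
      (d : ℝ) ^ 2 * (κ * ‖x - y‖ * κ) := by gcongr
  rw [abs_le] at *
  constructor <;> nlinarith

theorem inner_inv_sub_le (hκ : CoeffBound a b R κ) {x y : Euc d} (hx : ‖x‖ ≤ R)
    (hy : ‖y‖ ≤ R) (u v : Euc d) :
    |inner ℝ u (opA (a x) (opA (a y)⁻¹ v)) - inner ℝ u v| ≤ κ ^ 2 * ‖x - y‖ * ‖u‖ * ‖v‖ := by
  have h1 : inner ℝ u (opA (a x) (opA (a y)⁻¹ v)) - inner ℝ u v =
      inner ℝ u (opA (a x - a y) (opA (a y)⁻¹ v)) := by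
    rw [opA_sub, sub_apply, inner_sub_right, hκ.a_inv_apply]
  have k0 := hκ.one_le
  rw [h1]
  refine (abs_inner_opA_le _ _ _).trans ?_
  calc _ ≤ (κ * ‖x - y‖) * ‖u‖ * (κ * ‖v‖) := by
        gcongr
        · exact hκ.lip x y hx hy
        · exact ContinuousLinearMap.le_of_opNorm_le _ (hκ.norm_inv y hy) _
    _ = _ := by ring

theorem qf_le (hκ : CoeffBound a b R κ) {y : Euc d} (hy : ‖y‖ ≤ R) (p x : Euc d) :
    qf (a y)⁻¹ p x ≤ κ * ‖x - p‖ ^ 2 := by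
  refine (le_abs_self _).trans ((abs_inner_opA_le _ _ _).trans ?_)
  rw [mul_assoc, ← sq]
  gcongr
  exact hκ.norm_inv y hy

theorem norm_le_of_qf_le (hκ : CoeffBound a b R κ) {y : Euc d} (hy : ‖y‖ ≤ R) {p x : Euc d}
    {s : ℝ} (hs : 0 ≤ s)
    (h : qf (a y)⁻¹ p x ≤ s ^ 2) : ‖x - p‖ ≤ κ * s := by
  have k0 := hκ.one_le
  have := hκ.ell_inv y hy (x - p)
  refine abs_le_of_sq_le_sq' ?_ (by positivity) |>.2
  calc ‖x - p‖ ^ 2 ≤ κ * s ^ 2 := this.trans (by gcongr; exact h)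
    _ ≤ (κ * s) ^ 2 := by nlinarith [mul_nonneg (sub_nonneg.2 k0) (sq_nonneg s)]

end CoeffBound

set_option maxHeartbeats 1000000 in
theorem CoeffBound.poleEst {R κ : ℝ} (hκ : CoeffBound a b R κ) {p y x : Euc d} {r : ℝ}
    (hr : 0 < r) (hp : ‖p‖ ≤ R) (hy : ‖y‖ ≤ R) (hx : ‖x‖ ≤ R) (hyb : sig a p r y = 0)
    (hσ : 0 < sig a p r x) :
    PoleEst a b (8 * ((d : ℝ) ^ 2 + 1) * κ ^ 6) r (sig a p r) (qf (a y)⁻¹ y) x := by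
  have k0 := hκ.one_le
  have k1 : 0 < κ := by linarith
  have hzle : ‖x - p‖ ≤ κ * r := hκ.norm_le_of_qf_le hp hr.le (by
    simp only [sig] at hσ; linarith)
  have hyle : ‖y - p‖ ≤ κ * r := hκ.norm_le_of_qf_le hp hr.le (by
    simp only [sig] at hyb; linarith)
  have hvle : ‖x - y‖ ≤ 2 * κ * r := by
    have := norm_sub_le (x - p) (y - p)
    rw [sub_sub_sub_cancel_right] at this
    linarith
  have hxy : x ≠ y := by rintro rfl; exact hσ.ne' hyb
  have hv0 : 0 < ‖x - y‖ := norm_pos_iff.2 (sub_ne_zero.2 hxy)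
  set t := qf (a y)⁻¹ y x with ht
  have hell : ‖x - y‖ ^ 2 ≤ κ * t := hκ.ell_inv y hy (x - y)
  have ht0 : 0 < t := by
    have : 0 < ‖x - y‖ ^ 2 := by positivity
    exact pos_of_mul_pos_right (this.trans_le hell) k1.le
  have htle : t ≤ κ * ‖x - y‖ ^ 2 := hκ.qf_le hy y x
  have hρsq : √t ^ 2 = t := Real.sq_sqrt ht0.le
  have hvρ : ‖x - y‖ ≤ κ * √t := hκ.norm_le_of_qf_le hy (Real.sqrt_nonneg t) hρsq.ge
  have hρv : √t ≤ κ * ‖x - y‖ := by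
    rw [Real.sqrt_le_left (by positivity)]
    nlinarith [mul_nonneg (mul_nonneg k1.le (sub_nonneg.2 k0)) (sq_nonneg ‖x - y‖)]
  have hρ0 : 0 < √t := Real.sqrt_pos.2 ht0
  -- the polarization identity at the pole
  have hpol : 2 * inner ℝ (opA (a p)⁻¹ (x - p)) (x - y) =
      inner ℝ (x - y) (opA (a p)⁻¹ (x - y)) - sig a p r x := by
    have e : y - p = (x - p) - (x - y) := by abel
    have h1 := hyb
    simp only [sig, qf] at h1 ⊢
    rw [e, map_sub, inner_sub_left, inner_sub_right, inner_sub_right,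
      inner_opA_comm (hκ.symm_inv p) (x - p) (x - y), real_inner_comm (opA _ (x - p)) (x - y)] at h1
    linarith
  have hω : ‖opA (a p)⁻¹ (x - p)‖ ≤ κ ^ 2 * r :=
    (ContinuousLinearMap.le_of_opNorm_le _ (hκ.norm_inv p hp) _).trans
      (by nlinarith)
  have hw : ‖opA (a y)⁻¹ (x - y)‖ ≤ κ * ‖x - y‖ :=
    ContinuousLinearMap.le_of_opNorm_le _ (hκ.norm_inv y hy) _
  have hd : (1 : ℝ) ≤ (d : ℝ) ^ 2 + 1 := by nlinarith [sq_nonneg (d : ℝ)]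
  have kpow : ∀ m n : ℕ, m ≤ n → κ ^ m ≤ κ ^ n := fun m n h => pow_le_pow_right₀ k0 h
  have big : ∀ (c : ℝ) (n : ℕ), c ≤ 8 * ((d : ℝ) ^ 2 + 1) → n ≤ 6 →
      c * κ ^ n ≤ 8 * ((d : ℝ) ^ 2 + 1) * κ ^ 6 := fun c n hc hn => by
    gcongr
  set K := 8 * ((d : ℝ) ^ 2 + 1) * κ ^ 6 with hK
  have d8 : (8 : ℝ) ≤ 8 * ((d : ℝ) ^ 2 + 1) := by linarith
  refine ⟨ht0, ?_, ?_, ?_, ?_, ?_, ?_, ?_⟩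
  · calc √t ≤ κ * (2 * κ * r) := hρv.trans (by gcongr)
      _ = 2 * κ ^ 2 * r := by ring
      _ ≤ K * r := by gcongr; exact big 2 2 (by linarith) (by norm_num)
  · have h1 : |inner ℝ (x - y) (opA (a p)⁻¹ (x - y))| ≤ κ * ‖x - y‖ * ‖x - y‖ :=
      (abs_inner_opA_le _ _ _).trans (by gcongr; exact hκ.norm_inv p hp)
    have h2 := abs_real_inner_le_norm (opA (a p)⁻¹ (x - p)) (x - y)
    have h3 : ‖opA (a p)⁻¹ (x - p)‖ * ‖x - y‖ ≤ κ ^ 2 * r * ‖x - y‖ := by gcongr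
    have h4 : κ * ‖x - y‖ * ‖x - y‖ ≤ κ * (2 * κ * r) * ‖x - y‖ := by gcongr
    calc sig a p r x ≤ 4 * κ ^ 2 * r * ‖x - y‖ := by
          linarith [le_abs_self (inner ℝ (x - y) (opA (a p)⁻¹ (x - y))),
            neg_abs_le (inner ℝ (opA (a p)⁻¹ (x - p)) (x - y))]
      _ ≤ 4 * κ ^ 2 * r * (κ * √t) := by gcongr
      _ = 4 * κ ^ 3 * r * √t := by ring
      _ ≤ K * r * √t := by gcongr; exact big 4 3 (by linarith) (by norm_num)
  · refine (hκ.Lop_qf_sub_le hx hy).trans ?_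
    calc _ ≤ 2 * ((d : ℝ) ^ 2 + 1) * κ ^ 2 * (κ * √t) := by gcongr
      _ = 2 * ((d : ℝ) ^ 2 + 1) * κ ^ 3 * √t := by ring
      _ ≤ _ := by gcongr; exact big _ 3 (by linarith) (by norm_num)
  · rw [gradForm_qf (hκ.symm_inv y) (hκ.symm_inv y)]
    have h1 := hκ.inner_inv_sub_le hx hy (opA (a y)⁻¹ (x - y)) (x - y)
    rw [real_inner_comm (x - y) (opA (a y)⁻¹ (x - y)), ← qf, ← ht] at h1
    rw [← mul_sub, abs_mul, abs_of_pos (by norm_num : (0 : ℝ) < 4)]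
    calc _ ≤ 4 * (κ ^ 2 * ‖x - y‖ * (κ * ‖x - y‖) * ‖x - y‖) := by
          gcongr; exact h1.trans (by gcongr)
      _ = 4 * κ ^ 3 * ‖x - y‖ * ‖x - y‖ ^ 2 := by ring
      _ ≤ 4 * κ ^ 3 * (κ * √t) * (κ * t) := by gcongr
      _ = 4 * κ ^ 5 * √t * t := by ring
      _ ≤ _ := by gcongr; exact big _ 5 (by linarith) (by norm_num)
  · have h1 := hκ.Lop_qf_sub_le hx hp
    rw [show sig a p r = fun x => r ^ 2 - qf (a p)⁻¹ p x from rfl, Lop_const_sub,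
      show ∀ s : ℝ, -s + 2 * d = -(s - 2 * d) by intro s; ring, abs_neg]
    calc _ ≤ 2 * ((d : ℝ) ^ 2 + 1) * κ ^ 2 * (κ * r) := h1.trans (by gcongr)
      _ = 2 * ((d : ℝ) ^ 2 + 1) * κ ^ 3 * r := by ring
      _ ≤ _ := by gcongr; exact big _ 3 (by linarith) (by norm_num)
  · have e1 : gradForm a (sig a p r) (qf (a y)⁻¹ y) x =
        -gradForm a (qf (a p)⁻¹ p) (qf (a y)⁻¹ y) x := by
      simp only [gradForm, show sig a p r = fun x => r ^ 2 - qf (a p)⁻¹ p x from rfl,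
        pd_const_sub, neg_mul, mul_neg, Finset.sum_neg_distrib]
    rw [e1, gradForm_qf (hκ.symm_inv p) (hκ.symm_inv y)]
    have h1 := hκ.inner_inv_sub_le hx hy (opA (a p)⁻¹ (x - p)) (x - y)
    have h2 : |inner ℝ (x - y) (opA ((a p)⁻¹ - (a y)⁻¹) (x - y))| ≤
        κ * (κ * r) * ‖x - y‖ * ‖x - y‖ := by
      refine (abs_inner_opA_le _ _ _).trans ?_
      gcongr
      refine (hκ.lip_inv p y hp hy).trans ?_
      rw [norm_sub_rev]
      gcongr
    rw [opA_sub, sub_apply, inner_sub_right, ← qf.eq_def (a y)⁻¹ y x, ← ht] at h2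
    have h3 : κ ^ 2 * ‖x - y‖ * ‖opA (a p)⁻¹ (x - p)‖ * ‖x - y‖ ≤
        κ ^ 2 * ‖x - y‖ * (κ ^ 2 * r) * ‖x - y‖ := by gcongr
    have h4 : κ ^ 2 * r * ‖x - y‖ ^ 2 ≤ κ ^ 4 * r * ‖x - y‖ ^ 2 := by
      gcongr
      norm_num
    calc _ ≤ 6 * κ ^ 4 * r * ‖x - y‖ ^ 2 := by
          rw [abs_le] at *
          constructor <;> nlinarith
      _ ≤ 6 * κ ^ 4 * r * (κ * t) := by gcongr
      _ = 6 * κ ^ 5 * r * t := by ring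
      _ ≤ _ := by gcongr; exact big _ 5 (by linarith) (by norm_num)
  · have e1 : gradForm a (sig a p r) (sig a p r) x =
        gradForm a (qf (a p)⁻¹ p) (qf (a p)⁻¹ p) x := by
      simp only [gradForm, show sig a p r = fun x => r ^ 2 - qf (a p)⁻¹ p x from rfl,
        pd_const_sub, neg_mul, mul_neg, neg_neg]
    rw [e1, gradForm_qf (hκ.symm_inv p) (hκ.symm_inv p)]
    have h1 := hκ.inner_inv_sub_le hx hp (opA (a p)⁻¹ (x - p)) (x - p)
    rw [real_inner_comm (x - p) (opA (a p)⁻¹ (x - p)), ← qf] at h1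
    rw [show r ^ 2 - sig a p r x = qf (a p)⁻¹ p x by rw [sig]; ring]
    rw [← mul_sub, abs_mul, abs_of_pos (by norm_num : (0 : ℝ) < 4)]
    calc _ ≤ 4 * (κ ^ 2 * (κ * r) * (κ ^ 2 * r) * (κ * r)) := by
          gcongr; exact h1.trans (by gcongr)
      _ = 4 * κ ^ 6 * r ^ 3 := by ring
      _ ≤ _ := by gcongr; exact big _ 6 (by linarith) (by norm_num)

end Poles

section Kernel

variable {d : ℕ} {a : Euc d → Matrix (Fin d) (Fin d) ℝ} {b : Euc d → Euc d}
  {σ τ : Euc d → ℝ} {x : Euc d} {K r : ℝ}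

theorem deriv_rpow_of_ne {t : ℝ} (ht : t ≠ 0) (e : ℝ) :
    deriv (fun s : ℝ => s ^ e) t = e * t ^ (e - 1) :=
  (Real.hasDerivAt_rpow_const (Or.inl ht)).deriv

theorem deriv_deriv_rpow {t : ℝ} (ht : 0 < t) (e : ℝ) :
    deriv (deriv fun s : ℝ => s ^ e) t = e * (e - 1) * t ^ (e - 2) := by
  have h : deriv (fun s : ℝ => s ^ e) =ᶠ[𝓝 t] fun s => e * s ^ (e - 1) := by
    filter_upwards [eventually_ne_nhds ht.ne'] with s hs
    exact deriv_rpow_of_ne hs e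
  have h2 := (Real.hasDerivAt_rpow_const (x := t) (p := e - 1) (Or.inl ht.ne')).const_mul e
  rw [h.deriv_eq, h2.deriv, show e - 1 - 1 = e - 2 by ring]
  ring

theorem ContDiffAt.rpow_comp (hτ : ContDiffAt ℝ 2 τ x) (ht : 0 < τ x) (e : ℝ) :
    ContDiffAt ℝ 2 (fun y => τ y ^ e) x :=
  hτ.rpow_const_of_ne ht.ne'

theorem gradForm_rpow (hτ : ContDiffAt ℝ 2 τ x) (ht : 0 < τ x) (e : ℝ) (w : Euc d → ℝ) :
    gradForm a w (fun y => τ y ^ e) x = e * (τ x ^ e / τ x) * gradForm a w τ x := by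
  have := gradForm_comp_right (a := a) (g := fun s : ℝ => s ^ e) (hτ.differentiableAt (by simp))
    (Real.differentiableAt_rpow_const_of_ne e ht.ne') w
  rw [this, deriv_rpow_of_ne ht.ne', Real.rpow_sub_one ht.ne']

theorem Lop_mul_rpow (ha : (a x).IsSymm) (hσ : ContDiffAt ℝ 2 σ x) (hτ : ContDiffAt ℝ 2 τ x)
    (ht : 0 < τ x) (e : ℝ) :
    Lop a b (fun y => σ y * τ y ^ e) x = τ x ^ e *
      (e * (σ x / τ x) * Lop a b τ x + e * (e - 1) * (σ x / τ x ^ 2) * gradForm a τ τ x +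
        Lop a b σ x + 2 * e / τ x * gradForm a σ τ x) := by
  rw [Lop_mul hσ (hτ.rpow_comp ht e), gradForm_comm ha (fun y => τ y ^ e) σ,
    gradForm_rpow hτ ht,
    Lop_comp (g := fun s : ℝ => s ^ e) hτ (Real.contDiffAt_rpow_const_of_ne ht.ne'),
    deriv_deriv_rpow ht, deriv_rpow_of_ne ht.ne', Real.rpow_sub_one ht.ne',
    Real.rpow_sub ht, Real.rpow_two]
  field_simp
  ring

theorem Lop_mul_mul_rpow (ha : (a x).IsSymm) (hσ : ContDiffAt ℝ 2 σ x)
    (hτ : ContDiffAt ℝ 2 τ x) (ht : 0 < τ x) (e : ℝ) :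
    Lop a b (fun y => σ y * (σ y * τ y ^ e)) x = σ x * Lop a b (fun y => σ y * τ y ^ e) x +
      τ x ^ e * (σ x * Lop a b σ x + 2 * e * (σ x / τ x) * gradForm a σ τ x +
        2 * gradForm a σ σ x) := by
  have h1 := hτ.rpow_comp ht e
  rw [Lop_mul hσ (hσ.mul h1), gradForm_comm ha (fun y => σ y * τ y ^ e) σ,
    gradForm_mul_right (hσ.differentiableAt (by simp)) (h1.differentiableAt (by simp)),
    gradForm_rpow hτ ht]
  field_simp
  ring

theorem PoleEst.Lop_mul_rpow_sub_le (h : PoleEst a b K r σ τ x) (hK : 1 ≤ K) (hr : 0 < r)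
    (hs : 0 < σ x) (ha : (a x).IsSymm) (hσ : ContDiffAt ℝ 2 σ x) (hτ : ContDiffAt ℝ 2 τ x)
    {e : ℝ} (he : |e| ≤ d) :
    |Lop a b (fun y => σ y * τ y ^ e) x -
      τ x ^ e * ((2 * d + 4 * e) * (e * (σ x / τ x) - 1))| ≤
      τ x ^ e * (K ^ 2 * (1 + 2 * d) ^ 2 * r) := by
  have ht := h.tau_pos
  have hρ : 0 < √(τ x) := Real.sqrt_pos.2 ht
  have hρ2 : √(τ x) * √(τ x) = τ x := Real.mul_self_sqrt ht.le
  rw [Lop_mul_rpow ha hσ hτ ht, ← mul_sub, abs_mul, abs_of_pos (Real.rpow_pos_of_pos ht e)]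
  refine mul_le_mul_of_nonneg_left ?_ (Real.rpow_pos_of_pos ht e).le
  set s := σ x
  set t := τ x
  set ρ := √t
  have i1 : |s / t * (Lop a b τ x - 2 * d)| ≤ K ^ 2 * r := by
    rw [abs_mul, abs_of_pos (by positivity)]
    calc s / t * |Lop a b τ x - 2 * d| ≤ (K * r * ρ) / t * (K * ρ) := by
          gcongr
          · exact h.sig_le
          · exact h.L_tau
      _ = K ^ 2 * r * (ρ * ρ) / t := by ring
      _ = _ := by rw [hρ2]; field_simp
  have i2 : |s / t ^ 2 * (gradForm a τ τ x - 4 * t)| ≤ K ^ 2 * r := by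
    rw [abs_mul, abs_of_pos (by positivity)]
    calc s / t ^ 2 * |gradForm a τ τ x - 4 * t| ≤ (K * r * ρ) / t ^ 2 * (K * ρ * t) := by
          gcongr
          · exact h.sig_le
          · exact h.G_tau
      _ = K ^ 2 * r * (ρ * ρ) * t / t ^ 2 := by ring
      _ = _ := by rw [hρ2]; field_simp
  have i4 : |(gradForm a σ τ x - (2 * s - 2 * t)) / t| ≤ K * r := by
    rw [abs_div, abs_of_pos ht, div_le_iff₀ ht]
    exact h.G_sig_tau
  have i3 := h.L_sig
  have key : e * (s / t) * Lop a b τ x + e * (e - 1) * (s / t ^ 2) * gradForm a τ τ x +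
        Lop a b σ x + 2 * e / t * gradForm a σ τ x - (2 * d + 4 * e) * (e * (s / t) - 1) =
      e * (s / t * (Lop a b τ x - 2 * d)) +
      e * (e - 1) * (s / t ^ 2 * (gradForm a τ τ x - 4 * t)) + (Lop a b σ x + 2 * d) +
      2 * e * ((gradForm a σ τ x - (2 * s - 2 * t)) / t) := by
    field_simp
    ring
  rw [key]
  have e0 := abs_nonneg e
  have e1 : |e - 1| ≤ d + 1 := (abs_sub _ _).trans (by simpa using he)
  have hKK : K ≤ K ^ 2 := by nlinarith
  have d0 : (0 : ℝ) ≤ d := Nat.cast_nonneg d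
  calc _ ≤ |e| * (K ^ 2 * r) + |e| * |e - 1| * (K ^ 2 * r) + K * r + 2 * |e| * (K * r) := by
        refine (abs_add_le _ _).trans (add_le_add ((abs_add_le _ _).trans (add_le_add
          ((abs_add_le _ _).trans (add_le_add ?_ ?_)) i3)) ?_)
        · rw [abs_mul]; gcongr
        · rw [abs_mul, abs_mul]; gcongr
        · rw [abs_mul, abs_mul, abs_two]; gcongr
    _ ≤ d * (K ^ 2 * r) + d * (d + 1) * (K ^ 2 * r) + K ^ 2 * r + 2 * d * (K ^ 2 * r) := by
        gcongr
    _ ≤ _ := by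
        have : 0 < K ^ 2 * r := by positivity
        nlinarith [mul_nonneg d0 d0]

theorem PoleEst.le_Lop_sq_rpow (h : PoleEst a b K r σ τ x) (hd : 1 ≤ d) (hK : 1 ≤ K) (hr : 0 < r)
    (hr1 : r ≤ 1) (hs : 0 < σ x) (ha : (a x).IsSymm) (hσ : ContDiffAt ℝ 2 σ x)
    (hτ : ContDiffAt ℝ 2 τ x) {e : ℝ} (he : 2 * d + 4 * e = -1) :
    τ x ^ e * (8 * r ^ 2 - 2 * K * r ^ 3 -
      K * (K ^ 2 * (1 + 2 * d) ^ 2 + 2 * d + K + 2 * d * K + 8 + 4 * d) * r * (σ x / √(τ x))) ≤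
    Lop a b (fun y => σ y * (σ y * τ y ^ e)) x := by
  have ht := h.tau_pos
  have hρ : 0 < √(τ x) := Real.sqrt_pos.2 ht
  have hρ2 : √(τ x) * √(τ x) = τ x := Real.mul_self_sqrt ht.le
  have d1 : (1 : ℝ) ≤ d := by exact_mod_cast hd
  have he0 : e < 0 := by linarith
  have hed : |e| ≤ d := by rw [abs_of_neg he0]; linarith
  have h0 := h.Lop_mul_rpow_sub_le hK hr hs ha hσ hτ hed
  rw [he] at h0
  rw [Lop_mul_mul_rpow ha hσ hτ ht]
  have hn := Real.rpow_pos_of_pos ht e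
  set n := τ x ^ e
  set s := σ x
  set t := τ x
  set ρ := √t
  set K1 := K ^ 2 * (1 + 2 * (d : ℝ)) ^ 2 with hK1
  have hK1p : 0 < K1 := by positivity
  have j1 : n * (-(K1 * r)) ≤ Lop a b (fun y => σ y * τ y ^ e) x := by
    have h1 := (abs_le.1 h0).1
    have h2 : 0 ≤ n * (-1 * (e * (s / t) - 1)) := by
      have : e * (s / t) ≤ 0 := mul_nonpos_of_nonpos_of_nonneg he0.le (by positivity)
      exact mul_nonneg hn.le (by linarith)
    linarith
  have j2 : -(2 * d) - K * r ≤ Lop a b σ x := by linarith [(abs_le.1 h.L_sig).1]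
  have j3 : 4 * (r ^ 2 - s) - K * r ^ 3 ≤ gradForm a σ σ x := by
    linarith [(abs_le.1 h.G_sig).1]
  have j4 : gradForm a σ τ x ≤ 2 * s + K * r * t := by
    linarith [(abs_le.1 h.G_sig_tau).2]
  have hsρ : s / t ≤ K * r / ρ := by
    rw [div_le_div_iff₀ ht hρ, ← hρ2]
    nlinarith [h.sig_le]
  have hone : 1 ≤ K * r / ρ := by rw [one_le_div hρ]; exact h.rho_le
  have j5 : -(4 * d * s * (K * r / ρ) + 2 * d * K * s) ≤ 2 * e * (s / t) * gradForm a σ τ x := by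
    have h1 : 2 * e * (s / t) * (2 * s + K * r * t) ≤ 2 * e * (s / t) * gradForm a σ τ x :=
      mul_le_mul_of_nonpos_left j4
        (mul_nonpos_of_nonpos_of_nonneg (by linarith) (by positivity))
    have h2 : 2 * e * (s / t) * (2 * s + K * r * t) = e * (4 * s * (s / t) + 2 * K * r * s) := by
      field_simp
      ring
    have h3 : 4 * s * (s / t) + 2 * K * r * s ≤ 4 * s * (K * r / ρ) + 2 * K * s := by
      have h4 : 4 * s * (s / t) ≤ 4 * s * (K * r / ρ) := by gcongr
      have h5 : 2 * K * r * s ≤ 2 * K * 1 * s := by gcongr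
      linarith
    have h6 : 0 ≤ 4 * s * (K * r / ρ) + 2 * K * s := by positivity
    have h7 : e * (4 * s * (K * r / ρ) + 2 * K * s) ≤ e * (4 * s * (s / t) + 2 * K * r * s) :=
      mul_le_mul_of_nonpos_left h3 he0.le
    have h8 : -d * (4 * s * (K * r / ρ) + 2 * K * s) ≤ e * (4 * s * (K * r / ρ) + 2 * K * s) :=
      mul_le_mul_of_nonneg_right (by linarith [neg_abs_le e]) h6
    linarith
  have main : 8 * r ^ 2 - 2 * K * r ^ 3 -
      K * (K1 + 2 * d + K + 2 * d * K + 8 + 4 * d) * r * (s / ρ) ≤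
      s * (-(K1 * r)) + (s * Lop a b σ x + 2 * e * (s / t) * gradForm a σ τ x +
        2 * gradForm a σ σ x) := by
    have h1 : s * (-(2 * d) - K * r) ≤ s * Lop a b σ x := by gcongr
    have h2 : s * (K1 * r) ≤ s * (K1 * 1) := by gcongr
    have h3 : s * (K * r) ≤ s * (K * 1) := by gcongr
    have h4 : (K1 + 2 * d + K + 2 * d * K + 8) * s * 1 ≤
        (K1 + 2 * d + K + 2 * d * K + 8) * s * (K * r / ρ) := by gcongr
    have h5 : K * (K1 + 2 * d + K + 2 * d * K + 8 + 4 * d) * r * (s / ρ) =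
        (K1 + 2 * d + K + 2 * d * K + 8) * s * (K * r / ρ) + 4 * d * s * (K * r / ρ) := by
      ring
    rw [h5]
    linarith
  calc _ ≤ n * (s * (-(K1 * r)) + (s * Lop a b σ x + 2 * e * (s / t) * gradForm a σ τ x +
        2 * gradForm a σ σ x)) := by gcongr
    _ = s * (n * (-(K1 * r))) + n * (s * Lop a b σ x + 2 * e * (s / t) * gradForm a σ τ x +
        2 * gradForm a σ σ x) := by ring
    _ ≤ _ := by gcongr

/-- Barriers comparable to the Poisson kernel `σ τ^{-d/2}` with a pole on the boundary. -/
theorem exists_kernel (hd : 1 ≤ d) {K C₀ : ℝ} (hK : 1 ≤ K) (hC₀ : 0 ≤ C₀) :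
    ∃ r₀ > 0, ∀ r, 0 < r → r ≤ r₀ → ∀ σ τ : Euc d → ℝ, ∃ F G : Euc d → ℝ, ∀ x, 0 < σ x →
      PoleEst a b K r σ τ x → (a x).IsSymm → ContDiffAt ℝ 2 σ x → ContDiffAt ℝ 2 τ x →
      ContDiffAt ℝ 2 F x ∧ ContDiffAt ℝ 2 G x ∧
      (σ x * τ x ^ (-(d : ℝ) / 2) / 2 ≤ F x ∧ F x ≤ 2 * (σ x * τ x ^ (-(d : ℝ) / 2))) ∧
      (σ x * τ x ^ (-(d : ℝ) / 2) / 2 ≤ G x ∧ G x ≤ 2 * (σ x * τ x ^ (-(d : ℝ) / 2))) ∧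
      Lop a b F x + C₀ * F x ≤ 0 ∧ C₀ * G x < Lop a b G x := by
  have d1 : (1 : ℝ) ≤ d := by exact_mod_cast hd
  set K1 := K ^ 2 * (1 + 2 * (d : ℝ)) ^ 2 with hK1
  have hK1p : 1 ≤ K1 := by
    have h1 : 1 ≤ K ^ 2 := one_le_pow₀ hK
    have h2 : 1 ≤ (1 + 2 * (d : ℝ)) ^ 2 := one_le_pow₀ (by linarith)
    nlinarith
  set C2 := K * (K1 + 2 * d + K + 2 * d * K + 8 + 4 * d) with hC2
  have hC2p : 0 < C2 := by positivity
  set K3 := K1 + 2 * C₀ * K with hK3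
  have hK3p : 0 < K3 := by positivity
  set c := 2 * K3 * (4 * C2 + K) * K with hc
  have hcp : 0 < c := by positivity
  refine ⟨min 1 (min K1⁻¹ (min (2 * K)⁻¹ c⁻¹)), by positivity, fun r hr hr0 σ τ => ?_⟩
  obtain ⟨hr1, hr2, hr3, hr4⟩ : r ≤ 1 ∧ K1 * r ≤ 1 ∧ 2 * K * r ≤ 1 ∧ c * r ≤ 1 := by
    simp only [le_min_iff] at hr0
    refine ⟨hr0.1, ?_, ?_, ?_⟩
    · exact (le_inv_mul_iff₀ (by positivity)).1 (by simpa using hr0.2.1)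
    · exact (le_inv_mul_iff₀ (by positivity)).1 (by simpa using hr0.2.2.1)
    · exact (le_inv_mul_iff₀ (by positivity)).1 (by simpa using hr0.2.2.2)
  set kb := √(K * r) with hkb
  have hkb0 : 0 < kb := Real.sqrt_pos.2 (by positivity)
  have hkb2 : kb * kb = K * r := Real.mul_self_sqrt (by positivity)
  set α : ℝ := -(d : ℝ) / 2 with hα
  set Q : Euc d → ℝ := fun y => 4 * C2 * (σ y * τ y ^ (α + 1 / 4)) -
    r⁻¹ * (σ y * (σ y * τ y ^ (α - 1 / 4))) with hQ
  refine ⟨fun y => σ y * τ y ^ α + K3 * kb * Q y, fun y => σ y * τ y ^ α - K3 * kb * Q y,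
    fun x hs h ha hσ hτ => ?_⟩
  have ht := h.tau_pos
  have cP : ∀ e : ℝ, ContDiffAt ℝ 2 (fun y => σ y * τ y ^ e) x := fun e =>
    hσ.mul (hτ.rpow_comp ht e)
  have cQ : ContDiffAt ℝ 2 Q x :=
    (contDiffAt_const.mul (cP _)).sub (contDiffAt_const.mul (hσ.mul (cP _)))
  have cKQ : ContDiffAt ℝ 2 (fun y => K3 * kb * Q y) x := contDiffAt_const.mul cQ
  have LQ : Lop a b Q x = 4 * C2 * Lop a b (fun y => σ y * τ y ^ (α + 1 / 4)) x -
      r⁻¹ * Lop a b (fun y => σ y * (σ y * τ y ^ (α - 1 / 4))) x := by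
    rw [hQ, Lop_sub (contDiffAt_const.mul (cP _)) (contDiffAt_const.mul (hσ.mul (cP _))),
      Lop_const_mul (cP _), Lop_const_mul (hσ.mul (cP _))]
  have bα := h.Lop_mul_rpow_sub_le hK hr hs ha hσ hτ (e := α)
    (by rw [abs_le]; constructor <;> linarith)
  have bβ := h.Lop_mul_rpow_sub_le hK hr hs ha hσ hτ (e := α + 1 / 4)
    (by rw [abs_le]; constructor <;> linarith)
  have bδ := h.le_Lop_sq_rpow hd hK hr hr1 hs ha hσ hτ (e := α - 1 / 4) (by linarith)
  have hm := Real.rpow_pos_of_pos ht α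
  have hk := Real.rpow_pos_of_pos ht (1 / 4)
  have hk2 : √(τ x) = τ x ^ (1 / 4 : ℝ) * τ x ^ (1 / 4 : ℝ) := by
    rw [← Real.rpow_add ht, Real.sqrt_eq_rpow]; norm_num
  rw [show 2 * (d : ℝ) + 4 * α = 0 by rw [hα]; ring, zero_mul, mul_zero, sub_zero] at bα
  rw [show 2 * (d : ℝ) + 4 * (α + 1 / 4) = 1 by rw [hα]; ring, one_mul,
    Real.rpow_add ht] at bβ
  have hQx : Q x = 4 * C2 * (σ x * (τ x ^ α * τ x ^ (1 / 4 : ℝ))) -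
      r⁻¹ * (σ x * (σ x * (τ x ^ α / τ x ^ (1 / 4 : ℝ)))) := by
    simp only [hQ, Real.rpow_add ht, Real.rpow_sub ht]
  rw [Real.rpow_sub ht, ← hC2, hk2] at bδ
  have hsl := h.sig_le
  have hρl := h.rho_le
  have htt : τ x = √(τ x) * √(τ x) := (Real.mul_self_sqrt ht.le).symm
  rw [hk2] at hsl hρl htt
  simp only [← hK1] at bα bβ
  rw [Lop_add (cP α) cKQ, Lop_sub (cP α) cKQ, Lop_const_mul cQ, LQ]
  beta_reduce
  rw [hQx]
  refine ⟨(cP α).add cKQ, (cP α).sub cKQ, ?_⟩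
  set m := τ x ^ α
  set k := τ x ^ (1 / 4 : ℝ)
  set s := σ x
  set Lα := Lop a b (fun y => σ y * τ y ^ α) x
  set Lβ := Lop a b (fun y => σ y * τ y ^ (α + 1 / 4)) x
  set Lδ := Lop a b (fun y => σ y * (σ y * τ y ^ (α - 1 / 4))) x
  set q := 4 * C2 * (s * (m * k)) - r⁻¹ * (s * (s * (m / k))) with hq
  -- bound for the operator on the correction
  have hkkb : k ≤ kb := by
    refine abs_le_of_sq_le_sq' ?_ hkb0.le |>.2
    rw [sq, sq, hkb2]; exact hρl
  have L1 : 4 * C2 * Lβ ≤ -(C2 * (s * m / k ^ 3)) := by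
    have h1 : Lβ ≤ m * k * ((α + 1 / 4) * (s / τ x)) := by
      have := (abs_le.1 bβ).2
      have h2 : m * k * (K1 * r) ≤ m * k * 1 := by gcongr
      linarith
    have h2 : m * k * ((α + 1 / 4) * (s / τ x)) ≤ m * k * (-(1 / 4) * (s / τ x)) := by
      gcongr
      linarith
    have h3 : m * k * (-(1 / 4) * (s / τ x)) = -(1 / 4) * (s * m / k ^ 3) := by
      rw [htt]; field_simp
    calc 4 * C2 * Lβ ≤ 4 * C2 * (-(1 / 4) * (s * m / k ^ 3)) := by
          gcongr; linarith
      _ = _ := by ring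
  have L2 : 7 * r * (m / k) - C2 * (s * m / k ^ 3) ≤ r⁻¹ * Lδ := by
    rw [le_inv_mul_iff₀ hr]
    refine le_trans ?_ bδ
    have h1 : m / k * (C2 * r * (s / (k * k))) = r * (C2 * (s * m / k ^ 3)) := by
      field_simp
    have h2 : r * (7 * r * (m / k)) ≤ m / k * (8 * r ^ 2 - 2 * K * r ^ 3) := by
      have : r ^ 2 * (m / k) * (2 * K * r) ≤ r ^ 2 * (m / k) * 1 := by gcongr
      linarith
    rw [mul_sub (m / k), h1]
    linarith
  have LQle : 4 * C2 * Lβ - r⁻¹ * Lδ ≤ -(7 * r * (m / k)) := by linarith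
  have LKQ : K3 * kb * (4 * C2 * Lβ - r⁻¹ * Lδ) ≤ -(7 * K3 * (r * m)) := by
    calc _ ≤ K3 * kb * (-(7 * r * (m / k))) := by gcongr
      _ = -(7 * K3 * (r * m) * (kb / k)) := by ring
      _ ≤ -(7 * K3 * (r * m) * 1) := by
          gcongr
          rwa [one_le_div hk]
      _ = _ := by ring
  -- bound for the correction
  have hqle : |K3 * kb * q| ≤ s * m / 2 := by
    have h1 : |q| ≤ (4 * C2 + K) * k * (s * m) := by
      have h2 : r⁻¹ * (s * (s * (m / k))) ≤ K * k * (s * m) := by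
        calc r⁻¹ * (s * (s * (m / k))) ≤ r⁻¹ * (s * ((K * r * (k * k)) * (m / k))) := by
              gcongr
          _ = K * k * (s * m) := by field_simp
      have h3 : 0 ≤ r⁻¹ * (s * (s * (m / k))) := by positivity
      have h4 : 0 ≤ 4 * C2 * (s * (m * k)) := by positivity
      have h5 : 0 ≤ K * k * (s * m) := by positivity
      rw [abs_le]
      constructor <;> linarith
    rw [abs_mul, abs_of_pos (by positivity : 0 < K3 * kb)]
    calc K3 * kb * |q| ≤ K3 * kb * ((4 * C2 + K) * kb * (s * m)) := by
          refine mul_le_mul_of_nonneg_left (h1.trans ?_) (by positivity)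
          gcongr
      _ = K3 * (4 * C2 + K) * (kb * kb) * (s * m) := by ring
      _ = c * r * (s * m) / 2 := by rw [hkb2, hc]; ring
      _ ≤ 1 * (s * m) / 2 := by gcongr
      _ = _ := by ring
  have hsm : s * m ≤ K * (r * m) := by
    have h1 : k * k ≤ 1 := by
      have := mul_pos (by positivity : 0 < K) hr
      linarith
    calc s * m ≤ K * r * (k * k) * m := by gcongr
      _ ≤ K * r * 1 * m := by gcongr
      _ = _ := by ring
  have hsm0 : 0 < s * m := by positivity
  have hrm0 : 0 < r * m := by positivity
  have hCsm : C₀ * (s * m) ≤ C₀ * (K * (r * m)) := by gcongr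
  have hK3rm : 7 * K3 * (r * m) = 7 * (K1 * (r * m)) + 14 * (C₀ * (K * (r * m))) := by
    rw [hK3]; ring
  have hK1rm : 0 < K1 * (r * m) := by positivity
  have hq1 := abs_le.1 hqle
  have hα1 := abs_le.1 bα
  have hC1 : C₀ * (K3 * kb * q) ≤ C₀ * (s * m / 2) := by gcongr; exact hq1.2
  have hC2' : C₀ * (-(s * m / 2)) ≤ C₀ * (K3 * kb * q) := by gcongr; exact hq1.1
  have hCpos : 0 ≤ C₀ * (s * m) := by positivity
  refine ⟨⟨by linarith, by linarith⟩, ⟨by linarith, by linarith⟩, by linarith, by linarith⟩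

end Kernel

section PosCube

theorem hasDerivAt_max_zero_pow (n : ℕ) (t : ℝ) :
    HasDerivAt (fun s : ℝ => max s 0 ^ (n + 2)) ((n + 2) * max t 0 ^ (n + 1)) t := by
  rcases lt_trichotomy t 0 with ht | rfl | ht
  · rw [max_eq_right ht.le]
    have h : (fun s : ℝ => max s 0 ^ (n + 2)) =ᶠ[𝓝 t] fun _ => 0 := by
      filter_upwards [eventually_lt_nhds ht] with s hs
      simp [max_eq_right hs.le]
    simpa using (hasDerivAt_const t (0 : ℝ)).congr_of_eventuallyEq h
  · rw [hasDerivAt_iff_isLittleO_nhds_zero]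
    have h : (fun h : ℝ => max (0 + h) 0 ^ (n + 2) - max 0 0 ^ (n + 2) -
        h • ((n + 2 : ℝ) * max 0 0 ^ (n + 1))) = fun h : ℝ => h * max h 0 ^ (n + 1) := by
      ext h
      rcases le_total h 0 with hh | hh <;> simp [hh]; ring
    rw [h]
    have h2 : Tendsto (fun h : ℝ => max h 0 ^ (n + 1)) (𝓝 0) (𝓝 0) := by
      have : Continuous fun h : ℝ => max h 0 ^ (n + 1) := by fun_prop
      simpa using this.tendsto 0
    simpa using (Asymptotics.isBigO_refl (fun h : ℝ => h) (𝓝 0)).mul_isLittleO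
      ((Asymptotics.isLittleO_one_iff ℝ).2 h2)
  · rw [max_eq_left ht.le]
    have h : (fun s : ℝ => max s 0 ^ (n + 2)) =ᶠ[𝓝 t] fun s => s ^ (n + 2) := by
      filter_upwards [eventually_gt_nhds ht] with s hs
      simp [max_eq_left hs.le]
    simpa using (hasDerivAt_pow (n + 2) t).congr_of_eventuallyEq h

/-- The positive part cubed, a `C²` function. -/
def posCube (t : ℝ) : ℝ := max t 0 ^ 3

theorem hasDerivAt_posCube (t : ℝ) : HasDerivAt posCube (3 * max t 0 ^ 2) t := by
  have := hasDerivAt_max_zero_pow 1 t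
  norm_num at this
  exact this

theorem deriv_posCube : deriv posCube = fun t => 3 * max t 0 ^ 2 :=
  funext fun t => (hasDerivAt_posCube t).deriv

theorem deriv_deriv_posCube (t : ℝ) : deriv (deriv posCube) t = 6 * max t 0 := by
  have h := (hasDerivAt_max_zero_pow 0 t).const_mul 3
  norm_num at h
  rw [deriv_posCube, h.deriv]
  ring

theorem contDiff_posCube : ContDiff ℝ 2 posCube := by
  rw [show (2 : WithTop ℕ∞) = 1 + 1 by norm_num, contDiff_succ_iff_deriv]
  refine ⟨fun t => (hasDerivAt_posCube t).differentiableAt, by simp, ?_⟩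
  rw [contDiff_one_iff_deriv]
  refine ⟨fun t => ?_, ?_⟩
  · rw [deriv_posCube]
    have h := (hasDerivAt_max_zero_pow 0 t).const_mul 3
    norm_num at h
    exact h.differentiableAt
  · rw [funext deriv_deriv_posCube]
    fun_prop

theorem posCube_nonneg (t : ℝ) : 0 ≤ posCube t := by unfold posCube; positivity

theorem posCube_pos_iff {t : ℝ} : 0 < posCube t ↔ 0 < t := by
  unfold posCube
  constructor
  · intro h
    by_contra! h2
    simp [max_eq_right h2] at h
  · intro h
    rw [max_eq_left h.le]; positivity

end PosCube

section Bump

variable {d : ℕ} {a : Euc d → Matrix (Fin d) (Fin d) ℝ} {b : Euc d → Euc d}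

theorem CoeffBound.exists_abs_Lop_le {R κ : ℝ} (hκ : CoeffBound a b R κ) {u : Euc d → ℝ}
    (hu : ContDiff ℝ 2 u) : ∃ M, 0 ≤ M ∧ ∀ x, ‖x‖ ≤ R → |Lop a b u x| ≤ M := by
  have k0 := hκ.one_le
  have c1 : ∀ i, Continuous (pd u i) := fun i =>
    continuous_iff_continuousAt.2 fun x => (hu.contDiffAt.pd_contDiffAt i).continuousAt
  have c2 : ∀ i j, Continuous (pd2 u i j) := fun i j => by
    have h1 : ContDiff ℝ 1 (pd u j) := contDiff_iff_contDiffAt.2 fun x =>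
      hu.contDiffAt.pd_contDiffAt j
    exact (h1.continuous_fderiv (by simp)).clm_apply continuous_const
  have c3 : Continuous fun x => (∑ i, ∑ j, κ * |pd2 u i j x|) + ∑ i, κ * |pd u i x| := by
    fun_prop
  obtain ⟨M, hM⟩ := (isCompact_closedBall (0 : Euc d) R).exists_bound_of_continuousOn
    c3.continuousOn
  refine ⟨max M 0, le_max_right _ _, fun x hx => ?_⟩
  refine le_trans ?_ (((le_abs_self _).trans (hM x (by simpa using hx))).trans (le_max_left _ _))
  refine (abs_add_le _ _).trans (add_le_add ?_ ?_)
  · refine (Finset.abs_sum_le_sum_abs _ _).trans (Finset.sum_le_sum fun i _ => ?_)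
    refine (Finset.abs_sum_le_sum_abs _ _).trans (Finset.sum_le_sum fun j _ => ?_)
    rw [abs_mul]
    gcongr
    exact (abs_entry_le _ i j).trans (hκ.norm_a x hx)
  · refine (Finset.abs_sum_le_sum_abs _ _).trans (Finset.sum_le_sum fun i _ => ?_)
    rw [abs_mul]
    gcongr
    exact (abs_apply_le_norm _ i).trans (hκ.norm_b x hx)

theorem qf_one (y x : Euc d) : qf 1 y x = ‖x - y‖ ^ 2 := by
  rw [qf, opA_one_apply, real_inner_self_eq_norm_sq]

/-- A Hopf-type bump function: positive exactly in the ball of radius `R`, and a strict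
subsolution in the annulus outside radius `ρ`. -/
theorem StandingB.exists_bump (h : StandingB a b) (x₁ : Euc d) {ρ R : ℝ} (hρ : 0 < ρ)
    (hR : 0 < R) {C₀ : ℝ} (hC₀ : 0 ≤ C₀) :
    ∃ ζ : Euc d → ℝ, ContDiff ℝ 2 ζ ∧ (∀ x, 0 ≤ ζ x) ∧ (∀ x, ζ x ≤ 1) ∧
      (∀ x, 0 < ζ x ↔ dist x x₁ < R) ∧
      ∀ x, ρ < dist x x₁ → dist x x₁ < R → C₀ * ζ x < Lop a b ζ x := by
  obtain ⟨κ, hκ⟩ := h.exists_coeffBound (R := ‖x₁‖ + R) (by positivity)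
  have k0 : 0 < κ := by linarith [hκ.one_le]
  have cu : ContDiff ℝ 2 (qf 1 x₁) := contDiff_qf 1 x₁
  obtain ⟨M, hM0, hM⟩ := hκ.exists_abs_Lop_le cu
  set γ := κ * (M + C₀ + 1) / (4 * ρ ^ 2) + 1 with hγ
  have hγ1 : 1 ≤ γ := by rw [hγ]; linarith [show 0 ≤ κ * (M + C₀ + 1) / (4 * ρ ^ 2) by positivity]
  have hγ0 : 0 < γ := by linarith
  set c := Real.exp (-γ * R ^ 2) with hc
  set f : ℝ → ℝ := fun s => Real.exp (-γ * s) - c with hf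
  have cf : ContDiff ℝ 2 f := by
    rw [hf]
    exact (Real.contDiff_exp.comp (contDiff_const.mul contDiff_id)).sub contDiff_const
  have f1 : ∀ s, HasDerivAt f (-γ * Real.exp (-γ * s)) s := fun s => by
    have h1 : HasDerivAt (fun s : ℝ => -γ * s) (-γ) s := by
      simpa using (hasDerivAt_id s).const_mul (-γ)
    exact (h1.exp.sub_const c).congr_deriv (by ring)
  have f2 : ∀ s, HasDerivAt (deriv f) (γ ^ 2 * Real.exp (-γ * s)) s := fun s => by
    rw [show deriv f = fun s => -γ * Real.exp (-γ * s) from funext fun s => (f1 s).deriv]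
    have h1 : HasDerivAt (fun s : ℝ => -γ * s) (-γ) s := by
      simpa using (hasDerivAt_id s).const_mul (-γ)
    exact (h1.exp.const_mul (-γ)).congr_deriv (by ring)
  set g : Euc d → ℝ := fun x => f (qf 1 x₁ x) with hg
  have cg : ContDiff ℝ 2 g := cf.comp cu
  have g1 : ∀ x, g x ≤ 1 := fun x => by
    have h1 : Real.exp (-γ * qf 1 x₁ x) ≤ 1 := by
      rw [Real.exp_le_one_iff, qf_one]
      have : 0 ≤ γ * ‖x - x₁‖ ^ 2 := by positivity
      linarith
    have h2 : 0 < c := Real.exp_pos _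
    simp only [hg, hf]
    linarith
  have gpos : ∀ x, 0 < g x ↔ dist x x₁ < R := fun x => by
    simp only [hg, hf, hc, sub_pos, Real.exp_lt_exp, qf_one, dist_eq_norm]
    rw [mul_lt_mul_left_of_neg (by linarith), sq_lt_sq₀ (norm_nonneg _) hR.le]
  refine ⟨fun x => posCube (g x), contDiff_posCube.comp cg, fun x => posCube_nonneg _,
    fun x => ?_, fun x => posCube_pos_iff.trans (gpos x), fun x hx1 hx2 => ?_⟩
  · exact pow_le_one₀ (by positivity) (max_le (g1 x) zero_le_one)
  have hgx := (gpos x).2 hx2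
  have hxR : ‖x‖ ≤ ‖x₁‖ + R := by
    rw [dist_eq_norm] at hx2
    have := norm_sub_norm_le x x₁
    linarith
  rw [Lop_comp cg.contDiffAt contDiff_posCube.contDiffAt, deriv_deriv_posCube, deriv_posCube]
  have hΓ : 0 ≤ gradForm a g g x := gradForm_self_nonneg (hκ.psd x) g
  have hLg : Lop a b g x = γ * Real.exp (-γ * qf 1 x₁ x) *
      (γ * gradForm a (qf 1 x₁) (qf 1 x₁) x - Lop a b (qf 1 x₁) x) := by
    rw [hg, Lop_comp cu.contDiffAt cf.contDiffAt, (f2 _).deriv, (f1 _).deriv]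
    ring
  have hΓu : 4 * ρ ^ 2 ≤ κ * gradForm a (qf 1 x₁) (qf 1 x₁) x := by
    rw [gradForm_qf Matrix.isSymm_one Matrix.isSymm_one, opA_one_apply]
    have h1 := hκ.ell x hxR (x - x₁)
    rw [dist_eq_norm] at hx1
    have h2 : ρ ^ 2 ≤ ‖x - x₁‖ ^ 2 := by gcongr
    linarith
  have hmain : C₀ < γ * gradForm a (qf 1 x₁) (qf 1 x₁) x - Lop a b (qf 1 x₁) x := by
    have h1 := (abs_le.1 (hM x hxR)).2
    have h2 : M + C₀ + 1 ≤ γ * gradForm a (qf 1 x₁) (qf 1 x₁) x := by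
      have h3 : M + C₀ + 1 ≤ γ * (4 * ρ ^ 2 / κ) := by
        rw [hγ, add_mul]
        have : κ * (M + C₀ + 1) / (4 * ρ ^ 2) * (4 * ρ ^ 2 / κ) = M + C₀ + 1 := by
          field_simp
        rw [this]
        linarith [show 0 ≤ 1 * (4 * ρ ^ 2 / κ) by positivity]
      refine h3.trans ?_
      gcongr
      rw [div_le_iff₀ k0]
      linarith
    linarith
  have hE : g x ≤ Real.exp (-γ * qf 1 x₁ x) := by
    simp only [hg, hf]
    linarith [Real.exp_pos (-γ * R ^ 2)]
  have hLg' : C₀ * g x < Lop a b g x := by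
    rw [hLg]
    have e0 := Real.exp_pos (-γ * qf 1 x₁ x)
    calc C₀ * g x ≤ C₀ * Real.exp (-γ * qf 1 x₁ x) := by gcongr
      _ = 1 * Real.exp (-γ * qf 1 x₁ x) * C₀ := by ring
      _ ≤ γ * Real.exp (-γ * qf 1 x₁ x) * C₀ := by gcongr
      _ < _ := by gcongr
  simp only [posCube, max_eq_left hgx.le]
  have h1 : g x ^ 2 * (C₀ * g x) < g x ^ 2 * Lop a b g x := by gcongr
  have h2 : 0 ≤ g x ^ 2 * (C₀ * g x) := by positivity
  have h3 : 0 ≤ 6 * g x * gradForm a g g x := by positivity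
  nlinarith

end Bump

section Comparison

variable {d : ℕ} {a : Euc d → Matrix (Fin d) (Fin d) ℝ} {b : Euc d → Euc d}

/-- Positive global `C²` supersolutions of `𝓛φ + Uφ ≤ 0`. -/
structure IsSuper (a : Euc d → Matrix (Fin d) (Fin d) ℝ) (b : Euc d → Euc d) (U φ : Euc d → ℝ) :
    Prop where
  pos : ∀ x, 0 < φ x
  contDiff : ContDiff ℝ 2 φ
  le : ∀ x, Lop a b φ x + U x * φ x ≤ 0

theorem exists_max_ratio (ha : ∀ x, (a x).PosSemidef) {D : Set (Euc d)} (hD : IsCompact D)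
    (hne : D.Nonempty) {φ ψ : Euc d → ℝ} (hφ : ContinuousOn φ D) (hψ : ContinuousOn ψ D)
    (hpos : ∀ x ∈ D, 0 < φ x) :
    ∃ x ∈ D, ∃ T, ψ x = T * φ x ∧ (∀ y ∈ D, ψ y ≤ T * φ y) ∧
      ∀ c : ℝ, D ∈ 𝓝 x → ContDiffAt ℝ 2 φ x → ContDiffAt ℝ 2 ψ x → 0 ≤ T →
        Lop a b φ x ≤ c * φ x → Lop a b ψ x ≤ c * ψ x := by
  obtain ⟨x, hx, hmax⟩ := hD.exists_isMaxOn hne (hψ.div hφ fun y hy => (hpos y hy).ne')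
  have hT : ∀ y ∈ D, ψ y ≤ ψ x / φ x * φ y := fun y hy => by
    rw [← div_le_iff₀ (hpos y hy)]
    exact hmax hy
  refine ⟨x, hx, ψ x / φ x, ?_, hT, fun c hn cφ cψ h0 hle => ?_⟩
  · rw [div_mul_cancel₀ _ (hpos x hx).ne']
  · have hmul : ψ x / φ x * φ x = ψ x := div_mul_cancel₀ _ (hpos x hx).ne'
    have hmin : IsLocalMin (fun y => ψ x / φ x * φ y - ψ y) x := by
      filter_upwards [hn] with y hy
      rw [hmul, sub_self, sub_nonneg]
      exact hT y hy
    have h1 := hmin.Lop_nonneg (b := b) (ha x) ((contDiffAt_const.mul cφ).sub cψ)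
    rw [Lop_sub (contDiffAt_const.mul cφ) cψ, Lop_const_mul cφ] at h1
    have h2 : ψ x / φ x * Lop a b φ x ≤ ψ x / φ x * (c * φ x) := by gcongr
    have h3 : ψ x / φ x * (c * φ x) = c * ψ x := by rw [mul_left_comm, hmul]
    linarith

theorem le_of_strict_subsolution (ha : ∀ x, (a x).PosSemidef) {D : Set (Euc d)}
    (hD : IsCompact D) {φ ψ : Euc d → ℝ} (hφ : ContinuousOn φ D) (hψ : ContinuousOn ψ D)
    (hpos : ∀ x ∈ D, 0 < φ x) (c : ℝ)
    (h : ∀ x ∈ D, φ x < ψ x → D ∈ 𝓝 x ∧ ContDiffAt ℝ 2 φ x ∧ ContDiffAt ℝ 2 ψ x ∧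
      Lop a b φ x ≤ c * φ x ∧ c * ψ x < Lop a b ψ x) :
    ∀ x ∈ D, ψ x ≤ φ x := by
  intro y hy
  obtain ⟨x, hx, T, hT, hmax, hc⟩ :=
    exists_max_ratio (b := b) ha hD ⟨y, hy⟩ hφ hψ hpos
  by_cases hT1 : T ≤ 1
  · have := hpos y hy
    nlinarith [hmax y hy]
  · push Not at hT1
    have h0 := hpos x hx
    obtain ⟨h1, h2, h3, h4, h5⟩ := h x hx (by nlinarith)
    exact absurd (hc c h1 h2 h3 (by linarith) h4) (not_le.2 h5)

theorem StandingB.psd (h : StandingB a b) (x : Euc d) : (a x).PosSemidef := (h.posdef x).posSemidef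

/-- Supersolutions are bounded below by a multiple of a Hopf bump. -/
theorem bump_le (h : StandingB a b) {x₁ : Euc d} {ρ R c m : ℝ} {ζ φ : Euc d → ℝ}
    (hζ : ContDiff ℝ 2 ζ) (hζ1 : ∀ x, ζ x ≤ 1)
    (hζpos : ∀ x, 0 < ζ x ↔ dist x x₁ < R)
    (hLζ : ∀ x, ρ < dist x x₁ → dist x x₁ < R → c * ζ x < Lop a b ζ x)
    (hφ : ContDiff ℝ 2 φ) (hφpos : ∀ x, 0 < φ x)
    (hLφ : ∀ x, dist x x₁ < R → Lop a b φ x ≤ c * φ x) (hm : 0 < m)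
    (hmφ : ∀ x ∈ closedBall x₁ ρ, m ≤ φ x) (x : Euc d) (hx : dist x x₁ ≤ R) :
    m * ζ x ≤ φ x := by
  refine le_of_strict_subsolution (ψ := fun x => m * ζ x) (b := b) h.psd
    (isCompact_closedBall x₁ R) hφ.continuous.continuousOn
    (hζ.continuous.const_mul m).continuousOn (fun x _ => hφpos x) c (fun y hy hlt => ?_) x hx
  have hζy : 0 < ζ y := by
    by_contra! hle
    nlinarith [hφpos y]
  have hyR := (hζpos y).1 hζy
  refine ⟨mem_of_superset (isOpen_ball.mem_nhds hyR) ball_subset_closedBall, hφ.contDiffAt,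
    (hζ.const_smul m).contDiffAt, hLφ y hyR, ?_⟩
  rw [Lop_const_mul hζ.contDiffAt]
  have hρ : ρ < dist y x₁ := by
    by_contra! hle
    have := hmφ y hle
    nlinarith [hζ1 y]
  nlinarith [hLζ y hρ hyR]

theorem mem_supersolutions_iff {W : Euc d → ℝ} {lam : ℝ} :
    lam ∈ supersolutions a b W univ ↔ ∃ φ, IsSuper a b (fun x => W x - lam) φ := by
  constructor
  · rintro ⟨φ, h1, h2, h3⟩
    exact ⟨φ, fun x => h1 x (mem_univ x), contDiffOn_univ.1 h2, fun x => by
      linarith [h3 x (mem_univ x)]⟩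
  · rintro ⟨φ, h1, h2, h3⟩
    exact ⟨φ, fun x _ => h1 x, h2.contDiffOn, fun x _ => by linarith [h3 x]⟩

/-- Raising the potential by `δ` on a ball raises the eigenvalue at least linearly. -/
theorem StandingB.exists_le_of_mem_supersolutions (h : StandingB a b) {z : Euc d} {r : ℝ}
    (hr : 0 < r) {W : Euc d → ℝ} {C : ℝ} (hW : ∀ x ∈ ball z r, -C ≤ W x) :
    ∃ M, ∀ δ lam, lam ∈ supersolutions a b
      (fun x => W x + (ball z r).indicator (fun _ => δ) x) univ → δ - M ≤ lam := by
  obtain ⟨ζ, hζ, hζ0, hζ1, hζpos, hLζ⟩ :=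
    h.exists_bump z (half_pos hr) hr (le_refl (0 : ℝ))
  obtain ⟨κ, hκ⟩ := h.exists_coeffBound (R := ‖z‖ + r) (by positivity)
  obtain ⟨M, hM0, hM⟩ := hκ.exists_abs_Lop_le hζ
  obtain ⟨y, hy, hmin⟩ := (isCompact_closedBall z (r / 2)).exists_isMinOn
    ⟨z, mem_closedBall_self (by positivity)⟩ hζ.continuous.continuousOn
  have hζy : 0 < ζ y := (hζpos y).2 (lt_of_le_of_lt hy (by linarith))
  have hlow : ∀ x, dist x z < r → -(M / ζ y) * ζ x ≤ Lop a b ζ x := fun x hx => by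
    by_cases hx2 : r / 2 < dist x z
    · have h1 := hLζ x hx2 hx
      have h2 : 0 ≤ M / ζ y * ζ x := mul_nonneg (by positivity) (hζ0 x)
      linarith
    · push Not at hx2
      have hxn : ‖x‖ ≤ ‖z‖ + r := by
        rw [dist_eq_norm] at hx
        linarith [norm_sub_norm_le x z]
      have h1 := (abs_le.1 (hM x hxn)).1
      have h2 : ζ y ≤ ζ x := hmin hx2
      have h3 : M / ζ y * ζ y ≤ M / ζ y * ζ x := by gcongr
      rw [div_mul_cancel₀ _ hζy.ne'] at h3
      linarith
  refine ⟨C + M / ζ y, fun δ lam hlam => ?_⟩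
  obtain ⟨φ, hφ⟩ := mem_supersolutions_iff.1 hlam
  obtain ⟨x, hx, T, hT, hmax, hc⟩ := exists_max_ratio (b := b) h.psd
    (isCompact_closedBall z r) ⟨z, mem_closedBall_self hr.le⟩ hφ.contDiff.continuous.continuousOn
    hζ.continuous.continuousOn (fun x _ => hφ.pos x)
  have hTpos : 0 < T := by
    have h1 := hmax y (closedBall_subset_closedBall (by linarith) hy)
    have h2 := hφ.pos y
    by_contra! hle
    nlinarith
  have hζx : 0 < ζ x := by rw [hT]; exact mul_pos hTpos (hφ.pos x)
  have hxr := (hζpos x).1 hζx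
  have hxb : x ∈ ball z r := hxr
  have h1 := hc (C + lam - δ) (mem_of_superset (isOpen_ball.mem_nhds hxb) ball_subset_closedBall)
    hφ.contDiff.contDiffAt hζ.contDiffAt hTpos.le (by
      have h2 := hφ.le x
      simp only [indicator_of_mem hxb] at h2
      nlinarith [hφ.pos x, hW x hxb])
  have h2 := hlow x hxr
  have h3 : -(M / ζ y) * ζ x ≤ (C + lam - δ) * ζ x := h2.trans h1
  have := le_of_mul_le_mul_right h3 hζx
  linarith

end Comparison

section Glue

variable {d : ℕ} {a : Euc d → Matrix (Fin d) (Fin d) ℝ} {b : Euc d → Euc d}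

/-- A `C²` concave truncation, equal to `1` on `[2, ∞)`. -/
def trunc (t : ℝ) : ℝ := 1 - posCube (1 - t / 2)

/-- The slope of `trunc`. -/
def truncSlope (t : ℝ) : ℝ := 3 / 2 * max (1 - t / 2) 0 ^ 2

theorem contDiff_trunc : ContDiff ℝ 2 trunc :=
  contDiff_const.sub (contDiff_posCube.comp (by fun_prop))

theorem truncSlope_nonneg (t : ℝ) : 0 ≤ truncSlope t := by unfold truncSlope; positivity

theorem trunc_le_one (t : ℝ) : trunc t ≤ 1 := by linarith [posCube_nonneg (1 - t / 2), trunc.eq_1 t]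

theorem trunc_of_two_le {t : ℝ} (ht : 2 ≤ t) : trunc t = 1 := by
  rw [trunc, posCube, max_eq_right (by linarith)]; norm_num

theorem trunc_le_tangent (t s : ℝ) : trunc s ≤ trunc t + truncSlope t * (s - t) := by
  simp only [trunc, truncSlope, posCube]
  have h0 : 0 ≤ max (1 - t / 2) 0 := le_max_right _ _
  have h1 : 0 ≤ max (1 - s / 2) 0 := le_max_right _ _
  have h2 : 1 - s / 2 ≤ max (1 - s / 2) 0 := le_max_left _ _
  have h3 : max (1 - t / 2) 0 ^ 2 * (max (1 - t / 2) 0 - (1 - t / 2)) = 0 := by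
    rcases le_total (1 - t / 2) 0 with h | h <;> simp [h]
  set p := max (1 - t / 2) 0
  set q := max (1 - s / 2) 0
  have h4 : p ^ 2 * (1 - s / 2) ≤ p ^ 2 * q := by gcongr
  nlinarith [mul_nonneg (add_nonneg (mul_nonneg zero_le_two h0) h1) (sq_nonneg (q - p))]

theorem trunc_zero : trunc 0 = 0 := by simp [trunc, posCube]

theorem mul_truncSlope_le (t : ℝ) : t * truncSlope t ≤ trunc t := by
  have := trunc_le_tangent t 0
  rw [trunc_zero] at this
  linarith

theorem trunc_le_mul (t : ℝ) : trunc t ≤ 3 / 2 * t := by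
  have := trunc_le_tangent 0 t
  rw [trunc_zero] at this
  simpa [truncSlope] using this

theorem trunc_pos {t : ℝ} (ht : 0 < t) : 0 < trunc t := by
  have : max (1 - t / 2) 0 < 1 := max_lt (by linarith) one_pos
  have := pow_lt_one₀ (le_max_right _ _) this (three_ne_zero)
  simp only [trunc, posCube]
  linarith

theorem IsSuper.exists_glue (ha : ∀ x, (a x).PosSemidef) {U φ ψ σ : Euc d → ℝ}
    (hφ : IsSuper a b U φ) (hσ : Continuous σ) {c₁ c₂ : ℝ} (hc : c₁ < c₂)
    (hψ : ∀ x, c₁ < σ x → ContDiffAt ℝ 2 ψ x ∧ 0 < ψ x ∧ Lop a b ψ x + U x * ψ x ≤ 0)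
    (hband : ∀ x, c₁ < σ x → σ x ≤ c₂ → 2 * φ x ≤ ψ x) :
    ∃ φ', IsSuper a b U φ' ∧ (∀ x, φ' x ≤ φ x) ∧ (∀ x, σ x ≤ c₂ → φ' x = φ x) ∧
      ∀ x, c₁ < σ x → φ' x ≤ 3 / 2 * ψ x := by
  classical
  set g : Euc d → ℝ := fun x => φ x * trunc (ψ x / φ x) with hg
  set φ' : Euc d → ℝ := fun x => if c₁ < σ x then g x else φ x with hφ'
  have hin : ∀ x, c₁ < σ x → φ' x = g x := fun x hx => by simp [hφ', hx]
  have hout : ∀ x, σ x ≤ c₂ → φ' x = φ x := fun x hx => by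
    by_cases h : c₁ < σ x
    · rw [hin x h, hg]
      simp only
      rw [trunc_of_two_le, mul_one]
      rw [le_div_iff₀ (hφ.pos x)]
      exact hband x h hx
    · simp [hφ', h]
  have ein : ∀ x, c₁ < σ x → φ' =ᶠ[𝓝 x] g := fun x hx => by
    filter_upwards [(isOpen_lt continuous_const hσ).mem_nhds hx] with y hy using hin y hy
  have eout : ∀ x, σ x < c₂ → φ' =ᶠ[𝓝 x] φ := fun x hx => by
    filter_upwards [(isOpen_lt hσ continuous_const).mem_nhds hx] with y hy using hout y hy.le
  have cg : ∀ x, c₁ < σ x → ContDiffAt ℝ 2 g x := fun x hx =>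
    hφ.contDiff.contDiffAt.mul (contDiff_trunc.contDiffAt.comp x
      ((hψ x hx).1.div hφ.contDiff.contDiffAt (hφ.pos x).ne'))
  have hcases : ∀ x, c₁ < σ x ∨ σ x < c₂ := fun x => by
    by_contra! h
    linarith
  refine ⟨φ', ⟨fun x => ?_, contDiff_iff_contDiffAt.2 fun x => ?_, fun x => ?_⟩, fun x => ?_,
    hout, fun x hx => ?_⟩
  · rcases hcases x with h | h
    · rw [hin x h]
      exact mul_pos (hφ.pos x) (trunc_pos (div_pos (hψ x h).2.1 (hφ.pos x)))
    · rw [hout x h.le]; exact hφ.pos x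
  · rcases hcases x with h | h
    · exact (cg x h).congr_of_eventuallyEq (ein x h)
    · exact hφ.contDiff.contDiffAt.congr_of_eventuallyEq (eout x h)
  · rcases hcases x with h | h
    · obtain ⟨cψ, ψpos, ψle⟩ := hψ x h
      set t := ψ x / φ x with ht
      have htx : t * φ x = ψ x := div_mul_cancel₀ _ (hφ.pos x).ne'
      have cφ := hφ.contDiff.contDiffAt (x := x)
      have c1 : ContDiffAt ℝ 2 (fun y => truncSlope t * ψ y) x := contDiffAt_const.mul cψ
      have c2 : ContDiffAt ℝ 2 (fun y => (trunc t - t * truncSlope t) * φ y) x :=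
        contDiffAt_const.mul cφ
      have hval : truncSlope t * ψ x + (trunc t - t * truncSlope t) * φ x = g x := by
        simp only [hg]
        rw [← ht, ← htx]
        ring
      have hmin : IsLocalMin (fun y => (truncSlope t * ψ y +
          (trunc t - t * truncSlope t) * φ y) - g y) x := by
        filter_upwards with y
        rw [hval, sub_self, sub_nonneg]
        have h1 := mul_le_mul_of_nonneg_left (trunc_le_tangent t (ψ y / φ y)) (hφ.pos y).le
        refine h1.trans_eq ?_
        have := (hφ.pos y).ne'
        field_simp
        ring
      have h1 := hmin.Lop_nonneg (b := b) (ha x) ((c1.add c2).sub (cg x h))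
      rw [Lop_sub (c1.add c2) (cg x h), Lop_add c1 c2, Lop_const_mul cψ, Lop_const_mul cφ] at h1
      rw [Lop_congr (ein x h), hin x h]
      have h2 := mul_nonpos_of_nonneg_of_nonpos (truncSlope_nonneg t) ψle
      have h3 := mul_nonpos_of_nonneg_of_nonpos (sub_nonneg.2 (mul_truncSlope_le t)) (hφ.le x)
      have h4 : U x * g x = U x * (truncSlope t * ψ x + (trunc t - t * truncSlope t) * φ x) := by
        rw [hval]
      rw [h4]
      linarith
    · rw [Lop_congr (eout x h), hout x h.le]
      exact hφ.le x
  · rcases hcases x with h | h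
    · rw [hin x h]
      have := mul_le_mul_of_nonneg_left (trunc_le_one (ψ x / φ x)) (hφ.pos x).le
      simpa [hg] using this
    · exact (hout x h.le).le
  · rw [hin x hx]
    have h1 := mul_le_mul_of_nonneg_left (trunc_le_mul (ψ x / φ x)) (hφ.pos x).le
    refine h1.trans_eq ?_
    have := (hφ.pos x).ne'
    field_simp

end Glue

section Nets

variable {E : Type*} [PseudoMetricSpace E]

theorem IsCompact.exists_card_le_of_separated {S : Set E} (hS : IsCompact S) {ε : ℝ}
    (hε : 0 < ε) : ∃ M : ℕ, ∀ Y : Finset E, (↑Y ⊆ S) →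
      (∀ y ∈ Y, ∀ z ∈ Y, dist y z < ε → y = z) → Y.card ≤ M := by
  classical
  obtain ⟨t, -, htf, hcov⟩ := hS.finite_cover_balls (half_pos hε)
  refine ⟨htf.toFinset.card, fun Y hY hsep => ?_⟩
  have hex : ∀ y ∈ Y, ∃ z ∈ t, dist y z < ε / 2 := fun y hy => by
    simpa using hcov (hY hy)
  choose! f hf hfd using hex
  refine Finset.card_le_card_of_injOn f (fun y hy => by simpa using hf y hy) ?_
  intro y hy z hz hyz
  refine hsep y hy z hz ?_
  have h1 := hfd y hy
  have h2 := hfd z hz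
  rw [← hyz] at h2
  linarith [dist_triangle_right y z (f y)]

theorem IsCompact.exists_net {S : Set E} (hS : IsCompact S) {ε : ℝ} (hε : 0 < ε) :
    ∃ Y : Finset E, ↑Y ⊆ S ∧ (∀ y ∈ Y, ∀ z ∈ Y, dist y z < ε → y = z) ∧
      ∀ s ∈ S, ∃ y ∈ Y, dist s y < ε := by
  classical
  obtain ⟨M, hM⟩ := hS.exists_card_le_of_separated hε
  set A : Set ℕ := {n | ∃ Y : Finset E, ↑Y ⊆ S ∧
    (∀ y ∈ Y, ∀ z ∈ Y, dist y z < ε → y = z) ∧ Y.card = n} with hA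
  have hbdd : BddAbove A := ⟨M, by rintro n ⟨Y, h1, h2, rfl⟩; exact hM Y h1 h2⟩
  obtain ⟨Y, hY, hsep, hcard⟩ := Nat.sSup_mem (s := A) ⟨0, ∅, by simp⟩ hbdd
  refine ⟨Y, hY, hsep, fun s hs => ?_⟩
  by_contra! hfar
  have hsY : s ∉ Y := fun h => by
    have := hfar s h
    rw [dist_self] at this
    linarith
  have hmem : Y.card + 1 ∈ A := by
    refine ⟨insert s Y, ?_, ?_, Finset.card_insert_of_notMem hsY⟩
    · rw [Finset.coe_insert]
      exact insert_subset hs hY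
    · intro y hy z hz hyz
      rw [Finset.mem_insert] at hy hz
      rcases hy with rfl | hy <;> rcases hz with rfl | hz
      · rfl
      · exact absurd hyz (not_lt.2 (hfar z hz))
      · rw [dist_comm] at hyz
        exact absurd hyz (not_lt.2 (hfar y hy))
      · exact hsep y hy z hz hyz
  have := le_csSup hbdd hmem
  omega

theorem exists_card_near_le (E : Type*) [NormedAddCommGroup E] [NormedSpace ℝ E] [ProperSpace E]
    (N : ℝ) : ∃ M : ℕ, ∀ η > 0, ∀ (x : E) (Y : Finset E),
      (∀ y ∈ Y, ∀ z ∈ Y, dist y z < η → y = z) → (∀ y ∈ Y, dist x y ≤ N * η) → Y.card ≤ M := by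
  classical
  obtain ⟨M, hM⟩ := (isCompact_closedBall (0 : E) N).exists_card_le_of_separated one_pos
  refine ⟨M, fun η hη x Y hsep hnear => ?_⟩
  have hinj : Function.Injective fun y : E => η⁻¹ • (y - x) := fun y z h => by
    simpa [hη.ne'] using h
  rw [← Finset.card_image_of_injective Y hinj]
  refine hM _ ?_ ?_
  · intro w hw
    simp only [Finset.coe_image, mem_image, Finset.mem_coe] at hw
    obtain ⟨y, hy, rfl⟩ := hw
    have := hnear y hy
    rw [dist_comm, dist_eq_norm] at this
    rw [mem_closedBall_zero_iff, norm_smul, norm_inv, Real.norm_of_nonneg hη.le,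
      inv_mul_le_iff₀ hη]
    linarith
  · simp only [Finset.mem_image]
    rintro _ ⟨y, hy, rfl⟩ _ ⟨z, hz, rfl⟩ h
    rw [dist_eq_norm, ← smul_sub, norm_smul, norm_inv, Real.norm_of_nonneg hη.le,
      inv_mul_lt_iff₀ hη, sub_sub_sub_cancel_right, ← dist_eq_norm, mul_one] at h
    rw [hsep y hy z hz h]

theorem IsCompact.exists_le_two_mul {X : Type*} [PseudoMetricSpace X] {S : Set X}
    (hS : IsCompact S) {φ : X → ℝ} (hφ : ContinuousOn φ S) (hpos : ∀ x ∈ S, 0 < φ x) :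
    ∃ δ > 0, ∀ x ∈ S, ∀ y ∈ S, dist x y < δ → φ x ≤ 2 * φ y := by
  rcases S.eq_empty_or_nonempty with rfl | hne
  · exact ⟨1, one_pos, by simp⟩
  obtain ⟨z, hz, hmin⟩ := hS.exists_isMinOn hne hφ
  have huc := hS.uniformContinuousOn_of_continuous hφ
  rw [Metric.uniformContinuousOn_iff] at huc
  obtain ⟨δ, hδ, h⟩ := huc (φ z) (hpos z hz)
  refine ⟨δ, hδ, fun x hx y hy hxy => ?_⟩
  have h1 := h x hx y hy hxy
  rw [Real.dist_eq] at h1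
  have h2 : φ z ≤ φ y := hmin hy
  linarith [(abs_lt.1 h1).2]

end Nets

section Ellipsoid

variable {d : ℕ} {a : Euc d → Matrix (Fin d) (Fin d) ℝ} {b : Euc d → Euc d}
  {R κ r η C₀ : ℝ} {p : Euc d}

/-- The constant in the pole estimates. -/
def poleConst (d : ℕ) (κ : ℝ) : ℝ := 8 * ((d : ℝ) ^ 2 + 1) * κ ^ 6

theorem one_le_poleConst (hκ : 1 ≤ κ) : 1 ≤ poleConst d κ := by
  have h1 : 1 ≤ κ ^ 6 := one_le_pow₀ hκ
  have h2 : (0 : ℝ) ≤ (d : ℝ) ^ 2 := by positivity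
  unfold poleConst
  nlinarith

/-- The normalized Poisson-type profile at scale `η`. -/
def prof (a : Euc d → Matrix (Fin d) (Fin d) ℝ) (p : Euc d) (r η : ℝ) (y x : Euc d) : ℝ :=
  sig a p r x / η * (η / √(qf (a y)⁻¹ y x)) ^ d

/-- Super- and subsolutions comparable to the profiles `prof`. -/
structure KernelFam (a : Euc d → Matrix (Fin d) (Fin d) ℝ) (b : Euc d → Euc d) (p : Euc d)
    (r C₀ η : ℝ) (F G : Euc d → Euc d → ℝ) : Prop where
  contF : ∀ y x, sig a p r y = 0 → 0 < sig a p r x → ContDiffAt ℝ 2 (F y) x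
  contG : ∀ y x, sig a p r y = 0 → 0 < sig a p r x → ContDiffAt ℝ 2 (G y) x
  le_F : ∀ y x, sig a p r y = 0 → 0 < sig a p r x → prof a p r η y x / 2 ≤ F y x
  F_le : ∀ y x, sig a p r y = 0 → 0 < sig a p r x → F y x ≤ 2 * prof a p r η y x
  le_G : ∀ y x, sig a p r y = 0 → 0 < sig a p r x → prof a p r η y x / 2 ≤ G y x
  G_le : ∀ y x, sig a p r y = 0 → 0 < sig a p r x → G y x ≤ 2 * prof a p r η y x
  LF : ∀ y x, sig a p r y = 0 → 0 < sig a p r x → Lop a b (F y) x + C₀ * F y x ≤ 0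
  LG : ∀ y x, sig a p r y = 0 → 0 < sig a p r x → C₀ * G y x < Lop a b (G y) x

theorem rpow_neg_half {t : ℝ} (ht : 0 < t) (d : ℕ) : t ^ (-(d : ℝ) / 2) = (√t ^ d)⁻¹ := by
  rw [Real.sqrt_eq_rpow, ← Real.rpow_natCast, ← Real.rpow_mul ht.le, ← Real.rpow_neg ht.le]
  congr 1
  ring

theorem contDiff_sig : ContDiff ℝ 2 (sig a p r) := contDiff_const.sub (contDiff_qf _ _)

theorem CoeffBound.norm_le_of_sig (hκ : CoeffBound a b R κ) (hr : 0 < r) (hp : ‖p‖ + κ * r ≤ R)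
    {x : Euc d} (hx : 0 ≤ sig a p r x) : ‖x‖ ≤ R := by
  have k0 := hκ.one_le
  have hpR : ‖p‖ ≤ R := by nlinarith
  have h1 := hκ.norm_le_of_qf_le hpR hr.le (p := p) (x := x) (by simp only [sig] at hx; linarith)
  linarith [norm_sub_norm_le x p]

theorem CoeffBound.exists_kernelFam (hd : 1 ≤ d) (hκ : CoeffBound a b R κ) (hC₀ : 0 ≤ C₀) :
    ∃ r₀ > 0, ∀ r, 0 < r → r ≤ r₀ → ∀ p, ‖p‖ + κ * r ≤ R → ∀ η > 0,
      ∃ F G, KernelFam a b p r C₀ η F G := by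
  have k0 := hκ.one_le
  obtain ⟨r₀, hr₀, hker⟩ := exists_kernel (a := a) (b := b) hd
    (one_le_poleConst (d := d) k0) hC₀
  refine ⟨r₀, hr₀, fun r hr hrr p hp η hη => ?_⟩
  choose F G hFG using fun y : Euc d => hker r hr hrr (sig a p r) (qf (a y)⁻¹ y)
  set w := η ^ d / η with hw
  have hw0 : 0 < w := by positivity
  have hpR : ‖p‖ ≤ R := by nlinarith
  have key : ∀ y x, sig a p r y = 0 → 0 < sig a p r x → _ := fun y x hy hx =>
    hFG y x hx (hκ.poleEst hr hpR (hκ.norm_le_of_sig hr hp hy.ge)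
      (hκ.norm_le_of_sig hr hp hx.le) hy hx) (hκ.symm x) contDiff_sig.contDiffAt
      (contDiff_qf _ _).contDiffAt
  have hprof : ∀ y x, sig a p r y = 0 → 0 < sig a p r x → prof a p r η y x =
      w * (sig a p r x * qf (a y)⁻¹ y x ^ (-(d : ℝ) / 2)) := fun y x hy hx => by
    have ht := (hκ.poleEst hr hpR (hκ.norm_le_of_sig hr hp hy.ge)
      (hκ.norm_le_of_sig hr hp hx.le) hy hx).tau_pos
    rw [rpow_neg_half ht, prof, hw, div_pow]
    ring
  refine ⟨fun y x => w * F y x, fun y x => w * G y x, ⟨?_, ?_, ?_, ?_, ?_, ?_, ?_, ?_⟩⟩ <;>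
    intro y x hy hx <;> obtain ⟨c1, c2, ⟨h1, h2⟩, ⟨h3, h4⟩, h5, h6⟩ := key y x hy hx
  · exact contDiffAt_const.mul c1
  · exact contDiffAt_const.mul c2
  · rw [hprof y x hy hx]; linarith [mul_le_mul_of_nonneg_left h1 hw0.le]
  · rw [hprof y x hy hx]; linarith [mul_le_mul_of_nonneg_left h2 hw0.le]
  · rw [hprof y x hy hx]; linarith [mul_le_mul_of_nonneg_left h3 hw0.le]
  · rw [hprof y x hy hx]; linarith [mul_le_mul_of_nonneg_left h4 hw0.le]
  · rw [Lop_const_mul c1]; linarith [mul_nonpos_of_nonneg_of_nonpos hw0.le h5]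
  · rw [Lop_const_mul c2]; linarith [mul_lt_mul_of_pos_left h6 hw0]

/-- Radial motion in the ellipsoid. -/
theorem CoeffBound.exists_radial (hκ : CoeffBound a b R κ) (hr : 0 < r) (hp : ‖p‖ ≤ R)
    {x : Euc d} (hx0 : 0 ≤ sig a p r x) (hx : sig a p r x ≤ 3 / 4 * r ^ 2) {s : ℝ}
    (hs : s ≤ r ^ 2) :
    ∃ x', sig a p r x' = s ∧ ‖x - x'‖ ≤ 4 * κ * |s - sig a p r x| / r := by
  have k0 := hκ.one_le
  set q := qf (a p)⁻¹ p x with hq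
  have hsig : sig a p r x = r ^ 2 - q := rfl
  have hq4 : r ^ 2 / 4 ≤ q := by linarith
  have hq0 : 0 < q := by have := pow_pos hr 2; linarith
  set c := √((r ^ 2 - s) / q) with hc
  have hu0 : 0 ≤ (r ^ 2 - s) / q := div_nonneg (by linarith) hq0.le
  have hcc : c ^ 2 = (r ^ 2 - s) / q := Real.sq_sqrt hu0
  have hc0 : 0 ≤ c := Real.sqrt_nonneg _
  have hxp : ‖x - p‖ ≤ κ * r := hκ.norm_le_of_qf_le hp hr.le (by linarith)
  refine ⟨p + c • (x - p), ?_, ?_⟩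
  · have : qf (a p)⁻¹ p (p + c • (x - p)) = c ^ 2 * q := by
      simp only [hq, qf, add_sub_cancel_left, map_smul, inner_smul_left, inner_smul_right]
      simp; ring
    rw [sig, this, hcc, div_mul_cancel₀ _ hq0.ne']
    ring
  · have h1 : x - (p + c • (x - p)) = (1 - c) • (x - p) := by
      rw [sub_smul, one_smul]; abel
    rw [h1, norm_smul, Real.norm_eq_abs]
    have h2 : |1 - c| ≤ |s - sig a p r x| / q := by
      have h3 : |1 - c| * 1 ≤ |1 - c| * |1 + c| := by
        gcongr
        rw [abs_of_nonneg (by linarith)]; linarith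
      rw [← abs_mul, show (1 - c) * (1 + c) = 1 - c ^ 2 by ring, hcc] at h3
      rw [← abs_of_pos hq0, ← abs_div]
      refine (mul_one _).symm.le.trans (h3.trans_eq ?_)
      congr 1
      rw [hsig]
      field_simp
      ring
    calc |1 - c| * ‖x - p‖ ≤ (|s - sig a p r x| / q) * (κ * r) := by gcongr
      _ ≤ (|s - sig a p r x| / (r ^ 2 / 4)) * (κ * r) := by gcongr
      _ = _ := by field_simp

end Ellipsoid

section Core

variable {d : ℕ} {a : Euc d → Matrix (Fin d) (Fin d) ℝ} {b : Euc d → Euc d}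
  {R κ r η C₀ : ℝ} {p : Euc d} {F G : Euc d → Euc d → ℝ}

/-- The factor by which boundary points are pushed inwards. -/
def pushConst (d : ℕ) (κ : ℝ) : ℝ := 16 * (2 * κ ^ 2) ^ d

theorem le_pushConst (hκ : 1 ≤ κ) : 16 ≤ pushConst d κ := by
  have h1 : 1 ≤ κ ^ 2 := one_le_pow₀ hκ
  have h2 : 1 ≤ (2 * κ ^ 2) ^ d := one_le_pow₀ (by linarith)
  unfold pushConst
  linarith

/-- Hypotheses placing the ellipsoid of size `r` around `p` in the region of uniform bounds. -/
structure EllSetup (a : Euc d → Matrix (Fin d) (Fin d) ℝ) (b : Euc d → Euc d) (R κ : ℝ)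
    (p : Euc d) (r η : ℝ) : Prop where
  coeff : CoeffBound a b R κ
  r_pos : 0 < r
  p_le : ‖p‖ + κ * r ≤ R
  eta_pos : 0 < η
  eta_le : pushConst d κ * η ≤ r / 2

namespace EllSetup

theorem κ_pos (S : EllSetup a b R κ p r η) : 0 < κ := by linarith [S.coeff.one_le]

theorem norm_p_le (S : EllSetup a b R κ p r η) : ‖p‖ ≤ R := by
  nlinarith [S.p_le, S.κ_pos, S.r_pos]

theorem norm_le (S : EllSetup a b R κ p r η) {x : Euc d} (hx : 0 ≤ sig a p r x) : ‖x‖ ≤ R :=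
  S.coeff.norm_le_of_sig S.r_pos S.p_le hx

theorem poleEst (S : EllSetup a b R κ p r η) {x y : Euc d} (hy : sig a p r y = 0)
    (hx : 0 < sig a p r x) :
    PoleEst a b (poleConst d κ) r (sig a p r) (qf (a y)⁻¹ y) x :=
  S.coeff.poleEst S.r_pos S.norm_p_le (S.norm_le hy.ge) (S.norm_le hx.le) hy hx

theorem sqrt_pos (S : EllSetup a b R κ p r η) {x y : Euc d} (hy : sig a p r y = 0)
    (hx : 0 < sig a p r x) : 0 < √(qf (a y)⁻¹ y x) :=
  Real.sqrt_pos.2 (S.poleEst hy hx).tau_pos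

theorem norm_sub_le (S : EllSetup a b R κ p r η) {x y : Euc d} (hy : sig a p r y = 0)
    (hx : 0 < sig a p r x) : ‖x - y‖ ≤ κ * √(qf (a y)⁻¹ y x) :=
  S.coeff.norm_le_of_qf_le (S.norm_le hy.ge) (Real.sqrt_nonneg _)
    (Real.sq_sqrt (S.poleEst hy hx).tau_pos.le).ge

theorem sqrt_le (S : EllSetup a b R κ p r η) {x y : Euc d} (hy : sig a p r y = 0) :
    √(qf (a y)⁻¹ y x) ≤ κ * ‖x - y‖ := by
  have k0 := S.coeff.one_le
  have k1 := S.κ_pos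
  rw [Real.sqrt_le_left (by positivity)]
  have h1 := S.coeff.qf_le (S.norm_le hy.ge) y x
  nlinarith [mul_nonneg (mul_nonneg k1.le (sub_nonneg.2 k0)) (sq_nonneg ‖x - y‖)]

theorem prof_pos (S : EllSetup a b R κ p r η) {x y : Euc d} (hy : sig a p r y = 0)
    (hx : 0 < sig a p r x) : 0 < prof a p r η y x := by
  have h1 := S.sqrt_pos hy hx
  have h2 := S.eta_pos
  unfold prof
  positivity

theorem eta_lt (S : EllSetup a b R κ p r η) : η * r ≤ r ^ 2 / 32 := by
  have h1 := S.eta_le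
  have h2 := le_pushConst (d := d) S.coeff.one_le
  have h3 := S.eta_pos
  have h4 := S.r_pos
  have h5 : 16 * η ≤ r / 2 := le_trans (by gcongr) h1
  nlinarith

theorem isCompact_sublevel (S : EllSetup a b R κ p r η) {c : ℝ} (hc : 0 ≤ c) :
    IsCompact {x | c ≤ sig a p r x} := by
  refine (isCompact_closedBall (0 : Euc d) R).of_isClosed_subset
    (isClosed_le continuous_const contDiff_sig.continuous) fun x hx => ?_
  rw [mem_closedBall_zero_iff]
  exact S.norm_le (hc.trans hx)

/-- The weighted sum of subsolution kernels is controlled by the supersolution. -/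
theorem sum_sub_le (S : EllSetup a b R κ p r η) (hF : KernelFam a b p r C₀ η F G)
    {Y : Finset (Euc d)} (hY : ∀ y ∈ Y, sig a p r y = 0) {M : ℕ}
    (hM : ∀ (x : Euc d) (Z : Finset (Euc d)), Z ⊆ Y →
      (∀ y ∈ Z, dist x y ≤ 4 * κ * pushConst d κ * η) → Z.card ≤ M)
    {φ : Euc d → ℝ} (hφ : ContDiff ℝ 2 φ) (hφpos : ∀ x, 0 < φ x)
    (hLφ : ∀ x, ‖x‖ ≤ R → Lop a b φ x ≤ C₀ * φ x)
    (hvar : ∀ x y, ‖x‖ ≤ R → ‖y‖ ≤ R → dist x y ≤ 4 * κ * pushConst d κ * η → φ x ≤ 2 * φ y)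
    {x : Euc d} (hx : η * r ≤ sig a p r x) :
    ∑ y ∈ Y, φ y * G y x ≤ 8 * M * r * poleConst d κ ^ d * φ x := by
  classical
  have hr := S.r_pos
  have hη := S.eta_pos
  have k1 := S.κ_pos
  have hK := one_le_poleConst (d := d) S.coeff.one_le
  set K := poleConst d κ
  set k := pushConst d κ with hk
  have hk16 : 16 ≤ k := le_pushConst S.coeff.one_le
  set D := {x | η * r ≤ sig a p r x} with hD
  have hηr : 0 < η * r := by positivity
  have hpos : ∀ z ∈ D, 0 < sig a p r z := fun z hz => hηr.trans_le hz
  set ψ : Euc d → ℝ := fun x => ∑ y ∈ Y, φ y * G y x with hψ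
  have cterm : ∀ z ∈ D, ∀ y ∈ Y, ContDiffAt ℝ 2 (fun x => φ y * G y x) z := fun z hz y hy =>
    contDiffAt_const.mul (hF.contG y z (hY y hy) (hpos z hz))
  have cψ : ∀ z ∈ D, ContDiffAt ℝ 2 ψ z := fun z hz => ContDiffAt.sum (cterm z hz)
  obtain ⟨z, hz, T, hT, hmax, hc⟩ := exists_max_ratio (b := b) S.coeff.psd
    (S.isCompact_sublevel hηr.le) ⟨x, hx⟩ hφ.continuous.continuousOn
    (fun z hz => (cψ z hz).continuousAt.continuousWithinAt) (fun z _ => hφpos z)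
  refine (hmax x hx).trans (mul_le_mul_of_nonneg_right ?_ (hφpos x).le)
  have hC0 : 0 ≤ 8 * M * r * K ^ d := by positivity
  by_contra! hlt
  have hT0 : 0 < T := hC0.trans_lt hlt
  have hψz : 0 < ψ z := by rw [hT]; exact mul_pos hT0 (hφpos z)
  have hYne : Y.Nonempty := by
    rw [Finset.nonempty_iff_ne_empty]
    rintro rfl
    simp [hψ] at hψz
  have hzσ : sig a p r z = η * r := by
    refine le_antisymm ?_ hz
    by_contra! hgt
    have h1 := hc C₀ (mem_of_superset ((isOpen_lt continuous_const
      contDiff_sig.continuous).mem_nhds hgt) fun w (hw : η * r < sig a p r w) =>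
        show η * r ≤ sig a p r w from hw.le) hφ.contDiffAt (cψ z hz)
      hT0.le (hLφ z (S.norm_le (hpos z hz).le))
    rw [hψ, Lop_sum Y (cterm z hz)] at h1
    refine absurd h1 (not_le.2 ?_)
    rw [Finset.mul_sum]
    refine Finset.sum_lt_sum_of_nonempty hYne fun y hy => ?_
    have cG := hF.contG y z (hY y hy) (hpos z hz)
    rw [Lop_const_mul cG]
    have := mul_lt_mul_of_pos_left (hF.LG y z (hY y hy) (hpos z hz)) (hφpos y)
    linarith
  -- push inwards
  have hsmall := S.eta_lt
  have hr2 : 0 < r ^ 2 := by positivity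
  have hkηr : k * η * r ≤ r / 2 * r := mul_le_mul_of_nonneg_right S.eta_le hr.le
  obtain ⟨w, hw, hzw⟩ := S.coeff.exists_radial hr S.norm_p_le (hpos z hz).le
    (x := z) (s := k * η * r) (by rw [hzσ]; linarith) (by nlinarith)
  have hzw' : ‖z - w‖ ≤ 4 * κ * k * η := by
    refine hzw.trans ?_
    rw [hzσ, show k * η * r - η * r = (k - 1) * η * r by ring,
      abs_of_nonneg (by have : 0 ≤ k - 1 := by linarith
                        positivity), div_le_iff₀ hr]
    have : 0 ≤ 4 * κ * η * r := by positivity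
    linarith
  have hwD : w ∈ D := by
    rw [hD, mem_ofPred_eq, hw, mul_assoc]
    nlinarith
  have hwφ : φ w ≤ 2 * φ z := hvar w z (S.norm_le (hpos w hwD).le) (S.norm_le (hpos z hz).le)
    (by rw [dist_comm, dist_eq_norm]; exact hzw')
  set near := Y.filter fun y => dist z y ≤ 4 * κ * k * η with hnear
  set far := Y.filter fun y => ¬ dist z y ≤ 4 * κ * k * η with hfar
  have hsplit : ψ z = ∑ y ∈ near, φ y * G y z + ∑ y ∈ far, φ y * G y z :=
    (Finset.sum_filter_add_sum_filter_not _ _ _).symm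
  have hnear_le : ∑ y ∈ near, φ y * G y z ≤ 4 * M * r * K ^ d * φ z := by
    have hterm : ∀ y ∈ near, φ y * G y z ≤ 4 * r * K ^ d * φ z := fun y hy => by
      rw [hnear, Finset.mem_filter] at hy
      have hy0 := hY y hy.1
      have h1 : φ y ≤ 2 * φ z := hvar y z (S.norm_le hy0.ge) (S.norm_le (hpos z hz).le)
        (by rw [dist_comm]; exact hy.2)
      have h2 := hF.G_le y z hy0 (hpos z hz)
      have hρ := S.sqrt_pos hy0 (hpos z hz)
      have h3 : η / √(qf (a y)⁻¹ y z) ≤ K := by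
        have h4 := (S.poleEst hy0 (hpos z hz)).sig_le
        rw [hzσ] at h4
        rw [div_le_iff₀ hρ]
        refine le_of_mul_le_mul_right (h4.trans_eq ?_) hr
        ring
      have h5 : prof a p r η y z ≤ r * K ^ d := by
        rw [prof, hzσ, mul_div_cancel_left₀ _ hη.ne']
        gcongr
      calc φ y * G y z ≤ φ y * (2 * (r * K ^ d)) := by
            refine mul_le_mul_of_nonneg_left ?_ (hφpos y).le
            linarith
        _ ≤ 2 * φ z * (2 * (r * K ^ d)) := by gcongr
        _ = _ := by ring
    refine (Finset.sum_le_card_nsmul _ _ _ hterm).trans ?_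
    rw [nsmul_eq_mul]
    have h6 : (near.card : ℝ) ≤ M := by
      exact_mod_cast hM z near (Finset.filter_subset _ _) fun y hy => (Finset.mem_filter.1 hy).2
    have h7 : 0 ≤ 4 * r * K ^ d * φ z := by have := hφpos z; positivity
    calc (near.card : ℝ) * (4 * r * K ^ d * φ z) ≤ M * (4 * r * K ^ d * φ z) := by gcongr
      _ = _ := by ring
  have hfar_le : ∑ y ∈ far, φ y * G y z ≤ 1 / 4 * ψ w := by
    have h0 : ∀ y ∈ Y, 0 ≤ φ y * G y w := fun y hy => by
      have h1 := S.prof_pos (hY y hy) (hpos w hwD)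
      have h2 := hF.le_G y w (hY y hy) (hpos w hwD)
      exact mul_nonneg (hφpos y).le (by linarith)
    have h1 : ∑ y ∈ far, φ y * G y w ≤ ψ w :=
      Finset.sum_le_sum_of_subset_of_nonneg (Finset.filter_subset _ _) fun y hy _ => h0 y hy
    refine le_trans ?_ (mul_le_mul_of_nonneg_left h1 (by norm_num))
    rw [Finset.mul_sum]
    refine Finset.sum_le_sum fun y hy => ?_
    rw [hfar, Finset.mem_filter] at hy
    obtain ⟨hyY, hyd⟩ := hy
    push Not at hyd
    have hy0 := hY y hyY
    have hρz := S.sqrt_pos hy0 (hpos z hz)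
    have hρw := S.sqrt_pos hy0 (hpos w hwD)
    have h2 : √(qf (a y)⁻¹ y w) ≤ 2 * κ ^ 2 * √(qf (a y)⁻¹ y z) := by
      have h3 : ‖w - y‖ ≤ 2 * ‖z - y‖ := by
        rw [dist_eq_norm] at hyd
        have h4 : ‖w - y‖ ≤ ‖z - w‖ + ‖z - y‖ := by
          rw [← dist_eq_norm, ← dist_eq_norm, ← dist_eq_norm, dist_comm z w]
          exact dist_triangle _ _ _
        linarith
      calc √(qf (a y)⁻¹ y w) ≤ κ * ‖w - y‖ := S.sqrt_le hy0
        _ ≤ κ * (2 * (κ * √(qf (a y)⁻¹ y z))) := by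
            gcongr
            exact h3.trans (by gcongr; exact S.norm_sub_le hy0 (hpos z hz))
        _ = _ := by ring
    have h5 : 16 * prof a p r η y z ≤ prof a p r η y w := by
      rw [prof, prof, hzσ, hw, mul_div_cancel_left₀ _ hη.ne',
        show k * η * r / η = k * r by field_simp]
      have h6 : η / √(qf (a y)⁻¹ y z) ≤ 2 * κ ^ 2 * (η / √(qf (a y)⁻¹ y w)) := by
        rw [← mul_div_assoc, div_le_div_iff₀ hρz hρw]
        nlinarith
      have h7 : (η / √(qf (a y)⁻¹ y z)) ^ d ≤
          (2 * κ ^ 2) ^ d * (η / √(qf (a y)⁻¹ y w)) ^ d := by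
        rw [← mul_pow]
        gcongr
      calc 16 * (r * (η / √(qf (a y)⁻¹ y z)) ^ d) ≤
          16 * (r * ((2 * κ ^ 2) ^ d * (η / √(qf (a y)⁻¹ y w)) ^ d)) := by gcongr
        _ = _ := by rw [hk, pushConst]; ring
    have h8 := hF.G_le y z hy0 (hpos z hz)
    have h9 := hF.le_G y w hy0 (hpos w hwD)
    have h10 : G y z ≤ 1 / 4 * G y w := by linarith
    calc φ y * G y z ≤ φ y * (1 / 4 * G y w) := mul_le_mul_of_nonneg_left h10 (hφpos y).le
      _ = _ := by ring
  have hψw : ψ w ≤ T * (2 * φ z) := (hmax w hwD).trans (by gcongr)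
  have hfin : T * φ z ≤ 8 * M * r * K ^ d * φ z := by
    have h1 : T * φ z ≤ 4 * M * r * K ^ d * φ z + 1 / 4 * (T * (2 * φ z)) := by
      rw [← hT, hsplit]
      exact add_le_add hnear_le (hfar_le.trans (by gcongr))
    linarith
  exact absurd (le_of_mul_le_mul_right hfin (hφpos z)) (not_le.2 hlt)

end EllSetup

end Core

section Harnack

variable {d : ℕ} {a : Euc d → Matrix (Fin d) (Fin d) ℝ} {b : Euc d → Euc d}
  {R κ r η C₀ : ℝ} {p : Euc d} {F G : Euc d → Euc d → ℝ}

namespace EllSetup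

/-- Near the boundary the weighted sum of supersolution kernels dominates the supersolution. -/
theorem le_sum_super (S : EllSetup a b R κ p r η) (hF : KernelFam a b p r C₀ η F G)
    {Y : Finset (Euc d)} (hY : ∀ y ∈ Y, sig a p r y = 0)
    (hnet : ∀ s, sig a p r s = 0 → ∃ y ∈ Y, dist s y < η)
    {φ : Euc d → ℝ} (hφpos : ∀ x, 0 < φ x)
    (hvar : ∀ x y, ‖x‖ ≤ R → ‖y‖ ≤ R → dist x y ≤ 4 * κ * pushConst d κ * η → φ x ≤ 2 * φ y)
    {x : Euc d} (hx : η * r / 2 < sig a p r x) (hx' : sig a p r x ≤ η * r) :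
    2 * φ x ≤ 16 / r * (5 * κ ^ 2) ^ d * ∑ y ∈ Y, φ y * F y x := by
  have hr := S.r_pos
  have hη := S.eta_pos
  have k1 := S.κ_pos
  have k0 := S.coeff.one_le
  have hk16 : 16 ≤ pushConst d κ := le_pushConst S.coeff.one_le
  have hηr : 0 < η * r := by positivity
  have hx0 : 0 < sig a p r x := by linarith
  have hsmall := S.eta_lt
  have hr2 : 0 < r ^ 2 := by positivity
  obtain ⟨s, hs, hxs⟩ := S.coeff.exists_radial hr S.norm_p_le hx0.le (by linarith)
    (s := 0) hr2.le
  obtain ⟨y, hy, hsy⟩ := hnet s hs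
  have hy0 := hY y hy
  have hxs' : ‖x - s‖ ≤ 4 * κ * η := by
    refine hxs.trans ?_
    rw [zero_sub, abs_neg, abs_of_pos hx0, div_le_iff₀ hr, mul_assoc _ η]
    gcongr
  have hxy : ‖x - y‖ ≤ 5 * κ * η := by
    rw [← dist_eq_norm] at hxs' ⊢
    nlinarith [dist_triangle x s y]
  have hρ := S.sqrt_pos hy0 hx0
  have hρle : √(qf (a y)⁻¹ y x) ≤ 5 * κ ^ 2 * η :=
    (S.sqrt_le hy0).trans (by nlinarith)
  have hprof : r / 2 ≤ (5 * κ ^ 2) ^ d * prof a p r η y x := by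
    have h1 : 1 ≤ 5 * κ ^ 2 * (η / √(qf (a y)⁻¹ y x)) := by
      rw [← mul_div_assoc, one_le_div hρ]
      exact hρle
    have h2 : 1 ≤ (5 * κ ^ 2) ^ d * (η / √(qf (a y)⁻¹ y x)) ^ d := by
      rw [← mul_pow]
      exact one_le_pow₀ h1
    have h3 : r / 2 ≤ sig a p r x / η := by
      rw [le_div_iff₀ hη]
      linarith
    rw [prof]
    calc r / 2 ≤ sig a p r x / η * 1 := by rw [mul_one]; exact h3
      _ ≤ sig a p r x / η * ((5 * κ ^ 2) ^ d * (η / √(qf (a y)⁻¹ y x)) ^ d) := by gcongr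
      _ = _ := by ring
  have hφ : φ x ≤ 2 * φ y := by
    refine hvar x y (S.norm_le hx0.le) (S.norm_le hy0.ge) ?_
    rw [dist_eq_norm]
    refine hxy.trans ?_
    nlinarith [mul_pos k1 hη]
  have hsum : φ y * F y x ≤ ∑ y ∈ Y, φ y * F y x :=
    Finset.single_le_sum (f := fun y => φ y * F y x) (fun y hy => by
      have h1 := S.prof_pos (hY y hy) hx0
      have h2 := hF.le_F y x (hY y hy) hx0
      exact mul_nonneg (hφpos y).le (by linarith)) hy
  have hFy := hF.le_F y x hy0 hx0
  have hFle : r / 4 ≤ (5 * κ ^ 2) ^ d * F y x := by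
    have : (5 * κ ^ 2) ^ d * (prof a p r η y x / 2) ≤ (5 * κ ^ 2) ^ d * F y x := by gcongr
    linarith
  calc 2 * φ x ≤ 4 * φ y := by linarith
    _ = 16 / r * (φ y * (r / 4)) := by field_simp; ring
    _ ≤ 16 / r * (φ y * ((5 * κ ^ 2) ^ d * F y x)) := by
        have := hφpos y
        gcongr
    _ = 16 / r * (5 * κ ^ 2) ^ d * (φ y * F y x) := by ring
    _ ≤ _ := by gcongr

/-- Away from the boundary the two kernel sums at different points are comparable. -/
theorem sum_super_le (S : EllSetup a b R κ p r η) (hF : KernelFam a b p r C₀ η F G)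
    {Y : Finset (Euc d)} (hY : ∀ y ∈ Y, sig a p r y = 0) {φ : Euc d → ℝ} (hφpos : ∀ x, 0 < φ x)
    {x x' : Euc d} (hx : 3 / 4 * r ^ 2 ≤ sig a p r x) (hx' : 3 / 4 * r ^ 2 ≤ sig a p r x') :
    ∑ y ∈ Y, φ y * F y x ≤ 8 * (2 * poleConst d κ ^ 2) ^ d * ∑ y ∈ Y, φ y * G y x' := by
  have hr := S.r_pos
  have hη := S.eta_pos
  have hK := one_le_poleConst (d := d) S.coeff.one_le
  set K := poleConst d κ
  have hr2 : 0 < r ^ 2 := by positivity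
  have hx0 : 0 < sig a p r x := by linarith
  have hx0' : 0 < sig a p r x' := by linarith
  have hxle : sig a p r x ≤ r ^ 2 := by
    have h1 := S.coeff.ell_inv p S.norm_p_le (x - p)
    have h2 : 0 ≤ qf (a p)⁻¹ p x := by
      rw [qf]
      exact nonneg_of_mul_nonneg_right ((sq_nonneg _).trans h1) S.κ_pos
    rw [sig]
    linarith
  rw [Finset.mul_sum]
  refine Finset.sum_le_sum fun y hy => ?_
  have hy0 := hY y hy
  have hρ := S.sqrt_pos hy0 hx0
  have hρ' := S.sqrt_pos hy0 hx0'
  have e1 := (S.poleEst hy0 hx0).sig_le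
  have e2 := (S.poleEst hy0 hx0').rho_le
  have h1 : r ≤ 2 * K * √(qf (a y)⁻¹ y x) := by
    refine le_of_mul_le_mul_right (a := r) ?_ hr
    nlinarith
  have h2 : η / √(qf (a y)⁻¹ y x) ≤ 2 * K ^ 2 * (η / √(qf (a y)⁻¹ y x')) := by
    rw [← mul_div_assoc, div_le_div_iff₀ hρ hρ']
    have : √(qf (a y)⁻¹ y x') ≤ 2 * K ^ 2 * √(qf (a y)⁻¹ y x) :=
      e2.trans (by nlinarith)
    nlinarith
  have h3 : prof a p r η y x ≤ 2 * (2 * K ^ 2) ^ d * prof a p r η y x' := by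
    rw [prof, prof]
    have h4 : sig a p r x / η ≤ 2 * (sig a p r x' / η) := by
      rw [← mul_div_assoc]
      gcongr
      linarith
    have h5 : (η / √(qf (a y)⁻¹ y x)) ^ d ≤
        (2 * K ^ 2) ^ d * (η / √(qf (a y)⁻¹ y x')) ^ d := by
      rw [← mul_pow]
      gcongr
    calc _ ≤ 2 * (sig a p r x' / η) * ((2 * K ^ 2) ^ d * (η / √(qf (a y)⁻¹ y x')) ^ d) := by
          gcongr
      _ = _ := by ring
  have h6 := hF.F_le y x hy0 hx0
  have h7 := hF.le_G y x' hy0 hx0'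
  have h8 : F y x ≤ 8 * (2 * K ^ 2) ^ d * G y x' := by
    calc F y x ≤ 2 * (2 * (2 * K ^ 2) ^ d * prof a p r η y x') := by linarith
      _ = 8 * (2 * K ^ 2) ^ d * (prof a p r η y x' / 2) := by ring
      _ ≤ _ := by gcongr
  calc φ y * F y x ≤ φ y * (8 * (2 * K ^ 2) ^ d * G y x') :=
        mul_le_mul_of_nonneg_left h8 (hφpos y).le
    _ = _ := by ring

end EllSetup

/-- A supersolution that is at least `μ` on the boundary layer of a small ellipsoid is at least
`μ / 2` inside. -/
theorem EllSetup.half_le (hd : 1 ≤ d) (S : EllSetup a b R κ p r η)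
    (hr1 : 2 * (d ^ 2 + 1) * κ ^ 3 * r ≤ 1) (hC₀ : 0 ≤ C₀) (hr2 : 2 * C₀ * r ^ 2 < 1)
    {φ : Euc d → ℝ} (hφ : ContDiff ℝ 2 φ) (hφpos : ∀ x, 0 < φ x)
    (hLφ : ∀ x, ‖x‖ ≤ R → Lop a b φ x ≤ C₀ * φ x) {μ : ℝ} (hμ : 0 < μ)
    (hb : ∀ x, sig a p r x = η * r → μ ≤ φ x) {x : Euc d} (hx : η * r ≤ sig a p r x) :
    μ / 2 ≤ φ x := by
  have hr := S.r_pos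
  have hη := S.eta_pos
  have hηr : 0 < η * r := by positivity
  have hrr : 0 < r ^ 2 := by positivity
  have k1 := S.κ_pos
  set q := qf (a p)⁻¹ p with hq
  have cq : ContDiff ℝ 2 q := contDiff_qf _ _
  have hq0 : ∀ z, 0 ≤ q z := fun z => by
    have h1 := S.coeff.ell_inv p S.norm_p_le (z - p)
    rw [hq, qf]
    exact nonneg_of_mul_nonneg_right ((sq_nonneg _).trans h1) k1
  set w : Euc d → ℝ := fun z => μ / 2 + μ / 2 / r ^ 2 * q z with hw
  have cw : ContDiff ℝ 2 w := contDiff_const.add (contDiff_const.mul cq)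
  have hwle : ∀ z, 0 ≤ sig a p r z → w z ≤ μ := fun z hz => by
    have h1 : q z ≤ r ^ 2 := by rw [sig] at hz; linarith
    have h2 : μ / 2 / r ^ 2 * q z ≤ μ / 2 / r ^ 2 * r ^ 2 := by gcongr
    rw [div_mul_cancel₀ _ hrr.ne'] at h2
    simp only [hw]
    linarith
  have hLw : ∀ z, 0 ≤ sig a p r z → μ / 2 / r ^ 2 ≤ Lop a b w z := fun z hz => by
    rw [hw, Lop_add contDiff_const.contDiffAt (contDiff_const.mul cq).contDiffAt,
      Lop_const, Lop_const_mul cq.contDiffAt, zero_add]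
    have h1 := S.coeff.Lop_qf_sub_le (S.norm_le hz) S.norm_p_le
    have h2 : ‖z - p‖ ≤ κ * r := S.coeff.norm_le_of_qf_le S.norm_p_le hr.le (by
      rw [sig] at hz; linarith)
    have h3 : 2 * ((d : ℝ) ^ 2 + 1) * κ ^ 2 * ‖z - p‖ ≤ 1 := by
      refine le_trans ?_ hr1
      calc _ ≤ 2 * ((d : ℝ) ^ 2 + 1) * κ ^ 2 * (κ * r) := by gcongr
        _ = _ := by ring
    have h4 : (1 : ℝ) ≤ d := by exact_mod_cast hd
    have h5 : 1 ≤ Lop a b q z := by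
      have := (abs_le.1 h1).1
      linarith
    exact le_mul_of_one_le_right (by positivity) h5
  have key := le_of_strict_subsolution (b := b) S.coeff.psd (S.isCompact_sublevel hηr.le)
    hφ.continuous.continuousOn cw.continuous.continuousOn (fun z _ => hφpos z) C₀
    (fun z (hz : η * r ≤ sig a p r z) hlt => by
      have hz0 : 0 ≤ sig a p r z := hηr.le.trans hz
      have hgt : η * r < sig a p r z := by
        refine lt_of_le_of_ne hz fun h => ?_
        linarith [hb z h.symm, hwle z hz0]
      refine ⟨mem_of_superset ((isOpen_lt continuous_const
        contDiff_sig.continuous).mem_nhds hgt) fun w (hw : η * r < sig a p r w) =>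
        show η * r ≤ sig a p r w from hw.le, hφ.contDiffAt, cw.contDiffAt,
        hLφ z (S.norm_le hz0), lt_of_lt_of_le ?_ (hLw z hz0)⟩
      rw [lt_div_iff₀ hrr]
      calc C₀ * w z * r ^ 2 ≤ C₀ * μ * r ^ 2 := by gcongr; exact hwle z hz0
        _ < μ / 2 := by nlinarith)
  refine le_trans ?_ (key x hx)
  have := hq0 x
  simp only [hw]
  have : 0 ≤ μ / 2 / r ^ 2 * q x := by positivity
  linarith

end Harnack

section LocalHarnack

variable {d : ℕ} {a : Euc d → Matrix (Fin d) (Fin d) ℝ} {b : Euc d → Euc d}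
  {R κ r η C₀ : ℝ} {p : Euc d}

theorem EllSetup.exists_sig_eq_zero (hd : 1 ≤ d) (S : EllSetup a b R κ p r η) :
    ∃ y, sig a p r y = 0 := by
  have : Nonempty (Fin d) := ⟨⟨0, hd⟩⟩
  obtain ⟨x, hx⟩ := NormedSpace.exists_lt_norm ℝ (Euc d) R
  refine mem_range_of_exists_le_of_exists_ge (c := (0 : ℝ)) contDiff_sig.continuous
    ⟨x, ?_⟩ ⟨p, ?_⟩
  · by_contra! h
    exact absurd (S.norm_le h.le) (not_le.2 hx)
  · simp only [sig, qf, sub_self, map_zero, inner_zero_right, sub_zero]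
    exact sq_nonneg r

theorem IsSuper.Lop_le {U φ : Euc d → ℝ} (hφ : IsSuper a b U φ)
    {x : Euc d} (hU : |U x| ≤ C₀) : Lop a b φ x ≤ C₀ * φ x := by
  have h1 := hφ.le x
  have h2 := hφ.pos x
  nlinarith [(abs_le.1 hU).1]

/-- Local Harnack-type modification: a positive supersolution can be lowered to one that is, on a
small ball, bounded by a constant times any value of the original supersolution there. -/
theorem CoeffBound.exists_local_harnack (hd : 1 ≤ d) (hκ : CoeffBound a b (R + 1) κ)
    (hC₀ : 0 ≤ C₀) :
    ∃ ρ > 0, ∃ C : ℝ, 1 ≤ C ∧ ∀ p, ‖p‖ ≤ R → ∀ U φ, (∀ x, ‖x‖ ≤ R + 1 → |U x| ≤ C₀) →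
      IsSuper a b U φ → ∃ φ', IsSuper a b U φ' ∧ (∀ x, φ' x ≤ φ x) ∧
        (∀ μ > 0, (∀ x, ‖x‖ ≤ R + 1 → μ ≤ φ x) → ∀ x, ‖x‖ ≤ R + 1 → μ / 2 ≤ φ' x) ∧
        ∀ x ∈ ball p ρ, ∀ x' ∈ ball p ρ, φ' x ≤ C * φ x' := by
  classical
  have k0 := hκ.one_le
  have k1 : 0 < κ := by linarith
  obtain ⟨r₀, hr₀, hker⟩ := hκ.exists_kernelFam hd hC₀
  set D : ℝ := 2 * ((d : ℝ) ^ 2 + 1) * κ ^ 3 + 2 * C₀ + κ with hD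
  have hκ3 : 1 ≤ κ ^ 3 := one_le_pow₀ k0
  have hA : 2 ≤ 2 * ((d : ℝ) ^ 2 + 1) * κ ^ 3 := by nlinarith [sq_nonneg (d : ℝ)]
  have hDpos : 0 < D := by linarith
  set r := min r₀ (1 / D) with hr'
  have hr : 0 < r := by positivity
  have hrr₀ : r ≤ r₀ := min_le_left _ _
  have hDr : r * D ≤ 1 := by
    rw [← le_div_iff₀ hDpos]
    exact min_le_right _ _
  have hr1 : 2 * ((d : ℝ) ^ 2 + 1) * κ ^ 3 * r ≤ 1 := by nlinarith
  have hr2 : κ * r ≤ 1 := by nlinarith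
  have hr3 : 2 * C₀ * r ^ 2 < 1 := by
    have h1 : 2 * C₀ * r ≤ 1 := by nlinarith
    have h2 : 2 * r ≤ 1 := by nlinarith
    nlinarith
  set k := pushConst d κ with hk
  have hk16 : 16 ≤ k := le_pushConst k0
  obtain ⟨M, hM⟩ := exists_card_near_le (Euc d) (4 * κ * k)
  set K := poleConst d κ with hK'
  have hK : 1 ≤ K := one_le_poleConst k0
  set Λ := 16 / r * (5 * κ ^ 2) ^ d with hΛ
  have hΛ0 : 0 < Λ := by positivity
  set C := 3 / 2 * (Λ * (8 * (2 * K ^ 2) ^ d * (8 * M * r * K ^ d))) with hC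
  have hC0 : 0 ≤ C := by positivity
  refine ⟨r / (2 * κ), by positivity, C + 1, by linarith, fun p hp U φ hU hφ => ?_⟩
  have hpR : ‖p‖ + κ * r ≤ R + 1 := by linarith
  obtain ⟨δ, hδ, hvar⟩ := (isCompact_closedBall (0 : Euc d) (R + 1)).exists_le_two_mul
    hφ.contDiff.continuous.continuousOn fun x _ => hφ.pos x
  set η := min (r / 2 / k) (δ / 2 / (4 * κ * k)) with hη'
  have hη : 0 < η := by positivity
  have hη1 : k * η ≤ r / 2 := by
    rw [mul_comm, ← le_div_iff₀ (by positivity)]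
    exact min_le_left _ _
  have hη2 : 4 * κ * k * η < δ := by
    have : η * (4 * κ * k) ≤ δ / 2 := by
      rw [← le_div_iff₀ (by positivity)]
      exact min_le_right _ _
    linarith
  have S : EllSetup a b (R + 1) κ p r η := ⟨hκ, hr, hpR, hη, hη1⟩
  obtain ⟨F, G, hF⟩ := hker r hr hrr₀ p hpR η hη
  have hvar' : ∀ x y, ‖x‖ ≤ R + 1 → ‖y‖ ≤ R + 1 → dist x y ≤ 4 * κ * k * η → φ x ≤ 2 * φ y :=
    fun x y hx hy hxy => hvar x (by simpa using hx) y (by simpa using hy) (hxy.trans_lt hη2)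
  have hcomp : IsCompact {x | sig a p r x = 0} :=
    (S.isCompact_sublevel le_rfl).of_isClosed_subset
      (isClosed_eq contDiff_sig.continuous continuous_const)
      fun x (hx : sig a p r x = 0) => show 0 ≤ sig a p r x from hx.ge
  obtain ⟨Y, hYS, hsep, hnet⟩ := hcomp.exists_net hη
  have hY : ∀ y ∈ Y, sig a p r y = 0 := fun y hy => hYS hy
  have hYne : Y.Nonempty := by
    obtain ⟨y₀, hy₀⟩ := S.exists_sig_eq_zero hd
    obtain ⟨y, hy, _⟩ := hnet y₀ hy₀
    exact ⟨y, hy⟩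
  have hηr : 0 < η * r := by positivity
  set ψ : Euc d → ℝ := fun x => Λ * ∑ y ∈ Y, φ y * F y x with hψ
  have hFpos : ∀ y ∈ Y, ∀ x, 0 < sig a p r x → 0 < F y x := fun y hy x hx => by
    linarith [S.prof_pos (hY y hy) hx, hF.le_F y x (hY y hy) hx]
  obtain ⟨φ', hφ', hle, hout, hin⟩ := hφ.exists_glue hκ.psd (σ := sig a p r) (ψ := ψ)
    contDiff_sig.continuous (c₁ := η * r / 2) (c₂ := η * r) (by linarith)
    (fun x hx => by
      have hx0 : 0 < sig a p r x := by linarith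
      have hxR := S.norm_le hx0.le
      have ct : ∀ y ∈ Y, ContDiffAt ℝ 2 (fun x => φ y * F y x) x := fun y hy =>
        contDiffAt_const.mul (hF.contF y x (hY y hy) hx0)
      have cs : ContDiffAt ℝ 2 (fun x => ∑ y ∈ Y, φ y * F y x) x := ContDiffAt.sum ct
      have hpos : 0 < ∑ y ∈ Y, φ y * F y x :=
        Finset.sum_pos (fun y hy => mul_pos (hφ.pos y) (hFpos y hy x hx0)) hYne
      refine ⟨contDiffAt_const.mul cs, mul_pos hΛ0 hpos, ?_⟩
      rw [hψ, Lop_const_mul cs, Lop_sum Y ct]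
      have h1 : ∑ y ∈ Y, Lop a b (fun x => φ y * F y x) x ≤ -(C₀ * ∑ y ∈ Y, φ y * F y x) := by
        rw [Finset.mul_sum, ← Finset.sum_neg_distrib]
        refine Finset.sum_le_sum fun y hy => ?_
        rw [Lop_const_mul (hF.contF y x (hY y hy) hx0)]
        have h2 := mul_le_mul_of_nonneg_left (hF.LF y x (hY y hy) hx0) (hφ.pos y).le
        linarith
      have h3 : U x * ∑ y ∈ Y, φ y * F y x ≤ C₀ * ∑ y ∈ Y, φ y * F y x :=
        mul_le_mul_of_nonneg_right ((le_abs_self _).trans (hU x hxR)) hpos.le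
      have h4 : Λ * (∑ y ∈ Y, Lop a b (fun x => φ y * F y x) x +
          U x * ∑ y ∈ Y, φ y * F y x) ≤ 0 :=
        mul_nonpos_of_nonneg_of_nonpos hΛ0.le (by linarith)
      linarith)
    (fun x hx hx' => S.le_sum_super hF hY hnet hφ.pos hvar' hx hx')
  refine ⟨φ', hφ', hle, fun μ hμ hlow x hx => ?_, fun x hx x' hx' => ?_⟩
  · rcases le_total (sig a p r x) (η * r) with h | h
    · rw [hout x h]
      linarith [hlow x hx]
    · refine S.half_le hd hr1 hC₀ hr3 hφ'.contDiff hφ'.pos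
        (fun z hz => hφ'.Lop_le (hU z hz)) hμ (fun z hz => ?_) h
      rw [hout z hz.le]
      exact hlow z (S.norm_le (hηr.le.trans hz.ge))
  · have hdeep : ∀ z ∈ ball p (r / (2 * κ)), 3 / 4 * r ^ 2 ≤ sig a p r z := fun z hz => by
      have h1 := hκ.qf_le S.norm_p_le p z
      rw [mem_ball, dist_eq_norm, lt_div_iff₀ (by positivity)] at hz
      have h2 : κ * ‖z - p‖ ^ 2 ≤ r ^ 2 / 4 := by
        have h3 : (‖z - p‖ * (2 * κ)) ^ 2 ≤ r ^ 2 := by gcongr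
        have h4 : κ * ‖z - p‖ ^ 2 ≤ κ * (κ * ‖z - p‖ ^ 2) :=
          le_mul_of_one_le_left (by positivity) k0
        nlinarith
      rw [sig]
      linarith
    have hηle := S.eta_lt
    have hrr : 0 < r ^ 2 := by positivity
    have hx1 := hdeep x hx
    have hx1' := hdeep x' hx'
    have hsub := S.sum_sub_le hF hY (M := M) (fun z Z hZ hZd => hM η hη z Z
      (fun y hy w hw => hsep y (hZ hy) w (hZ hw)) hZd) hφ.contDiff hφ.pos
      (fun z hz => hφ.Lop_le (hU z hz)) hvar' (x := x') (by linarith)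
    have hsup := S.sum_super_le hF hY hφ.pos hx1 hx1'
    have h5 : φ' x ≤ C * φ x' := by
      calc φ' x ≤ 3 / 2 * ψ x := hin x (by linarith)
        _ ≤ 3 / 2 * (Λ * (8 * (2 * K ^ 2) ^ d * (8 * M * r * K ^ d * φ x'))) := by
            simp only [hψ]
            gcongr
            exact hsup.trans (by gcongr)
        _ = _ := by rw [hC]; ring
    nlinarith [hφ.pos x']

end LocalHarnack

section Chain

variable {d : ℕ} {a : Euc d → Matrix (Fin d) (Fin d) ℝ} {b : Euc d → Euc d} {R C₀ : ℝ}

/-- `φ'` is a supersolution below `φ` whose lower bounds on the ball of radius `R` are controlled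
by those of `φ`. -/
structure Lowering (a : Euc d → Matrix (Fin d) (Fin d) ℝ) (b : Euc d → Euc d) (U : Euc d → ℝ)
    (R c : ℝ) (φ φ' : Euc d → ℝ) : Prop where
  super : IsSuper a b U φ'
  le : ∀ x, φ' x ≤ φ x
  low : ∀ μ > 0, (∀ x, ‖x‖ ≤ R → μ ≤ φ x) → ∀ x, ‖x‖ ≤ R → c * μ ≤ φ' x

theorem Lowering.trans {U φ φ₁ φ₂ : Euc d → ℝ} {c₁ c₂ : ℝ} (hc : 0 < c₁)
    (h₁ : Lowering a b U R c₁ φ φ₁) (h₂ : Lowering a b U R c₂ φ₁ φ₂) :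
    Lowering a b U R (c₂ * c₁) φ φ₂ where
  super := h₂.super
  le x := (h₂.le x).trans (h₁.le x)
  low μ hμ h x hx := by
    rw [mul_assoc]
    exact h₂.low _ (mul_pos hc hμ) (h₁.low μ hμ h) x hx

theorem exists_harnack_chain (hd : 1 ≤ d) (h : StandingB a b) (hR : 0 < R) (hC₀ : 0 ≤ C₀) :
    ∃ ρ > 0, ∀ n : ℕ, ∃ C : ℝ, 1 ≤ C ∧ ∃ c > 0, ∀ U φ x₀ x, (∀ x, ‖x‖ ≤ R + 1 → |U x| ≤ C₀) →
      IsSuper a b U φ → ‖x₀‖ ≤ R → ‖x‖ ≤ R → dist x₀ x ≤ n * (ρ / 2) →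
      ∃ φ', Lowering a b U (R + 1) c φ φ' ∧ ∀ y ∈ ball x ρ, φ' y ≤ C * φ x₀ := by
  obtain ⟨κ, hκ⟩ := h.exists_coeffBound (R := R + 1) (by linarith)
  obtain ⟨ρ, hρ, C₁, hC₁, hloc⟩ := hκ.exists_local_harnack hd hC₀
  have step : ∀ U φ p, (∀ x, ‖x‖ ≤ R + 1 → |U x| ≤ C₀) → IsSuper a b U φ → ‖p‖ ≤ R →
      ∃ φ', Lowering a b U (R + 1) (1 / 2) φ φ' ∧
        ∀ y ∈ ball p ρ, φ' y ≤ C₁ * φ p := fun U φ p hU hφ hp => by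
    obtain ⟨φ', h1, h2, h3, h4⟩ := hloc p hp U φ hU hφ
    refine ⟨φ', ⟨h1, h2, fun μ hμ hl x hx => ?_⟩, fun y hy => h4 y hy p (mem_ball_self hρ)⟩
    linarith [h3 μ hμ hl x hx]
  refine ⟨ρ, hρ, fun n => ?_⟩
  induction n with
  | zero =>
    refine ⟨C₁, hC₁, 1 / 2, by norm_num, fun U φ x₀ x hU hφ hx₀ hx hdist => ?_⟩
    have : x₀ = x := dist_le_zero.1 (by simpa using hdist)
    subst this
    exact step U φ x₀ hU hφ hx₀
  | succ n ih =>
    obtain ⟨C, hC, c, hc, ih⟩ := ih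
    refine ⟨C₁ * C, by nlinarith, 1 / 2 * c, by positivity,
      fun U φ x₀ x hU hφ hx₀ hx hdist => ?_⟩
    have hn : (0 : ℝ) < n + 1 := by positivity
    push_cast at hdist
    set t : ℝ := n / (n + 1) with ht
    have ht0 : 0 ≤ t := by positivity
    have ht1 : 1 - t = 1 / (n + 1) := by rw [ht]; field_simp; ring
    have ht1' : 0 ≤ 1 - t := by rw [ht1]; positivity
    set x₁ : Euc d := AffineMap.lineMap x₀ x t with hx₁
    have hx₁R : ‖x₁‖ ≤ R := by
      have := (convex_closedBall (0 : Euc d) R).lineMap_mem (by simpa using hx₀)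
        (by simpa using hx) ⟨ht0, by linarith⟩
      simpa using this
    have hd1 : dist x₀ x₁ ≤ n * (ρ / 2) := by
      rw [hx₁, dist_left_lineMap, Real.norm_of_nonneg ht0]
      calc t * dist x₀ x ≤ t * ((n + 1) * (ρ / 2)) := by gcongr
        _ = _ := by rw [ht]; field_simp
    have hd2 : dist x x₁ < ρ := by
      rw [hx₁, dist_right_lineMap, Real.norm_of_nonneg ht1', ht1]
      calc 1 / ((n : ℝ) + 1) * dist x₀ x ≤ 1 / (n + 1) * ((n + 1) * (ρ / 2)) := by gcongr
        _ = ρ / 2 := by field_simp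
        _ < ρ := half_lt_self hρ
    obtain ⟨φ₁, hlow₁, hle₁⟩ := ih U φ x₀ x₁ hU hφ hx₀ hx₁R hd1
    obtain ⟨φ₂, hlow₂, hle₂⟩ := step U φ₁ x hU hlow₁.super hx
    refine ⟨φ₂, hlow₁.trans hc hlow₂, fun y hy => (hle₂ y hy).trans ?_⟩
    rw [mul_assoc]
    gcongr
    exact hle₁ x hd2

/-- A positive supersolution can be lowered to one that is bounded on a ball by a constant times
the value of the original supersolution at a prescribed point. -/
theorem exists_harnack (hd : 1 ≤ d) (h : StandingB a b) (hR : 0 < R) (hC₀ : 0 ≤ C₀) :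
    ∃ C > 0, ∃ c > 0, ∀ U φ x₀, (∀ x, ‖x‖ ≤ R + 1 → |U x| ≤ C₀) →
      IsSuper a b U φ → ‖x₀‖ ≤ R →
      ∃ φ', Lowering a b U (R + 1) c φ φ' ∧ ∀ x, ‖x‖ ≤ R → φ' x ≤ C * φ x₀ := by
  classical
  obtain ⟨ρ, hρ, hchain⟩ := exists_harnack_chain hd h hR hC₀
  obtain ⟨n, hn⟩ := exists_nat_ge (2 * R / (ρ / 2))
  obtain ⟨C₁, hC₁, c₁, hc₁, hchain⟩ := hchain n
  obtain ⟨Y, hYS, -, hnet⟩ := (isCompact_closedBall (0 : Euc d) R).exists_net hρ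
  suffices H : ∀ Z : Finset (Euc d), Z ⊆ Y → ∃ C > 0, ∃ c > 0, ∀ U φ x₀,
      (∀ x, ‖x‖ ≤ R + 1 → |U x| ≤ C₀) → IsSuper a b U φ → ‖x₀‖ ≤ R →
      ∃ φ', Lowering a b U (R + 1) c φ φ' ∧ ∀ y ∈ Z, ∀ x ∈ ball y ρ, φ' x ≤ C * φ x₀ by
    obtain ⟨C, hC, c, hc, H⟩ := H Y subset_rfl
    refine ⟨C, hC, c, hc, fun U φ x₀ hU hφ hx₀ => ?_⟩
    obtain ⟨φ', h1, h2⟩ := H U φ x₀ hU hφ hx₀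
    refine ⟨φ', h1, fun x hx => ?_⟩
    obtain ⟨y, hy, hxy⟩ := hnet x (by simpa using hx)
    exact h2 y hy x hxy
  intro Z
  induction Z using Finset.induction_on with
  | empty =>
    refine fun _ => ⟨1, one_pos, 1, one_pos, fun U φ x₀ hU hφ hx₀ =>
      ⟨φ, ⟨hφ, fun _ => le_rfl, fun μ hμ hl x hx => ?_⟩, by simp⟩⟩
    linarith [hl x hx]
  | insert y Z hyZ ih =>
    intro hsub
    obtain ⟨C, hC, c, hc, ih⟩ := ih ((Finset.subset_insert _ _).trans hsub)
    refine ⟨max C C₁, lt_max_of_lt_left hC, c₁ * c, by positivity,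
      fun U φ x₀ hU hφ hx₀ => ?_⟩
    obtain ⟨φ₁, hlow₁, hle₁⟩ := ih U φ x₀ hU hφ hx₀
    have hy : ‖y‖ ≤ R := by simpa using hYS (hsub (Finset.mem_insert_self _ _))
    have hdist : dist x₀ y ≤ n * (ρ / 2) := by
      rw [div_le_iff₀ (by positivity)] at hn
      refine le_trans ?_ hn
      rw [dist_eq_norm]
      linarith [norm_sub_le x₀ y]
    obtain ⟨φ₂, hlow₂, hle₂⟩ := hchain U φ₁ x₀ y hU hlow₁.super hx₀ hy hdist
    have hpos := hφ.pos x₀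
    refine ⟨φ₂, hlow₁.trans hc hlow₂, fun w hw x hx => ?_⟩
    rcases Finset.mem_insert.1 hw with rfl | hw
    · calc φ₂ x ≤ C₁ * φ₁ x₀ := hle₂ x hx
        _ ≤ C₁ * φ x₀ := by
            gcongr
            exact hlow₁.le x₀
        _ ≤ _ := by gcongr; exact le_max_right _ _
    · exact ((hlow₂.le x).trans (hle₁ w hw x hx)).trans (by gcongr; exact le_max_left _ _)

end Chain

section Transfer

variable {d : ℕ} {a : Euc d → Matrix (Fin d) (Fin d) ℝ} {b : Euc d → Euc d}

theorem IsCompact.exists_pos_le {X : Type*} [TopologicalSpace X] {S : Set X} (hS : IsCompact S)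
    {ζ : X → ℝ} (hζ : Continuous ζ) (hpos : ∀ x ∈ S, 0 < ζ x) : ∃ m > 0, ∀ x ∈ S, m ≤ ζ x := by
  rcases S.eq_empty_or_nonempty with rfl | hne
  · exact ⟨1, one_pos, by simp⟩
  · obtain ⟨z, hz, hmin⟩ := hS.exists_isMinOn hne hζ.continuousOn
    exact ⟨ζ z, hpos z hz, fun x hx => hmin hx⟩

/-- Quantitative transfer: excess of a potential on a closed ball admitting a supersolution can be
moved to any other ball, by an amount which depends on the potential only through a local bound. -/
theorem StandingB.exists_transfer (hd : 1 ≤ d) (h : StandingB a b) (x₁ z : Euc d) {ρ r c : ℝ}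
    (hρ : 0 < ρ) (hr : 0 < r) (hc : 0 < c) :
    ∃ R > 0, ∀ C₀ : ℝ, 0 ≤ C₀ → ∃ δ > 0, ∀ U φ : Euc d → ℝ,
      (∀ x, ‖x‖ ≤ R → |U x| ≤ C₀) →
      IsSuper a b (fun x => U x + (closedBall x₁ ρ).indicator (fun _ => c) x) φ →
      ∃ ψ, IsSuper a b (fun x => U x + (ball z r).indicator (fun _ => δ) x) ψ := by
  have hx₁ := norm_nonneg x₁
  have hdz := dist_nonneg (x := z) (y := x₁)
  set R₁ := ρ + dist z x₁ + r + 1 with hR₁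
  have hR₁pos : 0 < R₁ := by positivity
  set R₂ := ‖x₁‖ + R₁ with hR₂
  have hR₂pos : 0 < R₂ := by positivity
  set R₃ := R₂ + 2 + ‖x₁‖ with hR₃
  have hR₃pos : 0 < R₃ := by positivity
  have hnorm : ∀ {x : Euc d} {t : ℝ}, dist x x₁ ≤ t → ‖x‖ ≤ ‖x₁‖ + t := fun {x t} hx => by
    rw [dist_eq_norm] at hx
    linarith [norm_sub_norm_le x x₁]
  refine ⟨‖x₁‖ + R₃, by positivity, fun C₀ hC₀ => ?_⟩
  obtain ⟨ζ, cζ, ζ0, ζ1, ζpos, Lζ⟩ :=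
    h.exists_bump x₁ hρ hR₁pos (C₀ := C₀ + 1) (by linarith)
  obtain ⟨ξ, cξ, ξ0, ξ1, ξpos, Lξ⟩ := h.exists_bump x₁ hρ hR₃pos (C₀ := C₀ + c) (by linarith)
  obtain ⟨κ, hκ⟩ := h.exists_coeffBound hR₂pos
  obtain ⟨M, hM0, hM⟩ := hκ.exists_abs_Lop_le cζ
  obtain ⟨m₁, hm₁, hζm⟩ := (isCompact_closedBall z r).exists_pos_le cζ.continuous fun x hx => by
    rw [ζpos]
    have := dist_triangle x z x₁
    rw [mem_closedBall] at hx
    linarith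
  obtain ⟨m₂, hm₂, hξm⟩ := (isCompact_closedBall (0 : Euc d) (R₂ + 1)).exists_pos_le
    cξ.continuous fun x hx => by
      rw [ξpos, dist_eq_norm]
      rw [mem_closedBall_zero_iff] at hx
      linarith [norm_sub_le x x₁]
  obtain ⟨C, hC, c', hc', hharn⟩ :=
    exists_harnack (C₀ := C₀ + c) hd h hR₂pos (by linarith)
  set l := c' * m₂ with hl
  have hlpos : 0 < l := by positivity
  set τ := min (l / 2) (c * l / 2 / (M + C₀ + 1)) with hτ
  have hτpos : 0 < τ := by positivity
  have hτ1 : τ ≤ l / 2 := min_le_left _ _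
  have hτ2 : τ * (M + C₀) ≤ c * l / 2 := by
    have : τ * (M + C₀ + 1) ≤ c * l / 2 := by
      rw [← le_div_iff₀ (by positivity)]
      exact min_le_right _ _
    linarith
  set δ := min (c / 2) (τ * m₁ / C) with hδ'
  have hδ : 0 < δ := by positivity
  have hδ1 : δ ≤ c / 2 := min_le_left _ _
  have hδ2 : δ * C ≤ τ * m₁ := by
    rw [← le_div_iff₀ hC]
    exact min_le_right _ _
  refine ⟨δ, hδ, fun U φ hU hφ => ?_⟩
  set U' : Euc d → ℝ := fun x => U x + (closedBall x₁ ρ).indicator (fun _ => c) x with hU'def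
  have hind0 : ∀ x, 0 ≤ (closedBall x₁ ρ).indicator (fun _ => c) x := fun x =>
    indicator_nonneg (fun _ _ => hc.le) x
  have hind1 : ∀ x, (closedBall x₁ ρ).indicator (fun _ => c) x ≤ c := fun x =>
    indicator_le_self' (fun _ _ => hc.le) x
  have hU' : ∀ x, ‖x‖ ≤ ‖x₁‖ + R₃ → |U' x| ≤ C₀ + c := fun x hx => by
    have h1 := abs_le.1 (hU x hx)
    simp only [hU'def]
    rw [abs_le]
    constructor <;> linarith [hind0 x, hind1 x, h1.1, h1.2]
  obtain ⟨x₀, hx₀, hmin⟩ := (isCompact_closedBall x₁ ρ).exists_isMinOn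
    ⟨x₁, mem_closedBall_self hρ.le⟩ hφ.contDiff.continuous.continuousOn
  have hx₀R : ‖x₀‖ ≤ R₂ := by
    have := hnorm (mem_closedBall.1 hx₀)
    linarith
  have hpos₀ := hφ.pos x₀
  set f := φ x₀ with hf
  have hφlow : ∀ x, ‖x‖ ≤ R₂ + 1 → m₂ * f ≤ φ x := fun x hx => by
    have h1 := bump_le h cξ ξ1 ξpos Lξ hφ.contDiff hφ.pos
      (fun y hy => hφ.Lop_le (hU' y (hnorm hy.le))) hpos₀ (fun y hy => hmin hy) x
      (by rw [dist_eq_norm]; linarith [norm_sub_le x x₁])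
    refine le_trans ?_ h1
    rw [mul_comm]
    gcongr
    exact hξm x (by simpa using hx)
  obtain ⟨φ', hlow, hup⟩ := hharn U' φ x₀ (fun x hx => hU' x (by linarith)) hφ hx₀R
  have hφ'low : ∀ x, ‖x‖ ≤ R₂ + 1 → l * f ≤ φ' x := fun x hx => by
    have := hlow.low (m₂ * f) (by positivity) hφlow x hx
    rw [hl]
    linarith
  set s := τ * f with hs
  have hspos : 0 < s := by positivity
  set ψ : Euc d → ℝ := fun x => φ' x - s * ζ x with hψ
  have csζ : ContDiff ℝ 2 fun x => s * ζ x := contDiff_const.mul cζ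
  have cφ' := hlow.super.contDiff
  have hψle : ∀ x, ψ x ≤ φ' x := fun x => by
    have := ζ0 x
    have : 0 ≤ s * ζ x := by positivity
    simp only [hψ]
    linarith
  have hζout : ∀ x, R₁ ≤ dist x x₁ → ζ x = 0 := fun x hx =>
    le_antisymm (not_lt.1 fun h0 => absurd ((ζpos x).1 h0) (not_lt.2 hx)) (ζ0 x)
  have hψpos : ∀ x, 0 < ψ x := fun x => by
    rcases lt_or_ge (dist x x₁) R₁ with hx | hx
    · have h1 := hφ'low x (by linarith [hnorm hx.le])
      have h2 : s * ζ x ≤ s * 1 := by gcongr; exact ζ1 x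
      have h3 : s ≤ l / 2 * f := by rw [hs]; gcongr
      have h4 : 0 < l * f := by positivity
      simp only [hψ]
      linarith
    · simp only [hψ, hζout x hx, mul_zero, sub_zero]
      exact hlow.super.pos x
  have hLψ : ∀ x, Lop a b ψ x = Lop a b φ' x - s * Lop a b ζ x := fun x => by
    rw [hψ, Lop_sub cφ'.contDiffAt csζ.contDiffAt, Lop_const_mul cζ.contDiffAt]
  refine ⟨ψ, hψpos, cφ'.sub csζ, fun x => ?_⟩
  have hsup := hlow.super.le x
  have hp' := hlow.super.pos x
  have hδψ : (ball z r).indicator (fun _ => δ) x * ψ x ≤ δ * ψ x := by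
    refine mul_le_mul_of_nonneg_right ?_ (hψpos x).le
    exact indicator_le_self' (fun _ _ => hδ.le) x
  simp only [hU'def] at hsup
  rw [hLψ]
  rcases le_or_gt (dist x x₁) ρ with hx | hx
  · have hxR : ‖x‖ ≤ R₂ := by linarith [hnorm hx]
    rw [indicator_of_mem (mem_closedBall.2 hx)] at hsup
    have h1 := abs_le.1 (hM x hxR)
    have h2 := abs_le.1 (hU x (by linarith))
    have h3 : -C₀ ≤ U x * ζ x := by
      have e1 : -C₀ * ζ x ≤ U x * ζ x := mul_le_mul_of_nonneg_right h2.1 (ζ0 x)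
      have e2 : C₀ * ζ x ≤ C₀ * 1 := mul_le_mul_of_nonneg_left (ζ1 x) hC₀
      linarith
    have h4 : -(s * (M + C₀)) ≤ s * (Lop a b ζ x + U x * ζ x) := by
      have := mul_le_mul_of_nonneg_left (add_le_add h1.1 h3) hspos.le
      linarith
    have h5 : s * (M + C₀) ≤ c / 2 * φ' x := by
      calc s * (M + C₀) = τ * (M + C₀) * f := by rw [hs]; ring
        _ ≤ c * l / 2 * f := by gcongr
        _ = c / 2 * (l * f) := by ring
        _ ≤ _ := by gcongr; exact hφ'low x (by linarith)
    have h6 : δ * ψ x ≤ c / 2 * φ' x :=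
      mul_le_mul hδ1 (hψle x) (hψpos x).le (by positivity)
    have h7 : U x * ψ x = U x * φ' x - s * (U x * ζ x) := by simp only [hψ]; ring
    linarith
  · rw [indicator_of_notMem (by simpa using hx)] at hsup
    rcases lt_or_ge (dist x x₁) R₁ with hx1 | hx1
    · have hxR : ‖x‖ ≤ R₂ := by linarith [hnorm hx1.le]
      have h2 := abs_le.1 (hU x (by linarith))
      have h1 := Lζ x hx hx1
      have h3 : ζ x ≤ Lop a b ζ x + U x * ζ x := by
        have e1 : -C₀ * ζ x ≤ U x * ζ x := mul_le_mul_of_nonneg_right h2.1 (ζ0 x)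
        linarith
      have h4 : s * ζ x ≤ s * (Lop a b ζ x + U x * ζ x) := by gcongr
      have h7 : U x * ψ x = U x * φ' x - s * (U x * ζ x) := by simp only [hψ]; ring
      have h8 : (ball z r).indicator (fun _ => δ) x * ψ x ≤ s * ζ x := by
        by_cases hz : x ∈ ball z r
        · refine hδψ.trans ?_
          calc δ * ψ x ≤ δ * (C * f) := by gcongr; exact (hψle x).trans (hup x hxR)
            _ = δ * C * f := by ring
            _ ≤ τ * m₁ * f := by gcongr
            _ = s * m₁ := by rw [hs]; ring
            _ ≤ _ := by gcongr; exact hζm x (ball_subset_closedBall hz)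
        · rw [indicator_of_notMem hz, zero_mul]
          exact mul_nonneg hspos.le (ζ0 x)
      linarith
    · have hz : x ∉ ball z r := fun hz => by
        rw [mem_ball] at hz
        linarith [dist_triangle x z x₁]
      have h0 := hζout x hx1
      have hL : 0 ≤ Lop a b ζ x := IsLocalMin.Lop_nonneg (h.psd x) cζ.contDiffAt
        (Eventually.of_forall fun y => by rw [h0]; exact ζ0 y)
      rw [indicator_of_notMem hz]
      have h1 : ψ x = φ' x := by simp [hψ, h0]
      rw [h1]
      have := mul_nonneg hspos.le hL
      linarith

end Transfer

section Eigenvalue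

variable {d : ℕ} {a : Euc d → Matrix (Fin d) (Fin d) ℝ} {b : Euc d → Euc d}

theorem add_mem_supersolutions {W W' : Euc d → ℝ} {lam B : ℝ} (hW : ∀ x, W' x ≤ W x + B)
    (h : lam ∈ supersolutions a b W univ) : lam + B ∈ supersolutions a b W' univ := by
  rw [mem_supersolutions_iff] at h ⊢
  obtain ⟨φ, hφ⟩ := h
  refine ⟨φ, hφ.pos, hφ.contDiff, fun x => (add_le_add_right ?_ _).trans (hφ.le x)⟩
  exact mul_le_mul_of_nonneg_right (by linarith [hW x]) (hφ.pos x).le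

theorem C0plus.exists_le {g : Euc d → ℝ} (hg : C0plus g) : ∃ B, ∀ x, g x ≤ B := by
  let G : ZeroAtInftyContinuousMap (Euc d) ℝ := ⟨⟨g, hg.1⟩, hg.2.2.2⟩
  obtain ⟨B, hB⟩ := G.isBounded_range.bddAbove
  exact ⟨B, fun x => hB ⟨x, rfl⟩⟩

/-- If a nontrivial increase of the potential leaves the bound `lam` intact, so does a small
increase on any given ball. -/
theorem StandingB.exists_mem_supersolutions (hd : 1 ≤ d) (h : StandingB a b) {W g : Euc d → ℝ}
    (hW : ∀ R > 0, ∃ C, ∀ x : Euc d, ‖x‖ ≤ R → |W x| ≤ C) (hg : C0plus g) {lam : ℝ}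
    (hlam : ∀ ε > 0, ∃ t ∈ supersolutions a b (fun x => W x + g x) univ, t < lam + ε)
    (z : Euc d) {r : ℝ} (hr : 0 < r) :
    ∃ δ > 0, ∀ ε > 0, ε ≤ 1 → lam + ε ∈
      supersolutions a b (fun x => W x + (ball z r).indicator (fun _ => δ) x) univ := by
  obtain ⟨x₁, hx₁⟩ := hg.2.2.1
  have hpos : 0 < g x₁ := lt_of_le_of_ne (hg.2.1 x₁) hx₁.symm
  obtain ⟨ρ, hρ, hball⟩ := nhds_basis_closedBall.mem_iff.1
    (hg.1.continuousAt.eventually (lt_mem_nhds (half_lt_self hpos)))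
  obtain ⟨R, hR, H⟩ := h.exists_transfer hd x₁ z hρ hr (half_pos hpos)
  obtain ⟨C, hC⟩ := hW R hR
  have hC0 : 0 ≤ C := (abs_nonneg _).trans (hC 0 (by simpa using hR.le))
  obtain ⟨δ, hδ, H⟩ := H (C + |lam| + 1) (by positivity)
  refine ⟨δ, hδ, fun ε hε hε1 => ?_⟩
  obtain ⟨t, ht, htlt⟩ := hlam ε hε
  rw [mem_supersolutions_iff] at ht ⊢
  obtain ⟨φ, hφ⟩ := ht
  obtain ⟨ψ, hψ⟩ := H (fun x => W x - (lam + ε)) φ (fun x hx => by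
    have h1 := abs_le.1 (hC x hx)
    have h2 := le_abs_self lam
    have h3 := neg_abs_le lam
    rw [abs_le]
    constructor <;> linarith [h1.1, h1.2]) ⟨hφ.pos, hφ.contDiff, fun x => by
      refine (add_le_add_right ?_ _).trans (hφ.le x)
      refine mul_le_mul_of_nonneg_right ?_ (hφ.pos x).le
      have h1 : (closedBall x₁ ρ).indicator (fun _ => g x₁ / 2) x ≤ g x :=
        indicator_le' (fun y hy => le_of_lt (hball hy)) (fun y _ => hg.2.1 y) x
      linarith⟩
  exact ⟨ψ, hψ.pos, hψ.contDiff, fun x => by convert hψ.le x using 3; ring⟩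

end Eigenvalue

/-- Lemma 3.1: if `λ*` is not strictly right monotone at `V`, then for any open ball `𝓑`
there is `δ > 0` with `λ*(V) = λ*(V + δ·1_𝓑)` and strict right monotonicity at
`V + δ·1_𝓑`. -/
theorem statement7 {d : ℕ} (hd : 1 ≤ d)
    (a : Euc d → Matrix (Fin d) (Fin d) ℝ) (b : Euc d → Euc d)
    (hstand : StandingB a b)
    (V : Euc d → ℝ) (hVmeas : Measurable V)
    (hVlocbdd : ∀ R > 0, ∃ C, ∀ x : Euc d, ‖x‖ ≤ R → |V x| ≤ C)
    (hVbdd : ∃ m, ∀ x, m ≤ V x)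
    (hfin : lamStarFinite a b V Set.univ)
    (hnotmono : ¬ StrictMonoRight a b V) :
    ∀ (z : Euc d) (r : ℝ), 0 < r → ∃ δ > 0,
      lamStar a b V Set.univ =
        lamStar a b (fun x => V x + (Metric.ball z r).indicator (fun _ => δ) x) Set.univ ∧
      StrictMonoRight a b (fun x => V x + (Metric.ball z r).indicator (fun _ => δ) x) := by
  intro z r hr
  obtain ⟨m, hm⟩ := hVbdd
  obtain ⟨M, hM⟩ := hstand.exists_le_of_mem_supersolutions hr (W := V) (C := -m)
    (fun x _ => by rw [neg_neg]; exact hm x)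
  set W : ℝ → Euc d → ℝ := fun δ x => V x + (ball z r).indicator (fun _ => δ) x with hWdef
  set ev : ℝ → ℝ := fun δ => lamStar a b (W δ) univ with hev
  have hW0 : W 0 = V := by
    funext x
    simp [hWdef]
  have hadd : ∀ {s t : ℝ}, s ≤ t → ∀ x, W t x ≤ W s x + (t - s) := fun {s t} hst x => by
    by_cases hx : x ∈ ball z r
    · simp [hWdef, hx]
    · simp [hWdef, hx, hst]
  have hmono : ∀ {s t : ℝ}, s ≤ t → ∀ x, W s x ≤ W t x + 0 := fun {s t} hst x => by
    by_cases hx : x ∈ ball z r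
    · simp [hWdef, hx, hst]
    · simp [hWdef, hx]
  have hne : ∀ δ, 0 ≤ δ → (supersolutions a b (W δ) univ).Nonempty := fun δ hδ => by
    obtain ⟨t, ht⟩ := hfin.1
    rw [← hW0] at ht
    exact ⟨_, add_mem_supersolutions (hadd hδ) ht⟩
  have hbdd : ∀ δ, BddBelow (supersolutions a b (W δ) univ) := fun δ => ⟨δ - M, fun t => hM δ t⟩
  have hlocbdd : ∀ δ, ∀ R > 0, ∃ C, ∀ x : Euc d, ‖x‖ ≤ R → |W δ x| ≤ C := fun δ R hR => by
    obtain ⟨C, hC⟩ := hVlocbdd R hR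
    refine ⟨C + |δ|, fun x hx => (abs_add_le _ _).trans (add_le_add (hC x hx) ?_)⟩
    by_cases hz : x ∈ ball z r <;> simp [hz]
  have hlt : ∀ {δ c : ℝ}, 0 ≤ δ → ev δ < c → ∃ t ∈ supersolutions a b (W δ) univ, t < c :=
    fun {δ c} hδ h => exists_lt_of_csInf_lt (hne δ hδ) h
  have hgrow : ∀ {s t : ℝ}, 0 ≤ s → s ≤ t → ev t ≤ ev s + (t - s) := fun {s t} hs hst => by
    refine le_of_forall_pos_le_add fun ε hε => ?_
    obtain ⟨u, hu, hlt⟩ := hlt hs (lt_add_of_pos_right (ev s) hε)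
    have := csInf_le (hbdd t) (add_mem_supersolutions (hadd hst) hu)
    change ev t ≤ _ at this
    linarith
  -- failure of strict monotonicity lets the weight of the ball be increased
  have hstep : ∀ δ, 0 ≤ δ → ev δ ≤ ev 0 → ¬ StrictMonoRight a b (W δ) →
      ∃ δ' > 0, ev (δ + δ') ≤ ev 0 := fun δ hδ hle hnot => by
    unfold StrictMonoRight at hnot
    push Not at hnot
    obtain ⟨g, hg, hgle⟩ := hnot
    obtain ⟨B, hB⟩ := hg.exists_le
    have hgne : (supersolutions a b (fun x => W δ x + g x) univ).Nonempty := by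
      obtain ⟨t, ht⟩ := hne δ hδ
      exact ⟨_, add_mem_supersolutions (fun x => add_le_add_right (hB x) _) ht⟩
    obtain ⟨δ', hδ', H⟩ := hstand.exists_mem_supersolutions hd (hlocbdd δ) hg (lam := ev 0)
      (fun ε hε => exists_lt_of_csInf_lt hgne
        ((hgle.trans hle).trans_lt (lt_add_of_pos_right _ hε))) z hr
    have hWW : (fun x => W δ x + (ball z r).indicator (fun _ => δ') x) = W (δ + δ') := by
      funext x
      by_cases hx : x ∈ ball z r
      · simp [hWdef, hx, add_assoc]
      · simp [hWdef, hx]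
    rw [hWW] at H
    refine ⟨δ', hδ', le_of_forall_pos_le_add fun ε hε => ?_⟩
    have h1 := csInf_le (hbdd (δ + δ')) (H (min ε 1) (by positivity) (min_le_right _ _))
    exact h1.trans (add_le_add_right (min_le_left _ _) _)
  set S : Set ℝ := {δ | 0 ≤ δ ∧ ev δ ≤ ev 0} with hS
  have hS0 : (0 : ℝ) ∈ S := ⟨le_rfl, le_rfl⟩
  have hSbdd : BddAbove S := ⟨ev 0 + M, fun δ hδ => by
    have : δ - M ≤ ev δ := le_csInf (hne δ hδ.1) fun t ht => hM δ t ht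
    linarith [hδ.2]⟩
  set δ := sSup S with hδdef
  obtain ⟨δ₁, hδ₁, hev₁⟩ := hstep 0 le_rfl le_rfl (by rw [hW0]; exact hnotmono)
  rw [zero_add] at hev₁
  have hδ : 0 < δ := hδ₁.trans_le (le_csSup hSbdd ⟨hδ₁.le, hev₁⟩)
  have hδS : ev δ ≤ ev 0 := by
    have : δ ≤ ev 0 - ev δ + δ := csSup_le ⟨0, hS0⟩ fun s hs => by
      linarith [hgrow hs.1 (le_csSup hSbdd hs), hs.2]
    linarith
  refine ⟨δ, hδ, ?_, ?_⟩
  · have h0 : lamStar a b V univ = ev 0 := by rw [hev, ← hW0]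
    rw [h0]
    refine le_antisymm (le_csInf (hne δ hδ.le) fun t ht => ?_) hδS
    have := csInf_le (hbdd 0) (add_mem_supersolutions (hmono hδ.le) ht)
    rwa [add_zero] at this
  · by_contra hnot
    obtain ⟨δ', hδ', hle⟩ := hstep δ hδ.le hδS hnot
    have := le_csSup hSbdd (show δ + δ' ∈ S from ⟨by positivity, hle⟩)
    linarith
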